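/- (Full Rank Theorem) Let n ≥ 2 be an integer, θ ∈ (0, π/2] and 1 ≤ k < n. Let φ : C_θ → (0,∞) be smooth with τ[φ^{−1/k}] ≥ 0 and ∇̄_μ φ^{−1/k} ≤ cot θ · φ^{−1/k} (equivalently ∇̄_μ log φ ≥ −k cot θ on ∂C_θ). Suppose s is a smooth capillary function on C_θ with τ[s] ≥ 0 satisfying σ_k(τ[s])(ζ) = φ(ζ) for all ζ ∈ C_θ. For u ∈ S^n_θ let λ_1(u) := min{⟨D²G(u)v, v⟩ : v ⊥ u, |v| = 1} be the smallest eigenvalue of τ[s] at u, where G is the 1-homogeneous extension of s. Then either λ_1(u) > 0 for every u ∈ S^n_θ, or λ_1(u) = 0 for every u ∈ S^n_θ. In particular, if s > 0 on C_θ, then τ[s] > 0. -/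

import Mathlib

open MeasureTheory Real Set
open scoped RealInnerProductSpace

noncomputable section

abbrev V (n : ℕ) := EuclideanSpace ℝ (Fin (n + 1))

/-- The vertical unit vector `E_{n+1}`. -/
def Etop (n : ℕ) : V n := EuclideanSpace.single (Fin.last n) 1

/-- The spherical cap `S^n_θ`. -/
def sphCap (n : ℕ) (θ : ℝ) : Set (V n) :=
  {u | ‖u‖ = 1 ∧ Real.cos θ ≤ u (Fin.last n)}

/-- The boundary circle `∂S^n_θ`. -/
def sphCapBdry (n : ℕ) (θ : ℝ) : Set (V n) :=
  {u | ‖u‖ = 1 ∧ u (Fin.last n) = Real.cos θ}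

/-- The capillary cap `C_θ`. -/
def capCap (n : ℕ) (θ : ℝ) : Set (V n) :=
  {ζ | 0 ≤ ζ (Fin.last n) ∧ ‖ζ + Real.cos θ • Etop n‖ = 1}

/-- The open cone over `S^n_θ`. -/
def coneCap (n : ℕ) (θ : ℝ) : Set (V n) :=
  {x | ∃ l : ℝ, 0 < l ∧ ∃ u ∈ sphCap n θ, x = l • u}

/-- `G` is a positively 1-homogeneous extension of `g : C_θ → ℝ` which is `C^m` on an
open neighborhood of the cone over `S^n_θ`. -/
def IsHomExt (n : ℕ) (θ : ℝ) (m : ℕ∞) (g G : V n → ℝ) : Prop :=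
  (∃ U : Set (V n), IsOpen U ∧ coneCap n θ ⊆ U ∧ ContDiffOn ℝ m G U) ∧
  (∀ l : ℝ, 0 < l → ∀ u ∈ sphCap n θ, G (l • u) = l * G u) ∧
  (∀ ζ ∈ capCap n θ, G (ζ + Real.cos θ • Etop n) = g ζ)

/-- The Hessian of `G` at `u` as a quadratic/bilinear form. -/
def hessQ (n : ℕ) (G : V n → ℝ) (u v w : V n) : ℝ :=
  fderiv ℝ (fderiv ℝ G) u v w

/-- The Hessian matrix `D²G(u)` in the standard coordinates. -/
def hessM (n : ℕ) (G : V n → ℝ) (u : V n) : Matrix (Fin (n + 1)) (Fin (n + 1)) ℝ :=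
  fun i j => fderiv ℝ (fderiv ℝ G) u (EuclideanSpace.single i 1) (EuclideanSpace.single j 1)

/-- `σ_j` of the eigenvalues of `D²G(u)` (via characteristic polynomial coefficients). -/
def sigmaElem (n : ℕ) (j : ℕ) (G : V n → ℝ) (u : V n) : ℝ :=
  (-1 : ℝ) ^ j * ((hessM n G u).charpoly.coeff (n + 1 - j))

/-- `τ[g] ≥ 0` : the Hessian of the extension is positive semidefinite on `S^n_θ`. -/
def TauNonneg (n : ℕ) (θ : ℝ) (G : V n → ℝ) : Prop :=
  ∀ u ∈ sphCap n θ, ∀ v : V n, 0 ≤ hessQ n G u v v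

/-- `τ[g] > 0`. -/
def TauPos (n : ℕ) (θ : ℝ) (G : V n → ℝ) : Prop :=
  TauNonneg n θ G ∧
  ∀ u ∈ sphCap n θ, ∀ v : V n, v ≠ 0 → ⟪v, u⟫ = 0 → 0 < hessQ n G u v v

/-- Capillary (Robin) boundary condition: `∂_{n+1}G = 0` on `∂S^n_θ`. -/
def IsCapillaryF (n : ℕ) (θ : ℝ) (G : V n → ℝ) : Prop :=
  ∀ u ∈ sphCapBdry n θ, fderiv ℝ G u (Etop n) = 0

/-- Reflection negating the horizontal coordinates. -/
def horizNeg (n : ℕ) (ζ : V n) : V n := (2 * ζ (Fin.last n)) • Etop n - ζ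

/-- Support function of a set. -/
def suppFn (n : ℕ) (K : Set (V n)) (u : V n) : ℝ := sSup ((fun y => ⟪u, y⟫) '' K)

/-- Relative interior (within the hyperplane `{x_{n+1}=0}`) of the base `K ∩ {x_{n+1}=0}`. -/
def relintBase (n : ℕ) (K : Set (V n)) : Set (V n) :=
  {x | x (Fin.last n) = 0 ∧ ∃ ε > 0, ∀ y : V n, y (Fin.last n) = 0 → ‖y - x‖ < ε → y ∈ K}

/-- A `θ`-capillary convex body. -/
def IsCapBody (n : ℕ) (θ : ℝ) (K : Set (V n)) : Prop :=
  IsCompact K ∧ Convex ℝ K ∧ (interior K).Nonempty ∧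
  (∀ x ∈ K, 0 ≤ x (Fin.last n)) ∧
  (∀ x ∈ K, 0 < x (Fin.last n) → ∀ u : V n, ‖u‖ = 1 → ⟪u, x⟫ = suppFn n K u →
    Real.cos θ ≤ u (Fin.last n)) ∧
  (∀ v : V n, ‖v‖ = 1 → v (Fin.last n) = 0 →
    suppFn n K (Real.sin θ • v + Real.cos θ • Etop n) = Real.sin θ * suppFn n K v) ∧
  (relintBase n K).Nonempty

/-- `ψ` is one of `x²`, `x^p (p<0)`, `-log x`. -/
def PsiOK (ψ : ℝ → ℝ) : Prop :=
  (ψ = fun x : ℝ => x ^ 2) ∨ (∃ p : ℝ, p < 0 ∧ ψ = fun x : ℝ => x ^ p) ∨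
    (ψ = fun x : ℝ => -Real.log x)

section FullRank

set_option linter.unusedSectionVars false
set_option maxSynthPendingDepth 3

section MatrixLemmas

open Finset Matrix

variable {ι : Type*} [Fintype ι] [DecidableEq ι]

lemma exists_orthogonal_diagonalization {A : Matrix ι ι ℝ} (hA : A.IsHermitian) :
    ∃ (U : Matrix ι ι ℝ) (d : ι → ℝ), Uᵀ * U = 1 ∧ U * Uᵀ = 1 ∧ A = U * diagonal d * Uᵀ := by
  have hU := hA.eigenvectorUnitary.2
  refine ⟨hA.eigenvectorUnitary, hA.eigenvalues, ?_, ?_, ?_⟩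
  · simpa [star_eq_conjTranspose] using (Unitary.mem_iff.1 hU).1
  · simpa [star_eq_conjTranspose] using (Unitary.mem_iff.1 hU).2
  · have h := hA.spectral_theorem
    rw [Unitary.conjStarAlgAut_apply] at h
    simpa [star_eq_conjTranspose, Function.comp_def] using h

lemma psd_diagonal_of_eq {A U : Matrix ι ι ℝ} {d : ι → ℝ} (hA : A.PosSemidef)
    (hU : Uᵀ * U = 1) (h : A = U * diagonal d * Uᵀ) (i : ι) : 0 ≤ d i := by
  have h1 := hA.conjTranspose_mul_mul_same U
  have h2 : Uᴴ * A * U = diagonal d := by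
    rw [conjTranspose_eq_transpose_of_trivial, h]
    calc Uᵀ * (U * diagonal d * Uᵀ) * U = (Uᵀ * U) * diagonal d * (Uᵀ * U) := by
          simp only [Matrix.mul_assoc]
      _ = diagonal d := by simp [hU]
  rw [h2, posSemidef_diagonal_iff] at h1
  exact h1 i

lemma det_conj_orthogonal {U : Matrix ι ι ℝ} (hU : U * Uᵀ = 1) (D : Matrix ι ι ℝ) :
    (U * D * Uᵀ).det = D.det := by
  have h : U.det * (Uᵀ).det = 1 := by rw [← det_mul, hU, det_one]
  rw [det_mul, det_mul]
  linear_combination D.det * h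

lemma one_le_det_one_add {S : Matrix ι ι ℝ} (hS : S.PosSemidef) : 1 ≤ (1 + S).det := by
  obtain ⟨U, d, h1, h2, h3⟩ := exists_orthogonal_diagonalization hS.1
  have hd := psd_diagonal_of_eq hS h1 h3
  have : (1 : Matrix ι ι ℝ) + S = U * diagonal (fun i => 1 + d i) * Uᵀ := by
    rw [h3, show diagonal (fun i => 1 + d i) = 1 + diagonal d by
      rw [← diagonal_one, diagonal_add]]
    rw [Matrix.mul_add, Matrix.add_mul, Matrix.mul_one, h2]
  rw [this, det_conj_orthogonal h2, det_diagonal]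
  exact Finset.one_le_prod fun i => by simpa using hd i

lemma exists_factor_of_posDef {A : Matrix ι ι ℝ} (hA : A.PosDef) :
    ∃ T : Matrix ι ι ℝ, A = Tᵀ * T ∧ IsUnit T.det := by
  obtain ⟨U, d, h1, h2, h3⟩ := exists_orthogonal_diagonalization hA.1
  have hd := psd_diagonal_of_eq hA.posSemidef h1 h3
  have key : A = (diagonal (fun i => √(d i)) * Uᵀ)ᵀ * (diagonal (fun i => √(d i)) * Uᵀ) := by
    rw [transpose_mul, transpose_transpose, diagonal_transpose, Matrix.mul_assoc,
      ← Matrix.mul_assoc (diagonal _), diagonal_mul_diagonal, h3, Matrix.mul_assoc]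
    simp only [Real.mul_self_sqrt (hd _)]
  refine ⟨_, key, ?_⟩
  have hpos := hA.det_pos
  rw [key, det_mul] at hpos
  exact (right_ne_zero_of_mul hpos.ne').isUnit

lemma det_le_det_add {A S : Matrix ι ι ℝ} (hA : A.PosDef) (hS : S.PosSemidef) :
    A.det ≤ (A + S).det := by
  obtain ⟨T, rfl, hT⟩ := exists_factor_of_posDef hA
  have hinv : T⁻¹ * T = 1 := nonsing_inv_mul T hT
  have hS' := hS.conjTranspose_mul_mul_same T⁻¹
  rw [conjTranspose_eq_transpose_of_trivial] at hS'
  have hTt : Tᵀ * (T⁻¹)ᵀ = 1 := by rw [← transpose_mul, hinv, transpose_one]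
  have : Tᵀ * T + S = Tᵀ * (1 + T⁻¹ᵀ * S * T⁻¹) * T := by
    rw [Matrix.mul_add, Matrix.add_mul, Matrix.mul_one]
    congr 1
    calc S = (Tᵀ * (T⁻¹)ᵀ) * S * (T⁻¹ * T) := by rw [hinv, hTt]; simp
      _ = _ := by simp only [Matrix.mul_assoc]
  rw [this, det_mul, det_mul, det_mul, det_transpose]
  nlinarith [one_le_det_one_add hS', mul_self_nonneg T.det]

lemma det_le_det_add_of_posSemidef {A S : Matrix ι ι ℝ} (hA : A.PosSemidef)
    (hS : S.PosSemidef) : A.det ≤ (A + S).det := by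
  by_cases h : A.det = 0
  · rw [h]; exact (hA.add hS).det_nonneg
  · exact det_le_det_add (hA.posDef_iff_det_ne_zero.2 h) hS

/-- The sum of the principal `k × k` minors of a matrix. -/
def minorSum (k : ℕ) (M : Matrix ι ι ℝ) : ℝ :=
  ∑ s ∈ univ.powersetCard k,
    (M.submatrix (Subtype.val : s → ι) (Subtype.val : s → ι)).det

lemma minorSum_eq_charpoly_coeff {k : ℕ} (hk : k ≤ Fintype.card ι) (M : Matrix ι ι ℝ) :
    minorSum k M = (-1) ^ k * M.charpoly.coeff (Fintype.card ι - k) := by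
  rw [charpoly_coeff_eq_sum_minors M k hk, ← mul_assoc, ← mul_pow]
  simp [minorSum]

lemma minorSum_conj_orthogonal {k : ℕ} (hk : k ≤ Fintype.card ι) {U : Matrix ι ι ℝ}
    (hU : Uᵀ * U = 1) (M : Matrix ι ι ℝ) : minorSum k (U * M * Uᵀ) = minorSum k M := by
  rw [minorSum_eq_charpoly_coeff hk, minorSum_eq_charpoly_coeff hk, Matrix.mul_assoc,
    charpoly_mul_comm, Matrix.mul_assoc, hU, Matrix.mul_one]

lemma minorSum_nonneg (k : ℕ) {A : Matrix ι ι ℝ} (hA : A.PosSemidef) : 0 ≤ minorSum k A :=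
  Finset.sum_nonneg fun _ _ => (hA.submatrix _).det_nonneg

lemma minorSum_mono (k : ℕ) {A S : Matrix ι ι ℝ} (hA : A.PosSemidef) (hS : S.PosSemidef) :
    minorSum k A ≤ minorSum k (A + S) :=
  Finset.sum_le_sum fun _ _ => det_le_det_add_of_posSemidef (hA.submatrix _) (hS.submatrix _)

lemma det_add_vecMulVec_of_posDef {d : ι → ℝ} (hd : ∀ i, 0 < d i) (w : ι → ℝ) (t : ℝ) :
    (diagonal d + t • vecMulVec w w).det =
      (∏ i, d i) + t * ((∏ i, d i) * ∑ i, w i ^ 2 / d i) := by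
  have hdet : IsUnit (diagonal d).det := by
    rw [det_diagonal]
    exact (Finset.prod_pos fun i _ => hd i).ne'.isUnit
  have hinv : (diagonal d)⁻¹ = diagonal (fun i => (d i)⁻¹) := by
    refine inv_eq_left_inv ?_
    rw [diagonal_mul_diagonal, ← diagonal_one]
    congr 1; ext i; exact inv_mul_cancel₀ (hd i).ne'
  have h := det_add_replicateCol_mul_replicateRow (ι := Unit) hdet (t • w) w
  rw [show replicateCol Unit (t • w) * replicateRow Unit w = t • vecMulVec w w by
    ext i j; simp [Matrix.mul_apply, vecMulVec, mul_assoc]] at h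
  rw [h, det_diagonal, hinv, det_unique]
  simp only [Matrix.add_apply, one_apply_eq, Matrix.mul_apply, diagonal_apply, mul_ite, mul_zero,
    Finset.sum_ite_eq', Finset.mem_univ, if_true, replicateCol_apply, replicateRow_apply,
    Pi.smul_apply, smul_eq_mul]
  rw [mul_add, mul_one, Finset.mul_sum, Finset.mul_sum, Finset.mul_sum]
  congr 1
  refine Finset.sum_congr rfl fun i _ => ?_
  ring

lemma minorSum_diagonal_add_vecMulVec (k : ℕ) (hk : 1 ≤ k) {d : ι → ℝ} (hd : ∀ i, 0 ≤ d i)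
    (hpos : 0 < minorSum k (diagonal d)) {w : ι → ℝ} (hw : w ≠ 0) :
    ∃ c, 0 < c ∧ ∀ t, 0 ≤ t →
      minorSum k (diagonal d) + c * t ≤ minorSum k (diagonal d + t • vecMulVec w w) := by
  have hD : (diagonal d).PosSemidef := posSemidef_diagonal_iff.2 hd
  have hW : ∀ t : ℝ, 0 ≤ t → (t • vecMulVec w w).PosSemidef := fun t ht => by
    have := posSemidef_vecMulVec_self_star w
    rw [star_trivial] at this
    exact this.smul ht
  have hsub : ∀ s : Finset ι, (diagonal d).submatrix (Subtype.val : s → ι) Subtype.val =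
      diagonal fun i : s => d i := fun s => by
    rw [submatrix_diagonal _ _ Subtype.val_injective]; rfl
  suffices H : ∃ s ∈ univ.powersetCard k, ∃ c, 0 < c ∧ ∀ t, 0 ≤ t →
      ((diagonal d).submatrix (Subtype.val : s → ι) Subtype.val).det + c * t ≤
      ((diagonal d + t • vecMulVec w w).submatrix (Subtype.val : s → ι) Subtype.val).det by
    obtain ⟨s, hs, c, hc, h⟩ := H
    refine ⟨c, hc, fun t ht => ?_⟩
    unfold minorSum
    rw [← Finset.add_sum_erase _ _ hs, ← Finset.add_sum_erase _ _ hs]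
    have := Finset.sum_le_sum (s := (univ.powersetCard k).erase s) fun i _ =>
      det_le_det_add_of_posSemidef (hD.submatrix (Subtype.val : i → ι))
        ((hW t ht).submatrix Subtype.val)
    have h2 := h t ht
    simp only [submatrix_add, Pi.add_apply] at h2 ⊢
    linarith
  obtain ⟨s, hs, hs0⟩ : ∃ s ∈ univ.powersetCard k,
      0 < ((diagonal d).submatrix (Subtype.val : s → ι) Subtype.val).det := by
    by_contra! hcon
    exact absurd hpos (not_lt.2 (Finset.sum_nonpos hcon))
  have hcard := (Finset.mem_powersetCard.1 hs).2
  rw [hsub, det_diagonal] at hs0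
  have hds : ∀ i ∈ s, 0 < d i := fun i hi => by
    refine lt_of_le_of_ne (hd i) fun h0 => hs0.ne' ?_
    exact Finset.prod_eq_zero (Finset.mem_univ (⟨i, hi⟩ : s)) h0.symm
  by_cases hws : ∃ i ∈ s, w i ≠ 0
  · obtain ⟨i, hi, hwi⟩ := hws
    refine ⟨s, hs, (∏ i : s, d i) * ∑ i : s, w i ^ 2 / d i, ?_, fun t _ => ?_⟩
    rotate_left 1
    · rw [submatrix_add, Pi.add_apply, Pi.add_apply, hsub, det_diagonal]
      have h := det_add_vecMulVec_of_posDef (d := fun i : s => d i) (fun i => hds i i.2)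
        (fun i : s => w i) t
      change _ ≤ (diagonal (fun i : s => d i) + t • vecMulVec (fun i : s => w i) _).det
      rw [h, mul_comm t]
    · refine mul_pos hs0 (Finset.sum_pos' (fun j _ => div_nonneg (sq_nonneg _) (hd _))
        ⟨⟨i, hi⟩, Finset.mem_univ _, div_pos (by positivity) (hds i hi)⟩)
  · push Not at hws
    obtain ⟨i, hwi⟩ := Function.ne_iff.1 hw
    have his : i ∉ s := fun h => hwi (hws i h)
    obtain ⟨j, hj⟩ : s.Nonempty := Finset.card_pos.1 (by omega)
    have hij : i ∉ s.erase j := fun h => his (Finset.mem_of_mem_erase h)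
    have hprod : ∀ f : ι → ℝ, ∏ x : (insert i (s.erase j) : Finset ι), f x =
        f i * ∏ x ∈ s.erase j, f x := fun f => by
      rw [Finset.prod_coe_sort (insert i (s.erase j)) f, Finset.prod_insert hij]
    refine ⟨insert i (s.erase j), ?_, w i ^ 2 * ∏ x ∈ s.erase j, d x, ?_, fun t _ => ?_⟩
    · refine Finset.mem_powersetCard.2 ⟨Finset.subset_univ _, ?_⟩
      rw [Finset.card_insert_of_notMem hij, Finset.card_erase_of_mem hj]
      omega
    · refine mul_pos (pow_pos (abs_pos.2 hwi) 2 |>.trans_eq (sq_abs _)) ?_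
      exact Finset.prod_pos fun x hx => hds x (Finset.mem_of_mem_erase hx)
    · have hmat : (diagonal d + t • vecMulVec w w).submatrix
          (Subtype.val : (insert i (s.erase j) : Finset ι) → ι) Subtype.val =
          diagonal fun x : (insert i (s.erase j) : Finset ι) => d x + t * w x ^ 2 := by
        ext ⟨a, ha⟩ ⟨b, hb⟩
        by_cases hab : a = b
        · subst hab; simp [vecMulVec, sq]
        · have h0 : w a * w b = 0 := by
            rcases Finset.mem_insert.1 ha with rfl | ha'
            · rcases Finset.mem_insert.1 hb with rfl | hb'
              · exact absurd rfl hab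
              · rw [hws b (Finset.mem_of_mem_erase hb'), mul_zero]
            · rw [hws a (Finset.mem_of_mem_erase ha'), zero_mul]
          simp [vecMulVec, hab, h0]
      rw [hsub, hmat, det_diagonal, det_diagonal, hprod d, hprod fun x => d x + t * w x ^ 2]
      rw [Finset.prod_congr rfl fun x hx => show d x + t * w x ^ 2 = d x by
        rw [hws x (Finset.mem_of_mem_erase hx)]; ring]
      exact le_of_eq (by ring)

lemma minorSum_add_vecMulVec {k : ℕ} (hk : 1 ≤ k) (hk' : k ≤ Fintype.card ι)
    {A : Matrix ι ι ℝ} (hA : A.PosSemidef) (hpos : 0 < minorSum k A) {w : ι → ℝ} (hw : w ≠ 0) :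
    ∃ c, 0 < c ∧ ∀ t, 0 ≤ t →
      minorSum k A + c * t ≤ minorSum k (A + t • vecMulVec w w) := by
  obtain ⟨U, d, h1, h2, h3⟩ := exists_orthogonal_diagonalization hA.1
  have hd := psd_diagonal_of_eq hA h1 h3
  have hw' : Uᵀ *ᵥ w ≠ 0 := fun h => hw (by
    rw [← one_mulVec w, ← h2, ← mulVec_mulVec, h, mulVec_zero])
  have hvec : ∀ t : ℝ, A + t • vecMulVec w w =
      U * (diagonal d + t • vecMulVec (Uᵀ *ᵥ w) (Uᵀ *ᵥ w)) * Uᵀ := fun t => by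
    have : U * vecMulVec (Uᵀ *ᵥ w) (Uᵀ *ᵥ w) * Uᵀ = vecMulVec w w := by
      rw [mul_vecMulVec, vecMulVec_mul, mulVec_mulVec, h2, one_mulVec, ← mulVec_transpose,
        transpose_transpose, mulVec_mulVec, h2, one_mulVec]
    rw [Matrix.mul_add, Matrix.add_mul, ← h3, Matrix.mul_smul, Matrix.smul_mul, this]
  have h0 : minorSum k A = minorSum k (diagonal d) := by
    rw [h3, minorSum_conj_orthogonal hk' h1]
  obtain ⟨c, hc, h⟩ := minorSum_diagonal_add_vecMulVec k hk hd (h0 ▸ hpos) hw'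
  refine ⟨c, hc, fun t ht => ?_⟩
  rw [hvec, minorSum_conj_orthogonal hk' h1, h0]
  exact h t ht

end MatrixLemmas

section SecondOrder

open Finset Matrix

variable {ι : Type*} [Fintype ι] [DecidableEq ι]

lemma exists_prod_expansion {κ : Type*} [DecidableEq κ] (s : Finset κ) (β : κ → ℝ) :
    ∃ r : ℝ → ℝ, Continuous r ∧ ∀ t, ∏ i ∈ s, (1 + t * β i + t ^ 2 * β i ^ 2) =
      1 + t * (∑ i ∈ s, β i) + t ^ 2 * (((∑ i ∈ s, β i) ^ 2 + ∑ i ∈ s, β i ^ 2) / 2) +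
        t ^ 3 * r t := by
  induction s using Finset.induction_on with
  | empty => exact ⟨fun _ => 0, continuous_const, fun t => by simp⟩
  | insert a s ha ih =>
    obtain ⟨r, hr, h⟩ := ih
    set S := ∑ i ∈ s, β i
    set Q := ∑ i ∈ s, β i ^ 2
    refine ⟨fun t => (1 + t * β a + t ^ 2 * β a ^ 2) * r t + β a * ((S ^ 2 + Q) / 2) +
      β a ^ 2 * S + t * (β a ^ 2 * ((S ^ 2 + Q) / 2)), by fun_prop, fun t => ?_⟩
    rw [prod_insert ha, sum_insert ha, sum_insert ha, h]
    ring

lemma det_second_order_of_posDef {a b c : Matrix ι ι ℝ} (ha : a.PosDef) (hb : bᵀ = b)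
    (hc : (c - b * a⁻¹ * b).PosSemidef) :
    ∃ c₁ c₂ : ℝ, ∃ r : ℝ → ℝ, Continuous r ∧
      (∀ t : ℝ, a.det + c₁ * t + c₂ * t ^ 2 + t ^ 3 * r t ≤ (a + t • b + t ^ 2 • c).det) ∧
      c₁ ^ 2 + c₁ ^ 2 / Fintype.card ι ≤ a.det * (2 * c₂) := by
  have hdet := ha.det_pos
  obtain ⟨T, hT, hTu⟩ := exists_factor_of_posDef ha
  have hinv : T⁻¹ * T = 1 := nonsing_inv_mul T hTu
  have hTt : Tᵀ * (T⁻¹)ᵀ = 1 := by rw [← transpose_mul, hinv, transpose_one]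
  set P := (T⁻¹)ᵀ * b * T⁻¹ with hP
  have hPb : Tᵀ * P * T = b := by
    calc Tᵀ * P * T = (Tᵀ * (T⁻¹)ᵀ) * b * (T⁻¹ * T) := by simp only [hP, Matrix.mul_assoc]
      _ = b := by rw [hinv, hTt]; simp
  have hPP : Tᵀ * (P * P) * T = b * a⁻¹ * b := by
    calc Tᵀ * (P * P) * T = (Tᵀ * (T⁻¹)ᵀ) * b * (T⁻¹ * (T⁻¹)ᵀ) * b * (T⁻¹ * T) := by
          simp only [hP, Matrix.mul_assoc]
      _ = b * a⁻¹ * b := by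
        rw [hinv, hTt, hT, Matrix.mul_inv_rev, transpose_nonsing_inv]; simp
  have hPh : P.IsHermitian := by
    rw [IsHermitian, conjTranspose_eq_transpose_of_trivial, hP, transpose_mul, transpose_mul,
      transpose_transpose, hb, Matrix.mul_assoc]
  obtain ⟨U, β, h1, h2, h3⟩ := exists_orthogonal_diagonalization hPh
  have hq : ∀ t i, 0 ≤ 1 + t * β i + t ^ 2 * β i ^ 2 := fun t i => by
    nlinarith [sq_nonneg (1 + t * β i), sq_nonneg (t * β i)]
  have hN : ∀ t : ℝ, a + t • b + t ^ 2 • (b * a⁻¹ * b) =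
      Tᵀ * (U * diagonal (fun i => 1 + t * β i + t ^ 2 * β i ^ 2) * Uᵀ) * T := fun t => by
    have hd : diagonal (fun i => 1 + t * β i + t ^ 2 * β i ^ 2) =
        1 + t • diagonal β + t ^ 2 • (diagonal β * diagonal β) := by
      rw [diagonal_mul_diagonal, ← diagonal_one, ← diagonal_smul, ← diagonal_smul, diagonal_add,
        diagonal_add]
      congr 1; ext i; simp [sq]
    have hPP' : P * P = U * (diagonal β * diagonal β) * Uᵀ := by
      calc P * P = U * diagonal β * (Uᵀ * U) * diagonal β * Uᵀ := by
            rw [h3]; simp only [Matrix.mul_assoc]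
        _ = _ := by rw [h1]; simp only [Matrix.mul_assoc, Matrix.mul_one]
    rw [hd, Matrix.mul_add, Matrix.mul_add, Matrix.add_mul, Matrix.add_mul, Matrix.mul_one, h2,
      Matrix.mul_smul, Matrix.mul_smul, Matrix.smul_mul, Matrix.smul_mul, ← hPP', ← h3,
      Matrix.mul_add, Matrix.mul_add, Matrix.add_mul, Matrix.add_mul, Matrix.mul_one,
      Matrix.mul_smul, Matrix.mul_smul, Matrix.smul_mul, Matrix.smul_mul, hPb, hPP, ← hT]
  obtain ⟨r, hr, hexp⟩ := exists_prod_expansion (univ : Finset ι) β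
  set S := ∑ i, β i
  set Q := ∑ i, β i ^ 2
  refine ⟨a.det * S, a.det * ((S ^ 2 + Q) / 2), fun t => a.det * r t, by fun_prop, fun t => ?_, ?_⟩
  · have hNpsd : (a + t • b + t ^ 2 • (b * a⁻¹ * b)).PosSemidef := by
      rw [hN]
      have := (((posSemidef_diagonal_iff.2 (hq t)).mul_mul_conjTranspose_same U)
        |>.conjTranspose_mul_mul_same T)
      simpa only [conjTranspose_eq_transpose_of_trivial] using this
    have hle := det_le_det_add_of_posSemidef hNpsd (hc.smul (sq_nonneg t))
    have hsum : a + t • b + t ^ 2 • (b * a⁻¹ * b) + t ^ 2 • (c - b * a⁻¹ * b) =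
        a + t • b + t ^ 2 • c := by rw [smul_sub]; abel
    rw [hsum] at hle
    refine le_trans (le_of_eq ?_) hle
    rw [hN, det_mul, det_mul, det_conj_orthogonal h2, det_diagonal, hexp]
    have : a.det = T.det * T.det := by rw [hT, det_mul, det_transpose]
    rw [det_transpose]
    linear_combination (1 + t * S + t ^ 2 * ((S ^ 2 + Q) / 2) + t ^ 3 * r t) * this
  · have hcs : S ^ 2 / Fintype.card ι ≤ Q := by
      rcases (Fintype.card ι).eq_zero_or_pos with h0 | h0
      · rw [h0]; simp only [Nat.cast_zero, div_zero]; exact sum_nonneg fun i _ => sq_nonneg _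
      · rw [div_le_iff₀ (by exact_mod_cast h0), mul_comm]
        exact sq_sum_le_card_mul_sum_sq
    have := mul_le_mul_of_nonneg_left hcs (mul_self_nonneg a.det)
    calc (a.det * S) ^ 2 + (a.det * S) ^ 2 / Fintype.card ι
        = a.det * a.det * S ^ 2 + a.det * a.det * (S ^ 2 / Fintype.card ι) := by ring
      _ ≤ a.det * a.det * S ^ 2 + a.det * a.det * Q := by linarith
      _ = _ := by ring

lemma det_second_order {A W : Matrix ι ι ℝ} (hA : A.PosSemidef) (hX : (A * W)ᵀ = A * W)
    (s : Finset ι) :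
    ∃ c₁ c₂ : ℝ, ∃ r : ℝ → ℝ, Continuous r ∧
      (∀ t : ℝ, (A.submatrix (Subtype.val : s → ι) Subtype.val).det + c₁ * t + c₂ * t ^ 2 +
        t ^ 3 * r t ≤
        ((A + t • (A * W) + t ^ 2 • (Wᵀ * A * W)).submatrix
          (Subtype.val : s → ι) Subtype.val).det) ∧
      0 ≤ c₂ ∧ c₁ ^ 2 + c₁ ^ 2 / #s ≤
        (A.submatrix (Subtype.val : s → ι) Subtype.val).det * (2 * c₂) := by
  have hAt : A.IsSymm := by simpa using hA.1
  have hWA : Wᵀ * A = A * W := by rw [← hX, transpose_mul, hAt.eq]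
  have hY : (Wᵀ * A * W).PosSemidef := by simpa using hA.conjTranspose_mul_mul_same W
  by_cases h0 : (A.submatrix (Subtype.val : s → ι) Subtype.val).det = 0
  · refine ⟨0, 0, fun _ => 0, continuous_const, fun t => ?_, le_rfl, by simp⟩
    have hpsd : (A + t • (A * W) + t ^ 2 • (Wᵀ * A * W)).PosSemidef := by
      have h1 := hA.conjTranspose_mul_mul_same (1 + (t / 2) • W)
      have h2 := hY.smul (show 0 ≤ 3 / 4 * t ^ 2 by positivity)
      have : (1 + (t / 2) • W)ᴴ * A * (1 + (t / 2) • W) + (3 / 4 * t ^ 2) • (Wᵀ * A * W) =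
          A + t • (A * W) + t ^ 2 • (Wᵀ * A * W) := by
        simp only [conjTranspose_eq_transpose_of_trivial, transpose_add, transpose_one,
          transpose_smul, Matrix.add_mul, Matrix.mul_add, Matrix.one_mul, Matrix.mul_one,
          Matrix.smul_mul, Matrix.mul_smul, hWA]
        module
      rw [← this]
      exact h1.add h2
    rw [h0]
    simpa using (hpsd.submatrix (Subtype.val : s → ι)).det_nonneg
  · have ha : (A.submatrix (Subtype.val : s → ι) Subtype.val).PosDef :=
      (hA.submatrix _).posDef_iff_det_ne_zero.2 h0
    have hblock : (fromBlocks A (A * W) (A * W)ᴴ (Wᵀ * A * W)).PosSemidef := by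
      have := hA.conjTranspose_mul_mul_same (fromCols (1 : Matrix ι ι ℝ) W)
      rw [conjTranspose_eq_transpose_of_trivial, transpose_fromCols, fromRows_mul,
        fromRows_mul_fromCols] at this
      simpa [hX, hWA] using this
    have hsub := hblock.submatrix (Sum.map (Subtype.val : s → ι) (Subtype.val : s → ι))
    have hsub' : (fromBlocks (A.submatrix (Subtype.val : s → ι) Subtype.val)
        ((A * W).submatrix (Subtype.val : s → ι) Subtype.val)
        ((A * W).submatrix (Subtype.val : s → ι) Subtype.val)ᴴ
        ((Wᵀ * A * W).submatrix (Subtype.val : s → ι) Subtype.val)).PosSemidef := by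
      convert hsub using 1
      ext (i | i) (j | j) <;> rfl
    have := ha.isUnit.invertible
    have hschur := (PosDef.fromBlocks₁₁ _ _ ha).1 hsub'
    have hbt : ((A * W).submatrix (Subtype.val : s → ι) (Subtype.val : s → ι))ᵀ =
        (A * W).submatrix Subtype.val Subtype.val := by rw [transpose_submatrix, hX]
    rw [conjTranspose_eq_transpose_of_trivial, hbt] at hschur
    obtain ⟨c₁, c₂, r, hr, h1, h2⟩ := det_second_order_of_posDef ha hbt hschur
    rw [Fintype.card_coe] at h2
    refine ⟨c₁, c₂, r, hr, h1, ?_, h2⟩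
    have : 0 ≤ c₁ ^ 2 + c₁ ^ 2 / #s := by positivity
    nlinarith [ha.det_pos]

/-- Second-order lower bound for the sum of principal minors along
`t ↦ A + t A W + t² Wᵀ A W`; it expresses the concavity properties of `σ_k` used in the
constant rank argument. -/
lemma minorSum_second_order {A W : Matrix ι ι ℝ} (hA : A.PosSemidef)
    (hX : (A * W)ᵀ = A * W) (k : ℕ) :
    ∃ c₁ c₂ : ℝ, ∃ r : ℝ → ℝ, Continuous r ∧
      (∀ t : ℝ, minorSum k A + c₁ * t + c₂ * t ^ 2 + t ^ 3 * r t ≤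
        minorSum k (A + t • (A * W) + t ^ 2 • (Wᵀ * A * W))) ∧
      (1 + 1 / (k : ℝ)) * c₁ ^ 2 ≤ minorSum k A * (2 * c₂) := by
  choose c₁ c₂ r hr h1 h2 h3 using det_second_order hA hX
  refine ⟨∑ s ∈ univ.powersetCard k, c₁ s, ∑ s ∈ univ.powersetCard k, c₂ s,
    fun t => ∑ s ∈ univ.powersetCard k, r s t, by fun_prop, fun t => ?_, ?_⟩
  · unfold minorSum
    rw [Finset.sum_mul, Finset.sum_mul, Finset.mul_sum, ← sum_add_distrib, ← sum_add_distrib,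
      ← sum_add_distrib]
    exact sum_le_sum fun s _ => h1 s t
  · have hcs := Finset.sum_sq_le_sum_mul_sum_of_sq_le_mul (univ.powersetCard k)
      (r := fun s => c₁ s)
      (f := fun s => (A.submatrix (Subtype.val : s → ι) Subtype.val).det)
      (g := fun s => 2 * c₂ s / (1 + 1 / (k : ℝ)))
      (fun s _ => (hA.submatrix _).det_nonneg)
      (fun s _ => div_nonneg (mul_nonneg zero_le_two (h2 s)) (by positivity))
      (fun s hs => by
        have h := h3 s
        rw [(mem_powersetCard.1 hs).2] at h
        have hk : 0 < 1 + 1 / (k : ℝ) := by positivity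
        rw [← mul_div_assoc, le_div_iff₀ hk]
        calc _ = c₁ s ^ 2 + c₁ s ^ 2 / k := by ring
          _ ≤ _ := h)
    have hk : 0 < 1 + 1 / (k : ℝ) := by positivity
    rw [← Finset.sum_div, ← mul_div_assoc, le_div_iff₀ hk, ← Finset.mul_sum] at hcs
    unfold minorSum
    linarith

end SecondOrder

section Calculus

open Filter Topology

variable {F : Type*} [NormedAddCommGroup F] [NormedSpace ℝ F]

lemma deriv_eq_zero_and_second_deriv_nonneg {g g' : ℝ → ℝ} {g₂ : ℝ}
    (hg : ∀ᶠ t in 𝓝 0, HasDerivAt g (g' t) t) (hg' : HasDerivAt g' g₂ 0)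
    (hmin : IsLocalMin g 0) : g' 0 = 0 ∧ 0 ≤ g₂ := by
  have h0 : g' 0 = 0 := hmin.hasDerivAt_eq_zero hg.self_of_nhds
  refine ⟨h0, ?_⟩
  by_contra! hneg
  have hderiv : deriv g =ᶠ[𝓝 0] g' := hg.mono fun t ht => ht.deriv
  have h2 : deriv (deriv g) 0 = g₂ := by rw [hderiv.deriv_eq, hg'.deriv]
  have hmax : IsLocalMax g 0 := isLocalMax_of_deriv_deriv_neg (h2 ▸ hneg)
    (by rw [hderiv.eq_of_nhds, h0]) hg.self_of_nhds.continuousAt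
  have hconst : g =ᶠ[𝓝 0] fun _ => g 0 := by
    filter_upwards [hmin, hmax] with t h1 h2 using le_antisymm h2 h1
  have h3 : deriv g =ᶠ[𝓝 0] fun _ => 0 := by
    have := hconst.deriv
    simpa using this
  have h4 : deriv (deriv g) 0 = 0 := by rw [h3.deriv_eq]; simp
  linarith

lemma hasDerivAt_comp_second {f : F → ℝ} {c c' : ℝ → F} {c₂ : F}
    (hf : ContDiffAt ℝ 2 f (c 0)) (hc : ∀ᶠ t in 𝓝 0, HasDerivAt c (c' t) t)
    (hc' : HasDerivAt c' c₂ 0) :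
    (∀ᶠ t in 𝓝 0, HasDerivAt (fun t => f (c t)) (fderiv ℝ f (c t) (c' t)) t) ∧
      HasDerivAt (fun t => fderiv ℝ f (c t) (c' t))
        (fderiv ℝ (fderiv ℝ f) (c 0) (c' 0) (c' 0) + fderiv ℝ f (c 0) c₂) 0 := by
  constructor
  · have hcont : ContinuousAt c 0 := hc.self_of_nhds.continuousAt
    have h1 : ∀ᶠ y in 𝓝 (c 0), ContDiffAt ℝ 2 f y := hf.eventually (by simp)
    filter_upwards [hcont.eventually h1, hc] with t ht hct
    exact (ht.differentiableAt (by norm_num)).hasFDerivAt.comp_hasDerivAt t hct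
  · have hd : DifferentiableAt ℝ (fderiv ℝ f) (c 0) :=
      (hf.fderiv_right (m := 1) (by norm_num)).differentiableAt (by norm_num)
    exact (hd.hasFDerivAt.comp_hasDerivAt (0 : ℝ) hc.self_of_nhds).clm_apply hc'

end Calculus

section BilinearForms

open Filter Topology

variable {E : Type*} [NormedAddCommGroup E] [InnerProductSpace ℝ E]
  {ι : Type*} [Fintype ι] [DecidableEq ι] (b : OrthonormalBasis ι ℝ E) {k : ℕ}

/-- The matrix of a bilinear form in an orthonormal basis. -/
def matOf (B : E →L[ℝ] E →L[ℝ] ℝ) : Matrix ι ι ℝ := fun i j => B (b i) (b j)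

/-- The elementary symmetric function `σ_k` of a bilinear form. -/
def sig (k : ℕ) (B : E →L[ℝ] E →L[ℝ] ℝ) : ℝ := minorSum k (matOf b B)

/-- The bilinear form `w ⊗ w`. -/
def tens (w : E) : E →L[ℝ] E →L[ℝ] ℝ := (innerSL ℝ w).smulRight (innerSL ℝ w)

@[simp] lemma tens_apply (w v v' : E) : tens w v v' = ⟪w, v⟫ * ⟪w, v'⟫ := by
  simp [tens]

lemma matOf_add (A B : E →L[ℝ] E →L[ℝ] ℝ) : matOf b (A + B) = matOf b A + matOf b B := by
  ext i j; simp [matOf]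

lemma matOf_smul (c : ℝ) (A : E →L[ℝ] E →L[ℝ] ℝ) : matOf b (c • A) = c • matOf b A := by
  ext i j; simp [matOf]

lemma matOf_tens (w : E) :
    matOf b (tens w) = Matrix.vecMulVec (fun i => ⟪w, b i⟫) (fun i => ⟪w, b i⟫) := by
  ext i j
  simp [matOf, Matrix.vecMulVec]

lemma bilForm_apply_eq_sum (B : E →L[ℝ] E →L[ℝ] ℝ) (v w : E) :
    B v w = ∑ i, ∑ j, ⟪b i, v⟫ * ⟪b j, w⟫ * matOf b B i j := by
  conv_lhs => rw [← b.sum_repr' v, ← b.sum_repr' w]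
  simp only [map_sum, sum_apply, map_smul, smul_apply, smul_eq_mul, matOf, Finset.mul_sum]
  rw [Finset.sum_comm]
  refine Finset.sum_congr rfl fun i _ => Finset.sum_congr rfl fun j _ => ?_
  ring

/-- The matrix of a linear map in an orthonormal basis. -/
def linMat (T : E →L[ℝ] E) : Matrix ι ι ℝ := fun i j => ⟪b i, T (b j)⟫

lemma matOf_bilinearComp (B : E →L[ℝ] E →L[ℝ] ℝ) (S T : E →L[ℝ] E) :
    matOf b (B.bilinearComp S T) = (linMat b S).transpose * matOf b B * linMat b T := by
  ext i j
  rw [matOf, ContinuousLinearMap.bilinearComp_apply, bilForm_apply_eq_sum b, Finset.sum_comm]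
  simp only [Matrix.mul_apply, Matrix.transpose_apply, linMat]
  refine Finset.sum_congr rfl fun a _ => ?_
  rw [Finset.sum_mul]
  refine Finset.sum_congr rfl fun c _ => ?_
  ring

lemma linMat_orthogonal {R : E →L[ℝ] E} (hR : ∀ v w, ⟪R v, R w⟫ = ⟪v, w⟫) :
    (linMat b R).transpose * linMat b R = 1 := by
  ext i j
  simp only [Matrix.mul_apply, Matrix.transpose_apply, linMat]
  calc _ = ∑ x, ⟪R (b i), b x⟫ * ⟪b x, R (b j)⟫ :=
        Finset.sum_congr rfl fun x _ => by rw [real_inner_comm]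
    _ = ⟪R (b i), R (b j)⟫ := b.sum_inner_mul_inner _ _
    _ = _ := by rw [hR, b.inner_eq_ite, Matrix.one_apply]

lemma sig_bilinearComp_orthogonal (hk : k ≤ Fintype.card ι) (B : E →L[ℝ] E →L[ℝ] ℝ) {R : E →L[ℝ] E}
    (hR : ∀ v w, ⟪R v, R w⟫ = ⟪v, w⟫) : sig b k (B.bilinearComp R R) = sig b k B := by
  have h := linMat_orthogonal b hR
  have h' : ((linMat b R).transpose).transpose * (linMat b R).transpose = 1 := by
    rw [Matrix.transpose_transpose]; exact mul_eq_one_comm.1 h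
  rw [sig, sig, matOf_bilinearComp]
  have := minorSum_conj_orthogonal (k := k) (hk) h' (matOf b B)
  rwa [Matrix.transpose_transpose] at this

lemma contDiff_sig : ContDiff ℝ ⊤ (sig b k) := by
  have h : ∀ i j, ContDiff ℝ ⊤ fun B : E →L[ℝ] E →L[ℝ] ℝ => matOf b B i j := fun i j =>
    ((ContinuousLinearMap.apply ℝ ℝ (b j)).comp
      (ContinuousLinearMap.apply ℝ (E →L[ℝ] ℝ) (b i))).contDiff
  unfold sig minorSum
  refine ContDiff.sum fun s _ => ?_
  simp only [Matrix.det_apply]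
  exact ContDiff.sum fun p _ => by
    simp only [Units.smul_def, zsmul_eq_mul]
    exact contDiff_const.mul (contDiff_prod fun i _ => h _ _)

lemma posSemidef_matOf {B : E →L[ℝ] E →L[ℝ] ℝ} (hsymm : ∀ v w, B v w = B w v)
    (hB : ∀ v, 0 ≤ B v v) : (matOf b B).PosSemidef := by
  refine Matrix.PosSemidef.of_dotProduct_mulVec_nonneg ?_ fun x => ?_
  · ext i j; simpa [matOf] using hsymm _ _
  · have := hB (∑ i : ι, x i • b i)
    rw [bilForm_apply_eq_sum b] at this
    refine this.trans_eq ?_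
    simp only [dotProduct, Matrix.mulVec, Finset.mul_sum, star_trivial,
      b.orthonormal.inner_right_fintype]
    refine Finset.sum_congr rfl fun i _ => Finset.sum_congr rfl fun j _ => ?_
    ring

lemma hasDerivAt_sig_line (A H : E →L[ℝ] E →L[ℝ] ℝ) :
    HasDerivAt (fun t : ℝ => sig b k (A + t • H)) (fderiv ℝ (sig b k) A H) 0 := by
  have h : HasFDerivAt (sig b k) (fderiv ℝ (sig b k) A) (A + (0 : ℝ) • H) := by
    rw [zero_smul, add_zero]
    exact ((contDiff_sig b).differentiable (by simp)).differentiableAt.hasFDerivAt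
  have hl : HasDerivAt (fun t : ℝ => A + t • H) H 0 := by
    simpa using ((hasDerivAt_id (0 : ℝ)).smul_const H).const_add A
  exact h.comp_hasDerivAt (0 : ℝ) hl

lemma le_deriv_of_forall_le {f : ℝ → ℝ} {f' c : ℝ} (hf : HasDerivAt f f' 0)
    (h : ∀ t, 0 ≤ t → f 0 + c * t ≤ f t) : c ≤ f' := by
  have h1 := (hasDerivAt_iff_tendsto_slope.1 hf).mono_left
    (nhdsWithin_mono (0 : ℝ) (s := Ioi 0) (t := {0}ᶜ) fun x hx => ne_of_gt hx)
  refine ge_of_tendsto h1 (eventually_nhdsWithin_of_forall fun t ht => ?_)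
  have ht' : 0 < t := ht
  rw [slope_def_field, sub_zero, le_div_iff₀ ht']
  linarith [h t ht'.le]

lemma fderiv_sig_nonneg {A H : E →L[ℝ] E →L[ℝ] ℝ} (hAs : ∀ v w, A v w = A w v)
    (hA : ∀ v, 0 ≤ A v v) (hHs : ∀ v w, H v w = H w v) (hH : ∀ v, 0 ≤ H v v) :
    0 ≤ fderiv ℝ (sig b k) A H := by
  refine le_deriv_of_forall_le (hasDerivAt_sig_line b A H) fun t ht => ?_
  simp only [zero_smul, add_zero, zero_mul, sig, matOf_add, matOf_smul]
  exact minorSum_mono k (posSemidef_matOf b hAs hA) ((posSemidef_matOf b hHs hH).smul ht)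

lemma fderiv_sig_tens_pos (hk : 1 ≤ k) (hk' : k ≤ Fintype.card ι) {A : E →L[ℝ] E →L[ℝ] ℝ}
    (hAs : ∀ v w, A v w = A w v) (hA : ∀ v, 0 ≤ A v v) (hpos : 0 < sig b k A)
    {w : E} (hw : w ≠ 0) : 0 < fderiv ℝ (sig b k) A (tens w) := by
  obtain ⟨c, hc, h⟩ := minorSum_add_vecMulVec hk (hk') (posSemidef_matOf b hAs hA)
    hpos (w := fun i => ⟪w, b i⟫) (fun h => hw (by
      rw [← b.sum_repr' w]
      exact Finset.sum_eq_zero fun i _ => by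
        rw [real_inner_comm, show ⟪w, b i⟫ = 0 from congrFun h i, zero_smul]))
  refine hc.trans_le (le_deriv_of_forall_le (hasDerivAt_sig_line b A (tens w)) fun t ht => ?_)
  have := h t ht
  simp only [zero_smul, add_zero, sig, matOf_add, matOf_smul, matOf_tens]
  exact this

lemma sig_second_order {A X : E →L[ℝ] E →L[ℝ] ℝ} {W : E →L[ℝ] E} (hAs : ∀ v w, A v w = A w v)
    (hA : ∀ v, 0 ≤ A v v) (hX : ∀ v w, X v w = A v (W w)) (hXs : ∀ v w, X v w = X w v) :
    (1 + 1 / (k : ℝ)) * (fderiv ℝ (sig b k) A X) ^ 2 ≤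
      sig b k A * (fderiv ℝ (fderiv ℝ (sig b k)) A X X +
        2 * fderiv ℝ (sig b k) A (A.bilinearComp W W)) := by
  set Y := A.bilinearComp W W with hY
  have hXm : matOf b X = matOf b A * linMat b W := by
    have h1 : X = A.bilinearComp (ContinuousLinearMap.id ℝ _) W := by ext v w; simp [hX]
    have h2 : linMat b (ContinuousLinearMap.id ℝ E) = 1 := by
      ext i j
      rw [linMat, ContinuousLinearMap.id_apply, b.inner_eq_ite, Matrix.one_apply]
    rw [h1, matOf_bilinearComp, h2, Matrix.transpose_one, Matrix.one_mul]
  have hXt : (matOf b A * linMat b W).transpose = matOf b A * linMat b W := by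
    rw [← hXm]; ext i j; exact hXs _ _
  obtain ⟨c₁, c₂, r, hr, h1, h2⟩ := minorSum_second_order (posSemidef_matOf b hAs hA) hXt k
  have hmat : ∀ t : ℝ, minorSum k (matOf b A + t • (matOf b A * linMat b W) +
      t ^ 2 • ((linMat b W).transpose * matOf b A * linMat b W)) =
      sig b k (A + t • X + t ^ 2 • Y) := fun t => by
    rw [sig, matOf_add, matOf_add, matOf_smul, matOf_smul, hXm, hY, matOf_bilinearComp]
  have hc : ∀ t : ℝ, HasDerivAt (fun t : ℝ => A + t • X + t ^ 2 • Y)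
      (X + (2 * t) • Y) t := fun t => by
    have := (((hasDerivAt_id t).smul_const X).const_add A).add
      (((hasDerivAt_id t).pow 2).smul_const Y)
    simpa [Pi.add_def] using this
  have hc' : HasDerivAt (fun t : ℝ => X + (2 * t) • Y) ((2 : ℝ) • Y) 0 := by
    have := (((hasDerivAt_id (0 : ℝ)).const_mul 2).smul_const Y).const_add X
    simpa using this
  obtain ⟨hp, hp'⟩ := hasDerivAt_comp_second (f := sig b k)
    (c := fun t : ℝ => A + t • X + t ^ 2 • Y)
    ((contDiff_sig b).contDiffAt.of_le (by simp)) (Eventually.of_forall hc) hc'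
  simp only [zero_smul, mul_zero, add_zero, ne_eq, OfNat.ofNat_ne_zero, not_false_eq_true,
    zero_pow, map_smul, smul_eq_mul] at hp'
  have key : ∀ ε : ℝ, 0 < ε → c₁ = fderiv ℝ (sig b k) A X ∧
      2 * (c₂ - ε) ≤ fderiv ℝ (fderiv ℝ (sig b k)) A X X + 2 * fderiv ℝ (sig b k) A Y := by
    intro ε hε
    have hq : ∀ t : ℝ, HasDerivAt (fun t => minorSum k (matOf b A) + c₁ * t + (c₂ - ε) * t ^ 2)
        (c₁ + (c₂ - ε) * (2 * t)) t := fun t => by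
      have := (((hasDerivAt_id t).const_mul c₁).const_add (minorSum k (matOf b A))).add
        (((hasDerivAt_id t).pow 2).const_mul (c₂ - ε))
      simpa [Pi.add_def] using this
    have hq' : HasDerivAt (fun t : ℝ => c₁ + (c₂ - ε) * (2 * t)) ((c₂ - ε) * 2) 0 := by
      have := (((hasDerivAt_id (0 : ℝ)).const_mul 2).const_mul (c₂ - ε)).const_add c₁
      simpa using this
    have htr : ∀ᶠ t in 𝓝 (0 : ℝ), -ε ≤ t * r t := by
      have : Tendsto (fun t => t * r t) (𝓝 0) (𝓝 (0 * r 0)) :=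
        (continuous_id.mul hr).tendsto 0
      rw [zero_mul] at this
      exact this.eventually (eventually_ge_nhds (by linarith))
    have hmin : IsLocalMin (fun t : ℝ => sig b k (A + t • X + t ^ 2 • Y) -
        (minorSum k (matOf b A) + c₁ * t + (c₂ - ε) * t ^ 2)) 0 := by
      filter_upwards [htr] with t ht
      have := h1 t
      rw [hmat] at this
      simp only [zero_smul, add_zero, ne_eq, OfNat.ofNat_ne_zero, not_false_eq_true, zero_pow,
        mul_zero, sig, sub_self]
      simp only [sig] at this
      nlinarith [mul_nonneg (sq_nonneg t) (show 0 ≤ ε + t * r t by linarith)]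
    have := deriv_eq_zero_and_second_deriv_nonneg
      (hp.mono fun t ht => ht.sub (hq t)) (hp'.sub hq') hmin
    simp only [zero_smul, mul_zero, add_zero, ne_eq, OfNat.ofNat_ne_zero, not_false_eq_true,
      zero_pow] at this
    exact ⟨by linarith [this.1], by linarith [this.2]⟩
  have hc₂ : 2 * c₂ ≤ fderiv ℝ (fderiv ℝ (sig b k)) A X X + 2 * fderiv ℝ (sig b k) A Y :=
    le_of_forall_pos_le_add fun ε hε => by linarith [(key (ε / 2) (by linarith)).2]
  rw [← (key 1 one_pos).1]
  exact h2.trans (mul_le_mul_of_nonneg_left hc₂ (minorSum_nonneg k (posSemidef_matOf b hAs hA)))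

end BilinearForms

section DerivativeOfSigma

open Filter Topology

variable {E : Type*} [NormedAddCommGroup E] [InnerProductSpace ℝ E]
  {ι : Type*} [Fintype ι] [DecidableEq ι] (b : OrthonormalBasis ι ℝ E) {k : ℕ}

lemma fderiv_sig_bilinearComp (hk : k ≤ Fintype.card ι) {A : E →L[ℝ] E →L[ℝ] ℝ}
    {R : E →L[ℝ] E} (hR : ∀ v w, ⟪R v, R w⟫ = ⟪v, w⟫) (hA : A.bilinearComp R R = A)
    (H : E →L[ℝ] E →L[ℝ] ℝ) :
    fderiv ℝ (sig b k) A (H.bilinearComp R R) = fderiv ℝ (sig b k) A H := by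
  have hfun : (fun t : ℝ => sig b k (A + t • H.bilinearComp R R)) =
      fun t : ℝ => sig b k (A + t • H) := by
    funext t
    rw [← sig_bilinearComp_orthogonal b hk (A + t • H) hR]
    congr 1
    ext v w
    have := DFunLike.congr_fun (DFunLike.congr_fun hA v) w
    simp only [ContinuousLinearMap.bilinearComp_apply] at this
    simp [this]
  have h1 := hasDerivAt_sig_line (k := k) b A (H.bilinearComp R R)
  rw [hfun] at h1
  exact h1.unique (hasDerivAt_sig_line b A H)

lemma sig_smul (c : ℝ) (B : E →L[ℝ] E →L[ℝ] ℝ) :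
    sig b k (c • B) = c ^ k * sig b k B := by
  unfold sig minorSum
  rw [matOf_smul, Finset.mul_sum]
  refine Finset.sum_congr rfl fun s hs => ?_
  rw [show (c • matOf b B).submatrix (Subtype.val : s → ι) (Subtype.val : s → ι) =
    c • (matOf b B).submatrix Subtype.val Subtype.val from rfl, Matrix.det_smul,
    Fintype.card_coe, (Finset.mem_powersetCard.1 hs).2]

end DerivativeOfSigma

section PlaneProjection

variable {E : Type*} [NormedAddCommGroup E] [InnerProductSpace ℝ E]

/-- The orthogonal projection to `{e, f}ᗮ` for an orthonormal pair `e, f`. -/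
def planeCompl (e f : E) : E →L[ℝ] E :=
  ContinuousLinearMap.id ℝ E - (innerSL ℝ e).smulRight e - (innerSL ℝ f).smulRight f

lemma planeCompl_apply (e f v : E) : planeCompl e f v = v - ⟪e, v⟫ • e - ⟪f, v⟫ • f := by
  simp [planeCompl]

variable {e f : E}

lemma inner_planeCompl (v w : E) :
    ⟪planeCompl e f v, w⟫ = ⟪v, w⟫ - ⟪e, v⟫ * ⟪e, w⟫ - ⟪f, v⟫ * ⟪f, w⟫ := by
  simp [planeCompl_apply, inner_sub_left, inner_smul_left]

lemma planeCompl_left (he : ‖e‖ = 1) (hef : ⟪e, f⟫ = 0) : planeCompl e f e = 0 := by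
  rw [planeCompl_apply, real_inner_comm, real_inner_comm, real_inner_comm e f, hef,
    real_inner_self_eq_norm_sq, he]
  simp

lemma planeCompl_right (hf : ‖f‖ = 1) (hef : ⟪e, f⟫ = 0) : planeCompl e f f = 0 := by
  rw [planeCompl_apply, hef, real_inner_self_eq_norm_sq, hf]
  simp

lemma inner_planeCompl_planeCompl (he : ‖e‖ = 1) (hf : ‖f‖ = 1) (hef : ⟪e, f⟫ = 0) (v w : E) :
    ⟪planeCompl e f v, planeCompl e f w⟫ = ⟪v, w⟫ - ⟪e, v⟫ * ⟪e, w⟫ - ⟪f, v⟫ * ⟪f, w⟫ := by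
  have h1 : ⟪e, planeCompl e f w⟫ = 0 := by
    rw [real_inner_comm, inner_planeCompl, real_inner_self_eq_norm_sq, he,
      real_inner_comm e f, hef, real_inner_comm]; ring
  have h2 : ⟪f, planeCompl e f w⟫ = 0 := by
    rw [real_inner_comm, inner_planeCompl, real_inner_self_eq_norm_sq, hf, hef,
      real_inner_comm]; ring
  rw [inner_planeCompl, h1, h2, real_inner_comm, inner_planeCompl,
    real_inner_comm]
  ring

lemma norm_planeCompl_le (he : ‖e‖ = 1) (hf : ‖f‖ = 1) (hef : ⟪e, f⟫ = 0) (v : E) :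
    ‖planeCompl e f v‖ ≤ ‖v‖ := by
  refine abs_le_of_sq_le_sq' ?_ (norm_nonneg _) |>.2
  rw [← real_inner_self_eq_norm_sq, ← real_inner_self_eq_norm_sq,
    inner_planeCompl_planeCompl he hf hef]
  nlinarith [mul_self_nonneg ⟪e, v⟫, mul_self_nonneg ⟪f, v⟫]

lemma inner_reflection_plane (he : ‖e‖ = 1) (hf : ‖f‖ = 1) (hef : ⟪e, f⟫ = 0) (v w : E) :
    ⟪(2 : ℝ) • planeCompl e f v - v, (2 : ℝ) • planeCompl e f w - w⟫ = ⟪v, w⟫ := by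
  simp only [inner_sub_left, inner_sub_right, inner_smul_left, inner_smul_right,
    inner_planeCompl_planeCompl he hf hef, inner_planeCompl,
    real_inner_comm (planeCompl e f w) v]
  simp only [real_inner_comm w v, RCLike.conj_to_real]
  ring

end PlaneProjection

section CoreInequality

variable {E : Type*} [NormedAddCommGroup E] [InnerProductSpace ℝ E]

lemma norm_sub_bilinearComp_planeCompl_le {e x : E} (he : ‖e‖ = 1) (hx : x ≠ 0)
    (hex : ⟪e, x⟫ = 0) {X : E →L[ℝ] E →L[ℝ] ℝ} {g : E →L[ℝ] ℝ} {l : ℝ} (hl : 0 ≤ l)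
    (hXs : ∀ v w, X v w = X w v) (hXx : ∀ v, X x v = -(l * ⟪e, v⟫)) (hXe : ∀ v, X e v = g v) :
    ‖X - X.bilinearComp (planeCompl e (‖x‖⁻¹ • x)) (planeCompl e (‖x‖⁻¹ • x))‖ ≤
      2 * (‖g‖ + l / ‖x‖) := by
  have hx0 : 0 < ‖x‖ := norm_pos_iff.2 hx
  have hf : ‖‖x‖⁻¹ • x‖ = 1 := by rw [norm_smul, norm_inv, norm_norm, inv_mul_cancel₀ hx0.ne']
  have hef : ⟪e, ‖x‖⁻¹ • x⟫ = 0 := by rw [inner_smul_right, hex, mul_zero]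
  set f := ‖x‖⁻¹ • x with hfdef
  set P := planeCompl e f with hP
  have hXf : ∀ v, X f v = -(l / ‖x‖ * ⟪e, v⟫) := fun v => by
    rw [hfdef, map_smul, smul_apply, hXx, smul_eq_mul]; ring
  have hQ : ∀ v w, |X (v - P v) w| ≤ (‖g‖ + l / ‖x‖) * ‖v‖ * ‖w‖ := fun v w => by
    have h0 : v - P v = ⟪e, v⟫ • e + ⟪f, v⟫ • f := by rw [hP, planeCompl_apply]; abel
    rw [h0, map_add, map_smul, map_smul, add_apply, smul_apply,
      smul_apply, hXe, hXf, smul_eq_mul, smul_eq_mul]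
    have h1 : |⟪e, v⟫| ≤ ‖v‖ := by simpa [he] using abs_real_inner_le_norm e v
    have h2 : |⟪f, v⟫| ≤ ‖v‖ := by simpa [hf] using abs_real_inner_le_norm f v
    have h3 : |⟪e, w⟫| ≤ ‖w‖ := by simpa [he] using abs_real_inner_le_norm e w
    have h4 : |g w| ≤ ‖g‖ * ‖w‖ := g.le_opNorm w
    calc _ ≤ |⟪e, v⟫| * |g w| + |⟪f, v⟫| * (l / ‖x‖ * |⟪e, w⟫|) := by
          refine (abs_add_le _ _).trans (le_of_eq ?_)
          rw [abs_mul, abs_mul, abs_neg, abs_mul, abs_of_nonneg (div_nonneg hl hx0.le)]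
      _ ≤ ‖v‖ * (‖g‖ * ‖w‖) + ‖v‖ * (l / ‖x‖ * ‖w‖) := by gcongr
      _ = _ := by ring
  refine ContinuousLinearMap.opNorm_le_bound₂ _ (by positivity) fun v w => ?_
  have hsplit : (X - X.bilinearComp P P) v w = X (v - P v) w + X (w - P w) (P v) := by
    rw [hXs (w - P w) (P v)]
    simp
  rw [hsplit]
  have hPv := norm_planeCompl_le he hf hef v
  calc ‖X (v - P v) w + X (w - P w) (P v)‖
      ≤ (‖g‖ + l / ‖x‖) * ‖v‖ * ‖w‖ + (‖g‖ + l / ‖x‖) * ‖w‖ * ‖P v‖ :=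
        (abs_add_le _ _).trans (add_le_add (hQ _ _) (hQ _ _))
    _ ≤ (‖g‖ + l / ‖x‖) * ‖v‖ * ‖w‖ + (‖g‖ + l / ‖x‖) * ‖w‖ * ‖v‖ := by gcongr
    _ = _ := by ring

lemma exists_solution_operator [CompleteSpace E] {e x : E} (hx : x ≠ 0)
    {A X : E →L[ℝ] E →L[ℝ] ℝ} {l : ℝ} (hl : 0 < l)
    (hAs : ∀ v w, A v w = A w v) (hAx : ∀ v, A x v = 0) (hAe : ∀ v, A e v = l * ⟪e, v⟫)
    (hcoer : ∀ v, l * ‖v‖ ^ 2 ≤ A v v + ⟪x, v⟫ ^ 2)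
    (hXs : ∀ v w, X v w = X w v) (hXx : ∀ v, X x v = 0) (hXe : ∀ v, X e v = 0) :
    ∃ W : E →L[ℝ] E, (∀ v w, X v w = A v (W w)) ∧ (∀ w, ⟪e, W w⟫ = 0) ∧ ∀ w, ⟪x, W w⟫ = 0 := by
  have hco : IsCoercive (A + tens x) := ⟨l, hl, fun v => by
    have := hcoer v
    simp only [add_apply, tens_apply]
    nlinarith⟩
  set T := hco.continuousLinearEquivOfBilin
  have hT : ∀ v w, A (T.symm v) w + ⟪x, T.symm v⟫ * ⟪x, w⟫ = ⟪v, w⟫ := fun v w => by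
    have := hco.continuousLinearEquivOfBilin_apply (T.symm v) w
    rw [show hco.continuousLinearEquivOfBilin (T.symm v) = v from T.apply_symm_apply v] at this
    simpa using this.symm
  set XX := InnerProductSpace.continuousLinearMapOfBilin X
  have hXX : ∀ v w, ⟪XX v, w⟫ = X v w := fun v w =>
    InnerProductSpace.continuousLinearMapOfBilin_apply X v w
  have hW : ∀ v w, A (T.symm (XX w)) v + ⟪x, T.symm (XX w)⟫ * ⟪x, v⟫ = X w v := fun v w => by
    rw [hT, hXX]
  have hWx : ∀ w, ⟪x, T.symm (XX w)⟫ = 0 := fun w => by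
    have := hW x w
    rw [hAs, hAx, zero_add, hXs, hXx, real_inner_self_eq_norm_sq] at this
    exact (mul_eq_zero.1 this).resolve_right (pow_ne_zero 2 (norm_ne_zero_iff.2 hx))
  refine ⟨(T.symm : E →L[ℝ] E).comp XX, fun v w => ?_, fun w => ?_, hWx⟩
  · have := hW v w
    rw [hWx, zero_mul, add_zero] at this
    rw [hXs, ← this]; exact hAs _ _
  · have := hW e w
    rw [hWx, zero_mul, add_zero, hAs, hAe, hXs, hXe] at this
    exact (mul_eq_zero.1 this).resolve_left hl.ne'

variable {ι : Type*} [Fintype ι] [DecidableEq ι] (b : OrthonormalBasis ι ℝ E) {k : ℕ}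

/-- The pointwise differential inequality behind the strong maximum principle for the smallest
eigenvalue. -/
lemma core_inequality (hk' : k ≤ Fintype.card ι) {e x : E} (he : ‖e‖ = 1)
    (hx : x ≠ 0) (hex : ⟪e, x⟫ = 0) {A X Y h : E →L[ℝ] E →L[ℝ] ℝ} {g : E →L[ℝ] ℝ} {l : ℝ}
    (hl : 0 < l) (hAs : ∀ v w, A v w = A w v) (hA : ∀ v, 0 ≤ A v v) (hAx : ∀ v, A x v = 0)
    (hAe : ∀ v, A e v = l * ⟪e, v⟫) (hcoer : ∀ v, l * ‖v‖ ^ 2 ≤ A v v + ⟪x, v⟫ ^ 2)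
    (hXs : ∀ v w, X v w = X w v) (hXx : ∀ v, X x v = -(l * ⟪e, v⟫))
    (hYs : ∀ v w, Y v w = Y w v) (hhs : ∀ v w, h v w = h w v)
    (hsecond : ∀ w v, 0 ≤ Y w w + 4 * X w v + 2 * A v v + 2 * (⟪w, e⟫ + ⟪x, v⟫) ^ 2 - h w w -
      4 * g w * ⟪e, v⟫ - 2 * l * ‖v‖ ^ 2) :
    sig b k A * (fderiv ℝ (fderiv ℝ (sig b k)) A X X + fderiv ℝ (sig b k) A h) ≤
      sig b k A * (fderiv ℝ (fderiv ℝ (sig b k)) A X X + fderiv ℝ (sig b k) A Y) +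
      (sig b k A * (fderiv ℝ (fderiv ℝ (sig b k)) A
          (X.bilinearComp (planeCompl e (‖x‖⁻¹ • x)) (planeCompl e (‖x‖⁻¹ • x)))
          (X.bilinearComp (planeCompl e (‖x‖⁻¹ • x)) (planeCompl e (‖x‖⁻¹ • x)))) -
        (1 + 1 / (k : ℝ)) * (fderiv ℝ (sig b k) A
          (X.bilinearComp (planeCompl e (‖x‖⁻¹ • x)) (planeCompl e (‖x‖⁻¹ • x)))) ^ 2) +
      4 * l / ‖x‖ ^ 2 * (sig b k A * fderiv ℝ (sig b k) A (tens e)) := by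
  have : FiniteDimensional ℝ E := b.toBasis.finiteDimensional_of_finite
  have : CompleteSpace E := FiniteDimensional.complete ℝ E
  have hx0 : 0 < ‖x‖ := norm_pos_iff.2 hx
  have hf : ‖‖x‖⁻¹ • x‖ = 1 := by rw [norm_smul, norm_inv, norm_norm, inv_mul_cancel₀ hx0.ne']
  have hef : ⟪e, ‖x‖⁻¹ • x⟫ = 0 := by rw [inner_smul_right, hex, mul_zero]
  set f := ‖x‖⁻¹ • x with hfdef
  have hAf : ∀ v, A f v = 0 := fun v => by rw [hfdef, map_smul, smul_apply, hAx, smul_zero]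
  set P := planeCompl e f with hP
  have hPe : P e = 0 := planeCompl_left he hef
  have hPf : P f = 0 := planeCompl_right hf hef
  have hPx : P x = 0 := by
    have : x = ‖x‖ • f := by rw [hfdef, smul_smul, mul_inv_cancel₀ hx0.ne', one_smul]
    rw [this, map_smul, hPf, smul_zero]
  set X' := X.bilinearComp P P with hX'
  have hX's : ∀ v w, X' v w = X' w v := fun v w => by simpa [hX'] using hXs _ _
  obtain ⟨W, hW, hWe, hWx⟩ := exists_solution_operator hx hl hAs hAx hAe hcoer hX's
    (fun v => by simp [hX', hPx]) (fun v => by simp [hX', hPe])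
  set R : E →L[ℝ] E := (2 : ℝ) • P - ContinuousLinearMap.id ℝ E with hRdef
  have hRv : ∀ v, R v = (2 : ℝ) • P v - v := fun v => by simp [hRdef]
  have hR : ∀ v w, ⟪R v, R w⟫ = ⟪v, w⟫ := fun v w => by
    rw [hRv, hRv]; exact inner_reflection_plane he hf hef v w
  have hPP : ∀ v, P (P v) = P v := fun v => by
    have h1 : P v = v - ⟪e, v⟫ • e - ⟪f, v⟫ • f := by rw [hP, planeCompl_apply]
    conv_lhs => rw [h1]
    rw [map_sub, map_sub, map_smul, map_smul, hPe, hPf]; simp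
  have hPR : ∀ v, P (R v) = P v := fun v => by
    rw [hRv, map_sub, map_smul, hPP]; module
  have hAR : A.bilinearComp R R = A := by
    have h1 : ∀ v w, A (R v) (R w) = A v w := fun v w => by
      have hv : ∀ v, R v = v - (2 * ⟪e, v⟫) • e - (2 * ⟪f, v⟫) • f := fun v => by
        rw [hRv, hP, planeCompl_apply]; module
      have hs : ∀ v, A v e = l * ⟪e, v⟫ := fun v => by rw [hAs, hAe]
      have hsf : ∀ v, A v f = 0 := fun v => by rw [hAs, hAf]
      rw [hv v, hv w]
      simp only [map_sub, map_smul, sub_apply, smul_apply, hAe, hAf, hs, hsf, smul_eq_mul,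
        real_inner_self_eq_norm_sq, he, hef]
      ring
    ext v w; exact h1 v w
  have hWR : ∀ w, W (R w) = W w := fun w => by
    have hd : A (W (R w) - W w) (W (R w) - W w) = 0 := by
      rw [map_sub, ← hW, ← hW]; simp [hX', hPR]
    have hxd : ⟪x, W (R w) - W w⟫ = 0 := by rw [inner_sub_right, hWx, hWx, sub_zero]
    have := hcoer (W (R w) - W w)
    rw [hd, hxd] at this
    have h0 : ‖W (R w) - W w‖ ^ 2 ≤ 0 := by nlinarith
    exact sub_eq_zero.1 (norm_eq_zero.1 (pow_eq_zero_iff two_ne_zero |>.1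
      (le_antisymm h0 (sq_nonneg _))))
  have hform : ∀ w, 0 ≤ Y w w - 4 * X w (W w) + 4 * l / ‖x‖ ^ 2 * ⟪e, w⟫ ^ 2 +
      2 * A (W w) (W w) - h w w := fun w => by
    have h1 := hsecond w (-W w - (⟪w, e⟫ / ‖x‖ ^ 2) • x)
    have h2 : ⟪x, -W w - (⟪w, e⟫ / ‖x‖ ^ 2) • x⟫ = -⟪w, e⟫ := by
      rw [inner_sub_right, inner_neg_right, hWx, inner_smul_right, real_inner_self_eq_norm_sq]
      field_simp; ring
    have h3 : ⟪e, -W w - (⟪w, e⟫ / ‖x‖ ^ 2) • x⟫ = 0 := by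
      rw [inner_sub_right, inner_neg_right, hWe, inner_smul_right, hex]; ring
    have h4 : X w (-W w - (⟪w, e⟫ / ‖x‖ ^ 2) • x) = -X w (W w) + l / ‖x‖ ^ 2 * ⟪e, w⟫ ^ 2 := by
      rw [map_sub, map_neg, map_smul, hXs w x, hXx, smul_eq_mul, real_inner_comm]; ring
    have h5 : A (-W w - (⟪w, e⟫ / ‖x‖ ^ 2) • x) (-W w - (⟪w, e⟫ / ‖x‖ ^ 2) • x) =
        A (W w) (W w) := by
      have hs : ∀ v, A v x = 0 := fun v => by rw [hAs, hAx]
      simp [hs, hAx]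
    rw [h2, h3, h4, h5] at h1
    have h6 : 0 ≤ 2 * l * ‖-W w - (⟪w, e⟫ / ‖x‖ ^ 2) • x‖ ^ 2 := by positivity
    have h7 : 4 * l / ‖x‖ ^ 2 * ⟪e, w⟫ ^ 2 = 4 * (l / ‖x‖ ^ 2 * ⟪e, w⟫ ^ 2) := by ring
    rw [h7]
    linarith
  set Z : E →L[ℝ] E →L[ℝ] ℝ := (1 / 2 : ℝ) • (Y + Y.bilinearComp R R) -
    (2 : ℝ) • A.bilinearComp W W + (4 * l / ‖x‖ ^ 2) • tens e -
    (1 / 2 : ℝ) • (h + h.bilinearComp R R) with hZ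
  have hZpos : 0 ≤ fderiv ℝ (sig b k) A Z := by
    refine fderiv_sig_nonneg b hAs hA (fun v w => ?_) fun w => ?_
    · simp only [hZ, sub_apply, add_apply, smul_apply, ContinuousLinearMap.bilinearComp_apply,
        tens_apply, hYs w v, hYs (R w), hhs w v, hhs (R w), hAs (W w), mul_comm ⟪e, w⟫]
    · have h1 := hform w
      have h2 := hform (R w)
      have heR : ⟪e, R w⟫ ^ 2 = ⟪e, w⟫ ^ 2 := by
        rw [hRv, inner_sub_right, inner_smul_right, hP, real_inner_comm,
          inner_planeCompl, real_inner_self_eq_norm_sq, he, real_inner_comm e f, hef,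
          real_inner_comm e w]
        ring
      have hPW : P (W w) = W w := by
        rw [hP, planeCompl_apply, hWe, hfdef, inner_smul_left, hWx]; simp
      have hXW : X w (W w) + X (R w) (W w) = 2 * A (W w) (W w) := by
        rw [← hW, ← hX's]
        rw [hX', ContinuousLinearMap.bilinearComp_apply, hPW, hRv]
        simp only [map_sub, map_smul, sub_apply, smul_apply, smul_eq_mul]
        ring
      rw [hWR, heR] at h2
      simp only [hZ, sub_apply, add_apply, smul_apply, ContinuousLinearMap.bilinearComp_apply,
        tens_apply, smul_eq_mul]
      have h7 : 4 * l / ‖x‖ ^ 2 * (⟪e, w⟫ * ⟪e, w⟫) = 4 * l / ‖x‖ ^ 2 * ⟪e, w⟫ ^ 2 := by ring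
      rw [h7]
      linarith
  have hZe : fderiv ℝ (sig b k) A Z = fderiv ℝ (sig b k) A Y -
      2 * fderiv ℝ (sig b k) A (A.bilinearComp W W) +
      4 * l / ‖x‖ ^ 2 * fderiv ℝ (sig b k) A (tens e) - fderiv ℝ (sig b k) A h := by
    rw [hZ]
    simp only [map_sub, map_add, map_smul, fderiv_sig_bilinearComp b hk' hR hAR, smul_eq_mul]
    ring
  have hs3 := sig_second_order b (k := k) hAs hA hW hX's
  have hσ : 0 ≤ sig b k A := minorSum_nonneg k (posSemidef_matOf b hAs hA)
  have := mul_nonneg hσ hZpos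
  rw [hZe] at this
  linarith [this, hs3]

/-- Quantitative form of `core_inequality` with the equation for `σ_k` taken into account. -/
lemma core_estimate (hk : 1 ≤ k) (hk' : k ≤ Fintype.card ι) {e x : E} (he : ‖e‖ = 1)
    (hx : x ≠ 0) (hex : ⟪e, x⟫ = 0) {A X Y h : E →L[ℝ] E →L[ℝ] ℝ} {g : E →L[ℝ] ℝ} {l : ℝ}
    (hl : 0 < l) (hAs : ∀ v w, A v w = A w v) (hA : ∀ v, 0 ≤ A v v) (hAx : ∀ v, A x v = 0)
    (hAe : ∀ v, A e v = l * ⟪e, v⟫) (hcoer : ∀ v, l * ‖v‖ ^ 2 ≤ A v v + ⟪x, v⟫ ^ 2)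
    (hXs : ∀ v w, X v w = X w v) (hXx : ∀ v, X x v = -(l * ⟪e, v⟫)) (hXe : ∀ v, X e v = g v)
    (hYs : ∀ v w, Y v w = Y w v) (hhs : ∀ v w, h v w = h w v)
    (hsecond : ∀ w v, 0 ≤ Y w w + 4 * X w v + 2 * A v v + 2 * (⟪w, e⟫ + ⟪x, v⟫) ^ 2 - h w w -
      4 * g w * ⟪e, v⟫ - 2 * l * ‖v‖ ^ 2)
    (hpde : sig b k A * (fderiv ℝ (fderiv ℝ (sig b k)) A X X + fderiv ℝ (sig b k) A Y) ≤
      (1 + 1 / (k : ℝ)) * (fderiv ℝ (sig b k) A X) ^ 2)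
    {M m : ℝ} (hm : 0 < m) (hmx : m ≤ ‖x‖) (hM₁ : ‖fderiv ℝ (sig b k) A‖ ≤ M)
    (hM₂ : ‖fderiv ℝ (fderiv ℝ (sig b k)) A‖ ≤ M) (hMX : ‖X‖ ≤ M) (hMσ : sig b k A ≤ M) :
    sig b k A * fderiv ℝ (sig b k) A h ≤
      12 * M ^ 3 * (‖g‖ + l / m) + 4 * l / m ^ 2 * M ^ 2 := by
  have hx0 : 0 < ‖x‖ := norm_pos_iff.2 hx
  have hM0 : 0 ≤ M := (norm_nonneg _).trans hMX
  have hσ : 0 ≤ sig b k A := minorSum_nonneg k (posSemidef_matOf b hAs hA)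
  have hcore := core_inequality b hk' he hx hex hl hAs hA hAx hAe hcoer hXs hXx hYs hhs hsecond
  have hdiff := norm_sub_bilinearComp_planeCompl_le he hx hex hl.le hXs hXx hXe
  have hf : ‖‖x‖⁻¹ • x‖ = 1 := by rw [norm_smul, norm_inv, norm_norm, inv_mul_cancel₀ hx0.ne']
  have hef : ⟪e, ‖x‖⁻¹ • x⟫ = 0 := by rw [inner_smul_right, hex, mul_zero]
  have hX'M : ‖X.bilinearComp (planeCompl e (‖x‖⁻¹ • x)) (planeCompl e (‖x‖⁻¹ • x))‖ ≤ M := by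
    refine ContinuousLinearMap.opNorm_le_bound₂ _ hM0 fun v w => ?_
    calc _ ≤ ‖X‖ * ‖planeCompl e (‖x‖⁻¹ • x) v‖ * ‖planeCompl e (‖x‖⁻¹ • x) w‖ :=
          X.le_opNorm₂ _ _
      _ ≤ M * ‖v‖ * ‖w‖ := by
        gcongr <;> exact norm_planeCompl_le he hf hef _
  set X' := X.bilinearComp (planeCompl e (‖x‖⁻¹ • x)) (planeCompl e (‖x‖⁻¹ • x))
  set D := fderiv ℝ (sig b k) A
  set D₂ := fderiv ℝ (fderiv ℝ (sig b k)) A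
  set δ := 2 * (‖g‖ + l / ‖x‖) with hδ
  have hδ0 : 0 ≤ δ := (norm_nonneg _).trans hdiff
  have hδm : δ ≤ 2 * (‖g‖ + l / m) := by rw [hδ]; gcongr
  have hbd : ∀ Z : E →L[ℝ] E →L[ℝ] ℝ, |D Z| ≤ M * ‖Z‖ := fun Z =>
    (D.le_opNorm Z).trans (by gcongr)
  have hbd₂ : ∀ Z Z' : E →L[ℝ] E →L[ℝ] ℝ, |D₂ Z Z'| ≤ M * ‖Z‖ * ‖Z'‖ := fun Z Z' =>
    (D₂.le_opNorm₂ Z Z').trans (by gcongr)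
  have hsq : (D X) ^ 2 - (D X') ^ 2 ≤ 2 * M ^ 3 * δ := by
    have h1 : (D X) ^ 2 - (D X') ^ 2 = D (X - X') * (D X + D X') := by rw [map_sub]; ring
    rw [h1]
    refine (le_abs_self _).trans ?_
    rw [abs_mul]
    calc _ ≤ (M * δ) * (M * M + M * M) := by
          refine mul_le_mul ((hbd _).trans (by gcongr)) ?_ (abs_nonneg _) (by positivity)
          refine (abs_add_le _ _).trans (add_le_add ((hbd _).trans ?_)
            ((hbd _).trans ?_)) <;> gcongr
      _ = _ := by ring
  have hsec : D₂ X' X' - D₂ X X ≤ 2 * M ^ 2 * δ := by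
    have h1 : D₂ X' X' - D₂ X X = -(D₂ (X - X') X + D₂ X' (X - X')) := by simp
    rw [h1]
    refine (le_abs_self _).trans ?_
    rw [abs_neg]
    calc _ ≤ M * δ * M + M * M * δ :=
          (abs_add_le _ _).trans (add_le_add ((hbd₂ _ _).trans (by gcongr))
            ((hbd₂ _ _).trans (by gcongr)))
      _ = _ := by ring
  have hsec' : sig b k A * (D₂ X' X' - D₂ X X) ≤ 2 * M ^ 3 * δ := by
    calc _ ≤ sig b k A * (2 * M ^ 2 * δ) := mul_le_mul_of_nonneg_left hsec hσ
      _ ≤ M * (2 * M ^ 2 * δ) := by gcongr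
      _ = _ := by ring
  have hk1 : 1 + 1 / (k : ℝ) ≤ 2 := by
    have : 1 / (k : ℝ) ≤ 1 := by
      rw [div_le_one (by exact_mod_cast hk)]; exact_mod_cast hk
    linarith
  have hk0 : 0 ≤ 1 + 1 / (k : ℝ) := by positivity
  have hsq' : (1 + 1 / (k : ℝ)) * ((D X) ^ 2 - (D X') ^ 2) ≤ 4 * M ^ 3 * δ := by
    calc _ ≤ (1 + 1 / (k : ℝ)) * (2 * M ^ 3 * δ) := mul_le_mul_of_nonneg_left hsq hk0
      _ ≤ 2 * (2 * M ^ 3 * δ) := by gcongr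
      _ = _ := by ring
  have htens : ‖tens e‖ ≤ 1 := by
    refine ContinuousLinearMap.opNorm_le_bound₂ _ zero_le_one fun v w => ?_
    rw [tens_apply, norm_mul, one_mul]
    have h1 : |⟪e, v⟫| ≤ ‖v‖ := by simpa [he] using abs_real_inner_le_norm e v
    have h2 : |⟪e, w⟫| ≤ ‖w‖ := by simpa [he] using abs_real_inner_le_norm e w
    exact mul_le_mul h1 h2 (abs_nonneg _) (norm_nonneg _)
  have hlast : 4 * l / ‖x‖ ^ 2 * (sig b k A * D (tens e)) ≤ 4 * l / m ^ 2 * M ^ 2 := by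
    have h1 : D (tens e) ≤ M := (le_abs_self _).trans ((hbd _).trans (by nlinarith))
    have h2 : sig b k A * D (tens e) ≤ M ^ 2 := by
      calc _ ≤ sig b k A * M := mul_le_mul_of_nonneg_left h1 hσ
        _ ≤ M * M := by gcongr
        _ = _ := by ring
    calc _ ≤ 4 * l / ‖x‖ ^ 2 * M ^ 2 := mul_le_mul_of_nonneg_left h2 (by positivity)
      _ ≤ _ := by gcongr
  have hfin : 6 * M ^ 3 * δ ≤ 12 * M ^ 3 * (‖g‖ + l / m) := by
    calc _ ≤ 6 * M ^ 3 * (2 * (‖g‖ + l / m)) := by gcongr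
      _ = _ := by ring
  linarith

end CoreInequality

section HigherDerivatives

open Filter Topology
open scoped ContDiff

variable {E : Type*} [NormedAddCommGroup E] [NormedSpace ℝ E] {F : Type*} [NormedAddCommGroup F]
  [NormedSpace ℝ F] {G : E → ℝ} {x : E}

lemma two_le_infty : (2 : WithTop ℕ∞) ≤ ∞ :=
  WithTop.coe_le_coe.2 (le_top : (2 : ℕ∞) ≤ ⊤)

lemma ContDiffAt.fderiv_infty {f : E → F} (h : ContDiffAt ℝ ∞ f x) :
    ContDiffAt ℝ ∞ (fderiv ℝ f) x := h.fderiv_right (m := ∞) (by norm_cast)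

lemma ContDiffAt.eventually_infty {f : E → F} (h : ContDiffAt ℝ ∞ f x) (n : ℕ) :
    ∀ᶠ y in 𝓝 x, ContDiffAt ℝ n f y :=
  (h.of_le (m := n) (by exact_mod_cast le_top)).eventually (by simp)

lemma ContDiffAt.second_fderiv_symm {f : E → F} {n : WithTop ℕ∞} (h : ContDiffAt ℝ n f x)
    (hn : 2 ≤ n) (v w : E) :
    fderiv ℝ (fderiv ℝ f) x v w = fderiv ℝ (fderiv ℝ f) x w v :=
  (h.isSymmSndFDerivAt (by simpa using hn)) v w

lemma fderiv_apply_const {f : E → E →L[ℝ] F} (h : DifferentiableAt ℝ f x) (u v : E) :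
    fderiv ℝ (fun y => f y v) x u = fderiv ℝ f x u v := by
  have := (h.hasFDerivAt.clm_apply (hasFDerivAt_const v x)).fderiv
  rw [this]; simp

lemma fderiv_symm_of_eventually {f : E → E →L[ℝ] E →L[ℝ] F} (h : DifferentiableAt ℝ f x)
    (hs : ∀ᶠ y in 𝓝 x, ∀ v w, f y v w = f y w v) (u v w : E) :
    fderiv ℝ f x u v w = fderiv ℝ f x u w v := by
  have hd : ∀ v w, fderiv ℝ (fun y => f y v w) x u = fderiv ℝ f x u v w := fun v w => by
    have h1 : DifferentiableAt ℝ (fun y => f y v) x := h.clm_apply (differentiableAt_const v)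
    rw [fderiv_apply_const (f := fun y => f y v) h1, fderiv_apply_const h]
  rw [← hd, ← hd]
  have h0 : (fun y => f y v w) =ᶠ[𝓝 x] fun y => f y w v := hs.mono fun y hy => hy v w
  rw [h0.fderiv_eq]

lemma third_fderiv_symm (h : ContDiffAt ℝ ∞ G x) (u v w : E) :
    fderiv ℝ (fderiv ℝ (fderiv ℝ G)) x u v w = fderiv ℝ (fderiv ℝ (fderiv ℝ G)) x u w v :=
  fderiv_symm_of_eventually (h.fderiv_infty.fderiv_infty.differentiableAt (by simp))
    ((h.eventually_infty 2).mono fun _ hy => hy.second_fderiv_symm le_rfl) u v w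

lemma third_fderiv_symm_left (h : ContDiffAt ℝ ∞ G x) (u v w : E) :
    fderiv ℝ (fderiv ℝ (fderiv ℝ G)) x u v w = fderiv ℝ (fderiv ℝ (fderiv ℝ G)) x v u w := by
  rw [h.fderiv_infty.second_fderiv_symm two_le_infty]

lemma fourth_fderiv_symm_right (h : ContDiffAt ℝ ∞ G x) (a c d f : E) :
    fderiv ℝ (fderiv ℝ (fderiv ℝ (fderiv ℝ G))) x a c d f =
      fderiv ℝ (fderiv ℝ (fderiv ℝ (fderiv ℝ G))) x a c f d := by
  have h3 := h.fderiv_infty.fderiv_infty.fderiv_infty.differentiableAt (by simp)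
  have h4 : DifferentiableAt ℝ (fun y => fderiv ℝ (fderiv ℝ (fderiv ℝ G)) y c) x :=
    h3.clm_apply (differentiableAt_const c)
  have := fderiv_symm_of_eventually h4
    ((h.eventually_infty 3).mono fun y hy v w => by
      refine fderiv_symm_of_eventually ?_ ((hy.eventually (by simp)).mono fun _ hz =>
        hz.second_fderiv_symm (by norm_num)) c v w
      exact ((hy.fderiv_right (m := 2) (by norm_num)).fderiv_right (m := 1)
        (by norm_num)).differentiableAt (by norm_num)) a d f
  rwa [fderiv_apply_const h3] at this

lemma fourth_fderiv_symm (h : ContDiffAt ℝ ∞ G x) (w e : E) :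
    fderiv ℝ (fderiv ℝ (fderiv ℝ (fderiv ℝ G))) x w w e e =
      fderiv ℝ (fderiv ℝ (fderiv ℝ (fderiv ℝ G))) x e e w w := by
  set D := fderiv ℝ (fderiv ℝ (fderiv ℝ (fderiv ℝ G))) x
  have h3 := h.fderiv_infty.fderiv_infty.fderiv_infty.differentiableAt (by simp)
  have h12 : ∀ a c, D a c = D c a := fun a c =>
    h.fderiv_infty.fderiv_infty.second_fderiv_symm two_le_infty a c
  have h23 : ∀ a c d, D a c d = D a d c := fderiv_symm_of_eventually h3
    ((h.fderiv_infty.eventually_infty 2).mono fun y hy => hy.second_fderiv_symm le_rfl)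
  calc D w w e e = D w e w e := by rw [h23]
    _ = D e w w e := by rw [h12]
    _ = D e w e w := fourth_fderiv_symm_right h _ _ _ _
    _ = D e e w w := by rw [h23]

lemma hasDerivAt_line (x w : E) (t : ℝ) : HasDerivAt (fun t : ℝ => x + t • w) w t := by
  simpa using ((hasDerivAt_id t).smul_const w).const_add x

lemma eventually_hasDerivAt_fderiv_line {f : E → F} (h : ContDiffAt ℝ ∞ f x) (w : E) :
    (∀ᶠ t : ℝ in 𝓝 0, HasDerivAt (fun t : ℝ => f (x + t • w)) (fderiv ℝ f (x + t • w) w) t) ∧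
      HasDerivAt (fun t : ℝ => fderiv ℝ f (x + t • w) w) (fderiv ℝ (fderiv ℝ f) x w w) 0 := by
  have hc : Tendsto (fun t : ℝ => x + t • w) (𝓝 0) (𝓝 x) := by
    have : ContinuousAt (fun t : ℝ => x + t • w) 0 := by fun_prop
    simpa [ContinuousAt] using this
  constructor
  · filter_upwards [hc.eventually (h.eventually_infty 1)] with t ht
    exact (ht.differentiableAt (by norm_num)).hasFDerivAt.comp_hasDerivAt t (hasDerivAt_line x w t)
  · have h1 : HasFDerivAt (fderiv ℝ f) (fderiv ℝ (fderiv ℝ f) x) (x + (0 : ℝ) • w) := by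
      simpa using (h.fderiv_infty.differentiableAt (by simp)).hasFDerivAt
    have h2 : HasDerivAt (fun t : ℝ => fderiv ℝ f (x + t • w)) (fderiv ℝ (fderiv ℝ f) x w) 0 :=
      h1.comp_hasDerivAt (0 : ℝ) (hasDerivAt_line x w 0)
    simpa using h2.clm_apply (hasDerivAt_const (0 : ℝ) w)

end HigherDerivatives

section Solutions

open Filter Topology
open scoped ContDiff

variable {E : Type*} [NormedAddCommGroup E] [InnerProductSpace ℝ E]
  {ι : Type*} [Fintype ι] [DecidableEq ι] 

/-- `G` is a convex solution of `σ_k(D²G) = Ψ⁻ᵏ` on the open set `Ω`, with `Ψ` positive and convex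
and with `D²G` radially degenerate. -/
structure IsConvexSolution (b : OrthonormalBasis ι ℝ E) (k : ℕ) (G Ψ : E → ℝ) (Ω : Set E) :
    Prop where
  isOpen : IsOpen Ω
  smooth : ∀ x ∈ Ω, ContDiffAt ℝ ∞ G x
  smooth_rhs : ∀ x ∈ Ω, ContDiffAt ℝ ∞ Ψ x
  euler : ∀ x ∈ Ω, ∀ v, fderiv ℝ (fderiv ℝ G) x x v = 0
  nonneg : ∀ x ∈ Ω, ∀ v, 0 ≤ fderiv ℝ (fderiv ℝ G) x v v
  pos : ∀ x ∈ Ω, 0 < Ψ x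
  convex_rhs : ∀ x ∈ Ω, ∀ v, 0 ≤ fderiv ℝ (fderiv ℝ Ψ) x v v
  eqn : ∀ x ∈ Ω, sig b k (fderiv ℝ (fderiv ℝ G) x) * Ψ x ^ k = 1

variable {b : OrthonormalBasis ι ℝ E} {k : ℕ} {G Ψ : E → ℝ} {Ω : Set E} {x : E}

lemma IsConvexSolution.euler_deriv (h : IsConvexSolution b k G Ψ Ω) (hx : x ∈ Ω) (w v : E) :
    fderiv ℝ (fderiv ℝ (fderiv ℝ G)) x w x v = -fderiv ℝ (fderiv ℝ G) x w v := by
  have hd := (h.smooth x hx).fderiv_infty.fderiv_infty.differentiableAt (by simp)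
  have h1 := (hd.hasFDerivAt.clm_apply (hasFDerivAt_id x)).clm_apply (hasFDerivAt_const v x)
  have h2 : (fun y => fderiv ℝ (fderiv ℝ G) y (id y) v) =ᶠ[𝓝 x] fun _ => (0 : ℝ) :=
    (h.isOpen.eventually_mem hx).mono fun y hy => h.euler y hy v
  have h3 := DFunLike.congr_fun
    (h1.unique ((hasFDerivAt_const (0 : ℝ) x).congr_of_eventuallyEq h2)) w
  simp at h3
  linarith

lemma IsConvexSolution.second_order (h : IsConvexSolution b k G Ψ Ω) (hk : 1 ≤ k) (hx : x ∈ Ω)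
    (e : E) :
    sig b k (fderiv ℝ (fderiv ℝ G) x) *
      (fderiv ℝ (fderiv ℝ (sig b k)) (fderiv ℝ (fderiv ℝ G) x)
          (fderiv ℝ (fderiv ℝ (fderiv ℝ G)) x e) (fderiv ℝ (fderiv ℝ (fderiv ℝ G)) x e) +
        fderiv ℝ (sig b k) (fderiv ℝ (fderiv ℝ G) x)
          (fderiv ℝ (fderiv ℝ (fderiv ℝ (fderiv ℝ G))) x e e)) ≤
      (1 + 1 / (k : ℝ)) * (fderiv ℝ (sig b k) (fderiv ℝ (fderiv ℝ G) x)
        (fderiv ℝ (fderiv ℝ (fderiv ℝ G)) x e)) ^ 2 := by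
  set A := fderiv ℝ (fderiv ℝ G) with hA
  have hk0 : (0 : ℝ) < k := by exact_mod_cast hk
  obtain ⟨hA1, hA2⟩ := eventually_hasDerivAt_fderiv_line (h.smooth x hx).fderiv_infty.fderiv_infty e
  obtain ⟨hS1, hS2⟩ := hasDerivAt_comp_second (f := sig b k)
    (((contDiff_sig b).of_le le_top).contDiffAt) hA1 hA2
  obtain ⟨hΨ1, hΨ2⟩ := eventually_hasDerivAt_fderiv_line (h.smooth_rhs x hx) e
  have hmem : ∀ᶠ t : ℝ in 𝓝 0, x + t • e ∈ Ω := by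
    have : ContinuousAt (fun t : ℝ => x + t • e) 0 := by fun_prop
    exact this.eventually_mem (h.isOpen.mem_nhds (by simpa using hx))
  have hrel : (fun t : ℝ => fderiv ℝ (sig b k) (A (x + t • e)) (fderiv ℝ A (x + t • e) e) *
      Ψ (x + t • e) + k * (sig b k (A (x + t • e)) * fderiv ℝ Ψ (x + t • e) e)) =ᶠ[𝓝 0]
      fun _ => 0 := by
    filter_upwards [hS1, hΨ1, hmem, hmem.eventually_nhds] with t h1 h2 h3 h4
    have hd := h1.mul (h2.pow k)
    have h0 : (fun t : ℝ => sig b k (A (x + t • e))) * (fun t : ℝ => Ψ (x + t • e)) ^ k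
        =ᶠ[𝓝 t] fun _ => (1 : ℝ) := h4.mono fun s hs => h.eqn _ hs
    have h5 := hd.unique ((hasDerivAt_const t (1 : ℝ)).congr_of_eventuallyEq h0)
    have hΨp := h.pos _ h3
    have hpow : Ψ (x + t • e) ^ k = Ψ (x + t • e) ^ (k - 1) * Ψ (x + t • e) := by
      rw [← pow_succ, Nat.sub_add_cancel hk]
    simp only [Pi.pow_apply] at h5
    rw [hpow] at h5
    have : Ψ (x + t • e) ^ (k - 1) ≠ 0 := (pow_pos hΨp _).ne'
    refine mul_left_cancel₀ this ?_
    linarith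
  have hS0 := hS1.self_of_nhds
  have hΨ0 := hΨ1.self_of_nhds
  have hd := ((hS2.mul hΨ0).add ((hS0.mul hΨ2).const_mul (k : ℝ)))
  have hz := hd.unique ((hasDerivAt_const (0 : ℝ) (0 : ℝ)).congr_of_eventuallyEq hrel)
  have hr0 := hrel.self_of_nhds
  simp only [zero_smul, add_zero] at hz hr0
  have hc := h.convex_rhs x hx e
  have hp := h.pos x hx
  set S := sig b k (A x)
  set S₂ := fderiv ℝ (fderiv ℝ (sig b k)) (A x) (fderiv ℝ A x e) (fderiv ℝ A x e) +
    fderiv ℝ (sig b k) (A x) (fderiv ℝ (fderiv ℝ A) x e e)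
  set S₁ := fderiv ℝ (sig b k) (A x) (fderiv ℝ A x e)
  set p₁ := fderiv ℝ Ψ x e
  set p₂ := fderiv ℝ (fderiv ℝ Ψ) x e e
  refine le_of_mul_le_mul_left ?_ (mul_pos hp hk0)
  have e1 : Ψ x * k * ((1 + 1 / (k : ℝ)) * S₁ ^ 2) = Ψ x * (k + 1) * S₁ ^ 2 := by
    field_simp
  rw [e1]
  have e2 : (k : ℝ) * (S * p₁) = -(S₁ * Ψ x) := by linarith
  have e3 : k * S * (S₂ * Ψ x + S₁ * p₁ + k * (S₁ * p₁ + S * p₂)) = 0 := by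
    rw [hz, mul_zero]
  have e4 : 0 ≤ (k * S) ^ 2 * p₂ := by positivity
  have e5 : k * S * (S₁ * p₁) = -(S₁ ^ 2 * Ψ x) := by linear_combination S₁ * e2
  nlinarith

end Solutions

section Hopf

open Filter Topology
open scoped ContDiff

variable {E : Type*} [NormedAddCommGroup E] [InnerProductSpace ℝ E]

/-- First and second order conditions along the curve `t ↦ (x + t w, e + t v)` at a minimum of
`(x, v) ↦ a(x)(v, v) + ⟪x, v⟫² - η(x) ‖v‖²`. -/
lemma joint_min_conditions {a a' : ℝ → E →L[ℝ] E →L[ℝ] ℝ} {a₂ : E →L[ℝ] E →L[ℝ] ℝ}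
    {η η' : ℝ → ℝ} {η₂ : ℝ} {x e w v : E}
    (ha : ∀ᶠ t in 𝓝 0, HasDerivAt a (a' t) t) (ha' : HasDerivAt a' a₂ 0)
    (hη : ∀ᶠ t in 𝓝 0, HasDerivAt η (η' t) t) (hη' : HasDerivAt η' η₂ 0)
    (hs : ∀ y z, a 0 y z = a 0 z y) (hs' : ∀ y z, a' 0 y z = a' 0 z y) (he : ‖e‖ = 1)
    (hmin : IsLocalMin (fun t : ℝ => a t (e + t • v) (e + t • v) +
      ⟪x + t • w, e + t • v⟫ ^ 2 - η t * ⟪e + t • v, e + t • v⟫) 0) :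
    a' 0 e e + 2 * a 0 e v + 2 * ⟪x, e⟫ * (⟪w, e⟫ + ⟪x, v⟫) - η' 0 - 2 * η 0 * ⟪e, v⟫ = 0 ∧
      0 ≤ a₂ e e + 4 * a' 0 e v + 2 * a 0 v v + 2 * (⟪w, e⟫ + ⟪x, v⟫) ^ 2 +
        4 * ⟪x, e⟫ * ⟪w, v⟫ - η₂ - 4 * η' 0 * ⟪e, v⟫ - 2 * η 0 * ‖v‖ ^ 2 := by
  have hv := hasDerivAt_line e v
  have hw := hasDerivAt_line x w
  have hin := fun t => (hw t).inner ℝ (hv t)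
  have hvv := fun t => (hv t).inner ℝ (hv t)
  have h1 : ∀ᶠ t in 𝓝 0, HasDerivAt (fun t : ℝ => a t (e + t • v) (e + t • v) +
      ⟪x + t • w, e + t • v⟫ ^ 2 - η t * ⟪e + t • v, e + t • v⟫)
      ((a' t (e + t • v) + a t v) (e + t • v) + a t (e + t • v) v +
        2 * ⟪x + t • w, e + t • v⟫ * (⟪x + t • w, v⟫ + ⟪w, e + t • v⟫) -
        (η' t * ⟪e + t • v, e + t • v⟫ + η t * (⟪e + t • v, v⟫ + ⟪v, e + t • v⟫))) t := by
    filter_upwards [ha, hη] with t hat hηt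
    refine ((((hat.clm_apply (hv t)).clm_apply (hv t)).add ((hin t).pow 2)).sub
      (hηt.mul (hvv t))).congr_deriv ?_
    simp
  have ha0 := ha.self_of_nhds
  have hη0 := hη.self_of_nhds
  have hc := fun y : E => hasDerivAt_const (0 : ℝ) y
  have h2 := ((((((ha'.clm_apply (hv 0)).add (ha0.clm_apply (hc v))).clm_apply (hv 0)).add
    ((ha0.clm_apply (hv 0)).clm_apply (hc v))).add
    (((hin 0).const_mul 2).mul (((hw 0).inner ℝ (hc v)).add ((hc w).inner ℝ (hv 0))))).sub
    ((hη'.mul (hvv 0)).add (hη0.mul (((hv 0).inner ℝ (hc v)).add ((hc v).inner ℝ (hv 0))))))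
  obtain ⟨h3, h4⟩ := deriv_eq_zero_and_second_deriv_nonneg h1 h2 hmin
  have he2 : ⟪e, e⟫ = 1 := by rw [real_inner_self_eq_norm_sq, he]; norm_num
  simp only [zero_smul, add_zero, add_apply, inner_zero_left, inner_zero_right, zero_add,
    map_zero, he2, real_inner_comm e v, Pi.add_apply] at h3 h4
  rw [hs v e] at h3
  rw [hs' v e, real_inner_self_eq_norm_sq] at h4
  constructor
  · linarith
  · linarith

lemma nonneg_deriv_of_eventually_le {f : ℝ → ℝ} {f' : ℝ} (hf : HasDerivAt f f' 0)
    (h : ∀ᶠ t in 𝓝[>] 0, f 0 ≤ f t) : 0 ≤ f' := by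
  have h1 := (hasDerivAt_iff_tendsto_slope.1 hf).mono_left
    (nhdsWithin_mono (0 : ℝ) (s := Ioi 0) (t := {0}ᶜ) fun x hx => ne_of_gt hx)
  refine ge_of_tendsto h1 ?_
  filter_upwards [h, self_mem_nhdsWithin] with t ht ht0
  rw [slope_def_field]
  exact div_nonneg (by linarith) (by simpa using le_of_lt ht0)

/-- The inner product as a continuous bilinear form. -/
def innerForm (E : Type*) [NormedAddCommGroup E] [InnerProductSpace ℝ E] : E →L[ℝ] E →L[ℝ] ℝ :=
  (innerₗ E).mkContinuous₂ 1 fun x y => by simpa using norm_inner_le_norm (𝕜 := ℝ) x y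

@[simp] lemma innerForm_apply (v w : E) : innerForm E v w = ⟪v, w⟫ := rfl

lemma norm_innerForm_le : ‖innerForm E‖ ≤ 1 :=
  LinearMap.mkContinuous₂_norm_le (innerₗ E) zero_le_one _

lemma hasDerivAt_gaussian (ε α c : ℝ) (d w : E) (t : ℝ) :
    HasDerivAt (fun t : ℝ => ε * rexp (-(α * ⟪d + t • w, d + t • w⟫)) - c)
      (ε * rexp (-(α * ⟪d + t • w, d + t • w⟫)) * (-(α * (2 * ⟪d + t • w, w⟫)))) t := by
  have h :=
    (((((hasDerivAt_line d w t).inner ℝ (hasDerivAt_line d w t)).const_mul α).neg.exp).const_mul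
    ε).sub_const c
  refine h.congr_deriv ?_
  rw [real_inner_comm _ w, Pi.neg_apply]
  ring

lemma hasDerivAt_gaussian_second (ε α : ℝ) (d w : E) :
    HasDerivAt (fun t : ℝ => ε * rexp (-(α * ⟪d + t • w, d + t • w⟫)) *
        (-(α * (2 * ⟪d + t • w, w⟫))))
      (ε * rexp (-(α * ‖d‖ ^ 2)) * (4 * α ^ 2 * ⟪d, w⟫ ^ 2 - 2 * α * ‖w‖ ^ 2)) 0 := by
  have h1 := hasDerivAt_gaussian ε α 0 d w 0
  simp only [sub_zero] at h1
  have h2 := ((((hasDerivAt_line d w 0).inner ℝ (hasDerivAt_const (0 : ℝ) w)).const_mul 2).const_mul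
    α).neg
  refine (h1.mul h2).congr_deriv ?_
  simp only [zero_smul, add_zero, inner_zero_right, zero_add, real_inner_self_eq_norm_sq,
    Pi.neg_apply]
  ring

variable {ι : Type*} [Fintype ι] [DecidableEq ι] {b : OrthonormalBasis ι ℝ E} {k : ℕ}
  {G Ψ : E → ℝ} {Ω : Set E} {x p e : E}

/-- The inequality at an interior touching point of the barrier `ε exp(-α|x-p|²) - c`. -/
lemma IsConvexSolution.barrier_inequality (h : IsConvexSolution b k G Ψ Ω) (hk : 1 ≤ k)
    (hk' : k ≤ Fintype.card ι) (hx : x ∈ Ω) (he : ‖e‖ = 1) {ε α c l M m : ℝ}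
    (hm : 0 < m) (hmx : m ≤ ‖x‖) (hl : 0 < l) (hlm : l < m ^ 2)
    (hlη : l = ε * rexp (-(α * ⟪x - p, x - p⟫)) - c)
    (hel : fderiv ℝ (fderiv ℝ G) x e e + ⟪x, e⟫ ^ 2 = l)
    (hmin : ∀ᶠ y in 𝓝 x, ∀ v, 0 ≤ fderiv ℝ (fderiv ℝ G) y v v + ⟪y, v⟫ ^ 2 -
      (ε * rexp (-(α * ⟪y - p, y - p⟫)) - c) * ⟪v, v⟫)
    (hM₁ : ‖fderiv ℝ (sig b k) (fderiv ℝ (fderiv ℝ G) x)‖ ≤ M)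
    (hM₂ : ‖fderiv ℝ (fderiv ℝ (sig b k)) (fderiv ℝ (fderiv ℝ G) x)‖ ≤ M)
    (hMX : ‖fderiv ℝ (fderiv ℝ (fderiv ℝ G)) x‖ ≤ M)
    (hMσ : sig b k (fderiv ℝ (fderiv ℝ G) x) ≤ M) :
    sig b k (fderiv ℝ (fderiv ℝ G) x) * fderiv ℝ (sig b k) (fderiv ℝ (fderiv ℝ G) x)
        ((ε * rexp (-(α * ‖x - p‖ ^ 2))) •
          ((4 * α ^ 2) • tens (x - p) - (2 * α) • innerForm E)) ≤
      12 * M ^ 3 * (‖(ε * rexp (-(α * ‖x - p‖ ^ 2)) * (-(2 * α))) • innerSL ℝ (x - p)‖ + l / m) +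
        4 * l / m ^ 2 * M ^ 2 := by
  have hsm := h.smooth x hx
  have hx0 : x ≠ 0 := norm_pos_iff.1 (hm.trans_le hmx)
  have hAsymm := hsm.second_fderiv_symm two_le_infty
  set A := fderiv ℝ (fderiv ℝ G) with hA
  have hcond := fun w v : E => by
    obtain ⟨h1, h2⟩ := eventually_hasDerivAt_fderiv_line hsm.fderiv_infty.fderiv_infty w
    refine joint_min_conditions (x := x) (e := e) (w := w) (v := v) h1 h2
      (Eventually.of_forall fun t => hasDerivAt_gaussian ε α c (x - p) w t)
      (hasDerivAt_gaussian_second ε α (x - p) w) (by simpa using hAsymm)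
      (by simpa using third_fderiv_symm hsm w) he ?_
    have hc : Tendsto (fun t : ℝ => x + t • w) (𝓝 0) (𝓝 x) := by
      have : ContinuousAt (fun t : ℝ => x + t • w) 0 := by fun_prop
      simpa [ContinuousAt] using this
    filter_upwards [hc.eventually hmin] with t ht
    have he2 : ⟪e, e⟫ = 1 := by rw [real_inner_self_eq_norm_sq, he]; norm_num
    have h3 := ht (e + t • v)
    rw [add_sub_right_comm x] at h3
    refine le_trans (le_of_eq ?_) h3
    simp only [zero_smul, add_zero, he2, mul_one, ← hlη]
    linarith
  simp only [zero_smul, add_zero, real_inner_self_eq_norm_sq] at hcond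
  simp only [← hA] at hcond
  rw [real_inner_self_eq_norm_sq] at hlη
  simp only [← hlη] at hcond
  have hev : ∀ v, A x e v + ⟪x, e⟫ * ⟪x, v⟫ = l * ⟪e, v⟫ := fun v => by
    have h0 := (hcond 0 0).1
    have h1 := (hcond 0 v).1
    simp only [map_zero, zero_apply, inner_zero_left, inner_zero_right] at h0 h1
    linarith
  have hex' : ⟪x, e⟫ = 0 := by
    have h0 := hev x
    rw [hAsymm, h.euler x hx, real_inner_self_eq_norm_sq, real_inner_comm x e, zero_add,
      mul_comm] at h0
    by_contra hne
    have h1 : ‖x‖ ^ 2 = l := mul_right_cancel₀ hne h0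
    have : m ^ 2 ≤ ‖x‖ ^ 2 := by gcongr
    linarith
  have hex : ⟪e, x⟫ = 0 := by rw [real_inner_comm, hex']
  have hAe : ∀ v, A x e v = l * ⟪e, v⟫ := fun v => by simpa [hex'] using hev v
  refine core_estimate b hk hk' he hx0 hex hl hAsymm (h.nonneg x hx) (h.euler x hx) hAe
    (fun v => ?_) (X := fderiv ℝ A x e) (Y := fderiv ℝ (fderiv ℝ A) x e e)
    (third_fderiv_symm hsm e) (fun v => ?_) (fun v => ?_) (fun v w => ?_) (fun v w => ?_)
    (fun w v => ?_) (h.second_order hk hx e) hm hmx hM₁ hM₂ ?_ hMσ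
  · have h1 := hmin.self_of_nhds v
    rw [real_inner_self_eq_norm_sq, real_inner_self_eq_norm_sq, ← hlη] at h1
    linarith
  · exact (h.euler_deriv hx e v).trans (by rw [← hA, hAe])
  · have h1 := (hcond v 0).1
    simp only [map_zero, inner_zero_right, hex'] at h1
    rw [third_fderiv_symm hsm, third_fderiv_symm_left hsm, smul_apply, innerSL_apply_apply,
      smul_eq_mul]
    linarith
  · exact fourth_fderiv_symm_right hsm e e v w
  · simp [real_inner_comm v w, mul_comm]
  · have h1 := (hcond w v).2
    rw [fourth_fderiv_symm hsm, hex', third_fderiv_symm_left hsm] at h1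
    simp only [smul_apply, sub_apply, tens_apply, innerForm_apply, innerSL_apply_apply, smul_eq_mul,
      real_inner_self_eq_norm_sq]
    linarith
  · exact ((fderiv ℝ A x).le_opNorm e).trans (by rw [he, mul_one]; exact hMX)

end Hopf

section HopfLemma

open Filter Topology Metric
open scoped ContDiff

variable {E : Type*} [NormedAddCommGroup E] [InnerProductSpace ℝ E]
  {ι : Type*} [Fintype ι] [DecidableEq ι] {b : OrthonormalBasis ι ℝ E} {k : ℕ}
  {G Ψ : E → ℝ} {Ω : Set E}

lemma continuous_tens : Continuous (tens : E → E →L[ℝ] E →L[ℝ] ℝ) := by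
  have h : Continuous fun w : E =>
      ContinuousLinearMap.smulRightL ℝ E (E →L[ℝ] ℝ) (innerSL ℝ w) (innerSL ℝ w) := by fun_prop
  exact h

lemma abs_apply_le_opNorm {F : Type*} [NormedAddCommGroup F] [NormedSpace ℝ F] (L : F →L[ℝ] ℝ)
    (v : F) : |L v| ≤ ‖L‖ * ‖v‖ :=
  L.le_opNorm v

lemma continuous_norm_fderiv_fderiv {F H : Type*} [NormedAddCommGroup F] [NormedSpace ℝ F]
    [NormedAddCommGroup H] [NormedSpace ℝ H] {f : F → H} (h : ContDiff ℝ ⊤ f) :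
    Continuous fun x => ‖fderiv ℝ (fderiv ℝ f) x‖ :=
  ((h.fderiv_right (m := 1) le_top).continuous_fderiv (by simp)).norm

lemma barrier_scalar_contradiction {P M m R α c l s t σ : ℝ} (hP : 0 < P) (hM : 0 < M) (hm : 0 < m)
    (hα1 : 1 ≤ α)
    (hα : 2 * M ^ 2 + 24 * M ^ 3 * R + 12 * M ^ 3 / m + 4 * M ^ 2 / m ^ 2 < 4 * c * α)
    (hlP : l ≤ P) (hs : c ≤ σ * s) (ht : σ * t ≤ M ^ 2)
    (hkey : σ * (P * (4 * α ^ 2 * s - 2 * α * t)) ≤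
      12 * M ^ 3 * (P * (2 * α) * R + l / m) + 4 * l / m ^ 2 * M ^ 2) : False := by
  have h5 : P * (4 * α ^ 2 * c - 2 * α * M ^ 2) ≤
      P * (12 * M ^ 3 * (2 * α * R + 1 / m) + 4 / m ^ 2 * M ^ 2) := by
    calc _ ≤ P * (4 * α ^ 2 * (σ * s) - 2 * α * (σ * t)) := by gcongr
      _ = _ := by ring
      _ ≤ _ := hkey
      _ ≤ 12 * M ^ 3 * (P * (2 * α) * R + P / m) + 4 * P / m ^ 2 * M ^ 2 := by gcongr
      _ = _ := by ring
  have h6 := le_of_mul_le_mul_left h5 hP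
  have h7 : 12 * M ^ 3 / m + 4 * M ^ 2 / m ^ 2 ≤
      α * (12 * M ^ 3 / m + 4 * M ^ 2 / m ^ 2) := le_mul_of_one_le_left (by positivity) hα1
  have h8 := mul_lt_mul_of_pos_left hα (by linarith : 0 < α)
  have h9 : 12 * M ^ 3 * (2 * α * R + 1 / m) + 4 / m ^ 2 * M ^ 2 =
    α * (24 * M ^ 3 * R) + (12 * M ^ 3 / m + 4 * M ^ 2 / m ^ 2) := by ring
  rw [h9] at h6
  nlinarith

lemma nonneg_form_of_unit {B : E →L[ℝ] E →L[ℝ] ℝ} {x : E} {c : ℝ}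
    (h : ∀ v, ‖v‖ = 1 → 0 ≤ B v v + ⟪x, v⟫ ^ 2 - c) (v : E) :
    0 ≤ B v v + ⟪x, v⟫ ^ 2 - c * ⟪v, v⟫ := by
  rcases eq_or_ne v 0 with rfl | hv
  · simp
  have hv0 : 0 < ‖v‖ := norm_pos_iff.2 hv
  have h1 := h (‖v‖⁻¹ • v) (by rw [norm_smul, norm_inv, norm_norm, inv_mul_cancel₀ hv0.ne'])
  simp only [map_smul, smul_apply, inner_smul_right, smul_eq_mul] at h1
  have h2 : ‖v‖⁻¹ * (‖v‖⁻¹ * B v v) + (‖v‖⁻¹ * ⟪x, v⟫) ^ 2 - c =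
    (B v v + ⟪x, v⟫ ^ 2 - c * ‖v‖ ^ 2) / ‖v‖ ^ 2 := by field_simp
  rw [h2] at h1
  rw [real_inner_self_eq_norm_sq v]
  have h3 := mul_nonneg h1 (sq_nonneg ‖v‖)
  rwa [div_mul_cancel₀ _ (by positivity)] at h3

/-- The comparison of `D²G + x ⊗ x` with the Hopf barrier on an annulus. -/
lemma IsConvexSolution.barrier_nonneg (h : IsConvexSolution b k G Ψ Ω) (hk : 1 ≤ k)
    (hk' : k ≤ Fintype.card ι) {p y w : E} {R M m c α ε : ℝ} (hball : ball p R ⊆ Ω)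
    (hnn : ∀ x ∈ closedBall p R, ∀ v, 0 ≤ fderiv ℝ (fderiv ℝ G) x v v)
    (hBpos : ∀ x ∈ ball p R, ∀ v, v ≠ 0 → 0 < fderiv ℝ (fderiv ℝ G) x v v + ⟪x, v⟫ ^ 2)
    (hm : 0 < m) (hmx : ∀ x ∈ closedBall p R, m ≤ ‖x‖)
    (hcx : ∀ x ∈ {x | R / 2 ≤ dist x p ∧ dist x p ≤ R},
      c ≤ sig b k (fderiv ℝ (fderiv ℝ G) x) *
        fderiv ℝ (sig b k) (fderiv ℝ (fderiv ℝ G) x) (tens (x - p)))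
    (hM₁ : ∀ x ∈ closedBall p R, ‖fderiv ℝ (sig b k) (fderiv ℝ (fderiv ℝ G) x)‖ ≤ M)
    (hM₂ : ∀ x ∈ closedBall p R, ‖fderiv ℝ (fderiv ℝ (sig b k)) (fderiv ℝ (fderiv ℝ G) x)‖ ≤ M)
    (hM₃ : ∀ x ∈ closedBall p R, ‖fderiv ℝ (fderiv ℝ (fderiv ℝ G)) x‖ ≤ M)
    (hM₄ : ∀ x ∈ closedBall p R, sig b k (fderiv ℝ (fderiv ℝ G) x) ≤ M)
    (hpos : ∀ x ∈ closedBall p R, 0 < sig b k (fderiv ℝ (fderiv ℝ G) x)) (hα1 : 1 ≤ α)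
    (hα : 2 * M ^ 2 + 24 * M ^ 3 * R + 12 * M ^ 3 / m + 4 * M ^ 2 / m ^ 2 < 4 * c * α)
    (hε : 0 < ε) (hexp1 : ∀ x : E, ε * rexp (-(α * ⟪x - p, x - p⟫)) ≤ ε) (hεm : ε < m ^ 2)
    (hβx : ∀ x v, dist x p = R / 2 → ‖v‖ = 1 → ε ≤ fderiv ℝ (fderiv ℝ G) x v v + ⟪x, v⟫ ^ 2)
    (hyS : y ∈ {x | R / 2 ≤ dist x p ∧ dist x p ≤ R}) (hw : ‖w‖ = 1)
    (hmin : ∀ x ∈ {x | R / 2 ≤ dist x p ∧ dist x p ≤ R}, ∀ v, ‖v‖ = 1 →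
      fderiv ℝ (fderiv ℝ G) y w w + ⟪y, w⟫ ^ 2 -
        (ε * rexp (-(α * ⟪y - p, y - p⟫)) - ε * rexp (-(α * R ^ 2))) ≤
      fderiv ℝ (fderiv ℝ G) x v v + ⟪x, v⟫ ^ 2 -
        (ε * rexp (-(α * ⟪x - p, x - p⟫)) - ε * rexp (-(α * R ^ 2)))) :
    0 ≤ fderiv ℝ (fderiv ℝ G) y w w + ⟪y, w⟫ ^ 2 -
        (ε * rexp (-(α * ⟪y - p, y - p⟫)) - ε * rexp (-(α * R ^ 2))) := by
  set A := fderiv ℝ (fderiv ℝ G) with hA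
  set S := {x | R / 2 ≤ dist x p ∧ dist x p ≤ R} with hS
  have hSK : S ⊆ closedBall p R := fun x hx => hx.2
  have hyK := hSK hyS
  have hM0 : 0 < M := (hpos y hyK).trans_le (hM₄ y hyK)
  set f₀ := A y w w + ⟪y, w⟫ ^ 2 -
    (ε * rexp (-(α * ⟪y - p, y - p⟫)) - ε * rexp (-(α * R ^ 2))) with hf₀
  by_contra! hneg
  have hyR : dist y p < R := by
    refine lt_of_le_of_ne hyS.2 fun hyR => ?_
    have h1 := hnn y hyK w
    rw [hf₀, real_inner_self_eq_norm_sq, ← dist_eq_norm, hyR] at hneg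
    nlinarith [sq_nonneg ⟪y, w⟫]
  have hyR2 : R / 2 < dist y p := by
    refine lt_of_le_of_ne hyS.1 fun hyR => ?_
    have h1 := hβx y w hyR.symm hw
    have h2 := hexp1 y
    have h3 : 0 < ε * rexp (-(α * R ^ 2)) := by positivity
    linarith
  have hw0 : w ≠ 0 := by rintro rfl; simp at hw
  have hlpos := hBpos y hyR w hw0
  set P := ε * rexp (-(α * ‖y - p‖ ^ 2)) with hP
  have hP0 : 0 < P := by positivity
  have hPe := hexp1 y
  have hR0 : 0 < ε * rexp (-(α * R ^ 2)) := by positivity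
  have hf₀' := hf₀
  rw [real_inner_self_eq_norm_sq, ← hP] at hf₀' hPe
  set l := A y w w + ⟪y, w⟫ ^ 2 with hl
  have hlP : l ≤ P := by linarith
  have hev : ∀ᶠ x in 𝓝 y, ∀ v, 0 ≤ A x v v + ⟪x, v⟫ ^ 2 -
      (ε * rexp (-(α * ⟪x - p, x - p⟫)) - (ε * rexp (-(α * R ^ 2)) - f₀)) * ⟪v, v⟫ := by
    have h1 : ∀ᶠ x in 𝓝 y, R / 2 < dist x p :=
      (by fun_prop : Continuous fun x => dist x p).continuousAt.eventually_const_lt hyR2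
    have h2 : ∀ᶠ x in 𝓝 y, dist x p < R :=
      (by fun_prop : Continuous fun x => dist x p).continuousAt.eventually_lt_const hyR
    filter_upwards [h1, h2] with x hx hx'
    refine nonneg_form_of_unit fun v hv => ?_
    have := hmin x ⟨hx.le, hx'.le⟩ v hv
    linarith
  have hlη : l = ε * rexp (-(α * ⟪y - p, y - p⟫)) - (ε * rexp (-(α * R ^ 2)) - f₀) := by
    rw [real_inner_self_eq_norm_sq, ← hP]; linarith
  have hkey := h.barrier_inequality hk hk' (hball hyR) hw hm (hmx y hyK) hlpos (by linarith) hlη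
    hl.symm hev (hM₁ y hyK) (hM₂ y hyK) (hM₃ y hyK) (hM₄ y hyK)
  rw [← hA, ← hP] at hkey
  have h2 : fderiv ℝ (sig b k) (A y) (innerForm E) ≤ M := by
    have h3 := abs_apply_le_opNorm (fderiv ℝ (sig b k) (A y)) (innerForm E)
    have := mul_le_mul (hM₁ y hyK) (norm_innerForm_le (E := E)) (norm_nonneg _) hM0.le
    linarith [le_abs_self (fderiv ℝ (sig b k) (A y) (innerForm E))]
  have h3 : ‖(P * (-(2 * α))) • innerSL ℝ (y - p)‖ ≤ P * (2 * α) * R := by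
    rw [norm_smul, innerSL_apply_norm, norm_mul, norm_neg, Real.norm_of_nonneg hP0.le,
      Real.norm_of_nonneg (by linarith), ← dist_eq_norm]
    gcongr
  have h4 : sig b k (A y) * fderiv ℝ (sig b k) (A y) (innerForm E) ≤ M ^ 2 := by
    calc _ ≤ sig b k (A y) * M := mul_le_mul_of_nonneg_left h2 (hpos y hyK).le
      _ ≤ M * M := mul_le_mul_of_nonneg_right (hM₄ y hyK) hM0.le
      _ = _ := by ring
  rw [map_smul, map_sub, map_smul, map_smul] at hkey
  simp only [smul_eq_mul] at hkey
  exact barrier_scalar_contradiction hP0 hM0 hm hα1 hα hlP (hcx y hyS) h4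
    (hkey.trans (by gcongr))

/-- Hopf boundary lemma for the degenerate directions of the Hessian of a convex solution. -/
theorem IsConvexSolution.hopf (h : IsConvexSolution b k G Ψ Ω) (hk : 1 ≤ k)
    (hk' : k ≤ Fintype.card ι) {p z e : E} {R : ℝ} (hR : 0 < R) (hball : ball p R ⊆ Ω)
    (hsm : ∀ x ∈ closedBall p R, ContDiffAt ℝ ∞ G x) (h0 : (0 : E) ∉ closedBall p R)
    (hnn : ∀ x ∈ closedBall p R, ∀ v, 0 ≤ fderiv ℝ (fderiv ℝ G) x v v)
    (hpos : ∀ x ∈ closedBall p R, 0 < sig b k (fderiv ℝ (fderiv ℝ G) x))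
    (hdef : ∀ x ∈ ball p R, ∀ v, v ≠ 0 → ⟪x, v⟫ = 0 → 0 < fderiv ℝ (fderiv ℝ G) x v v)
    (hz : dist z p = R) (he : ‖e‖ = 1) (hze : ⟪z, e⟫ = 0)
    (hAe : fderiv ℝ (fderiv ℝ G) z e e = 0) :
    0 < fderiv ℝ (fderiv ℝ (fderiv ℝ G)) z (p - z) e e := by
  have : FiniteDimensional ℝ E := b.toBasis.finiteDimensional_of_finite
  have : ProperSpace E := FiniteDimensional.proper_real E
  set A := fderiv ℝ (fderiv ℝ G) with hA
  have hK : IsCompact (closedBall p R) := isCompact_closedBall p R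
  have hzK : z ∈ closedBall p R := mem_closedBall.2 hz.le
  have hcA : ContinuousOn A (closedBall p R) := fun x hx =>
    (hsm x hx).fderiv_infty.fderiv_infty.continuousAt.continuousWithinAt
  have hcDA : ContinuousOn (fderiv ℝ A) (closedBall p R) := fun x hx =>
    (hsm x hx).fderiv_infty.fderiv_infty.fderiv_infty.continuousAt.continuousWithinAt
  have hσc : Continuous (sig b k) := (contDiff_sig b).continuous
  have hσc₁ : Continuous (fderiv ℝ (sig b k)) := (contDiff_sig b).continuous_fderiv (by simp)
  obtain ⟨M₁, hM₁⟩ := hK.exists_bound_of_continuousOn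
    (f := fun x => fderiv ℝ (sig b k) (A x)) (hσc₁.comp_continuousOn hcA)
  obtain ⟨M₂, hM₂⟩ := hK.exists_bound_of_continuousOn
    ((continuous_norm_fderiv_fderiv (contDiff_sig b)).comp_continuousOn hcA)
  obtain ⟨M₃, hM₃⟩ := hK.exists_bound_of_continuousOn hcDA
  obtain ⟨M₄, hM₄⟩ := hK.exists_bound_of_continuousOn (hσc.comp_continuousOn hcA)
  obtain ⟨M, hM⟩ : ∃ M, M₁ ≤ M ∧ M₂ ≤ M ∧ M₃ ≤ M ∧ M₄ ≤ M :=
    ⟨max (max M₁ M₂) (max M₃ M₄), by simp, by simp, by simp, by simp⟩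
  replace hM₁ : ∀ x ∈ closedBall p R, ‖fderiv ℝ (sig b k) (A x)‖ ≤ M := fun x hx =>
    (hM₁ x hx).trans hM.1
  replace hM₂ : ∀ x ∈ closedBall p R, ‖fderiv ℝ (fderiv ℝ (sig b k)) (A x)‖ ≤ M := fun x hx =>
    ((le_abs_self _).trans (hM₂ x hx)).trans hM.2.1
  replace hM₃ : ∀ x ∈ closedBall p R, ‖fderiv ℝ A x‖ ≤ M := fun x hx => (hM₃ x hx).trans hM.2.2.1
  replace hM₄ : ∀ x ∈ closedBall p R, sig b k (A x) ≤ M := fun x hx =>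
    ((le_abs_self _).trans (hM₄ x hx)).trans hM.2.2.2
  have hM0 : 0 < M := (hpos z hzK).trans_le (hM₄ z hzK)
  obtain ⟨m, hm, hmx⟩ : ∃ m, 0 < m ∧ ∀ x ∈ closedBall p R, m ≤ ‖x‖ := by
    obtain ⟨y, hy, hmin⟩ := hK.exists_isMinOn ⟨z, hzK⟩ continuous_norm.continuousOn
    exact ⟨‖y‖, norm_pos_iff.2 fun h => h0 (h ▸ hy), hmin⟩
  have hann : IsCompact {x | R / 2 ≤ dist x p ∧ dist x p ≤ R} := by
    have : {x | R / 2 ≤ dist x p ∧ dist x p ≤ R} = closedBall p R ∩ {x | R / 2 ≤ dist x p} := by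
      ext x; simp [and_comm]
    rw [this]
    exact hK.inter_right (isClosed_le continuous_const (by fun_prop))
  set S := {x | R / 2 ≤ dist x p ∧ dist x p ≤ R} with hS
  have hSK : S ⊆ closedBall p R := fun x hx => hx.2
  have hzS : z ∈ S := ⟨by rw [hz]; linarith, hz.le⟩
  obtain ⟨c, hc, hcx⟩ : ∃ c, 0 < c ∧ ∀ x ∈ S,
      c ≤ sig b k (A x) * fderiv ℝ (sig b k) (A x) (tens (x - p)) := by
    have hcont : ContinuousOn
        (fun x => sig b k (A x) * fderiv ℝ (sig b k) (A x) (tens (x - p))) S :=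
      ((hσc.comp_continuousOn hcA).mono hSK).mul
        (((hσc₁.comp_continuousOn hcA).mono hSK).clm_apply
          (continuous_tens.comp (by fun_prop : Continuous fun x => x - p)).continuousOn)
    obtain ⟨y, hy, hmin⟩ := hann.exists_isMinOn ⟨z, hzS⟩ hcont
    refine ⟨_, ?_, hmin⟩
    refine mul_pos (hpos y (hSK hy)) (fderiv_sig_tens_pos b hk hk'
      ((hsm y (hSK hy)).second_fderiv_symm two_le_infty) (hnn y (hSK hy)) (hpos y (hSK hy)) ?_)
    intro hyp
    have := hy.1
    rw [sub_eq_zero.1 hyp, dist_self] at this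
    linarith
  have hBpos : ∀ x ∈ ball p R, ∀ v, v ≠ 0 → 0 < A x v v + ⟪x, v⟫ ^ 2 := fun x hx v hv => by
    by_cases hxv : ⟪x, v⟫ = 0
    · rw [hxv]; simpa using hdef x hx v hv hxv
    · have := hnn x (ball_subset_closedBall hx) v
      positivity
  have hBcont : ContinuousOn (fun q : E × E => A q.1 q.2 q.2 + ⟪q.1, q.2⟫ ^ 2)
      (closedBall p R ×ˢ univ) := by
    have h1 : ContinuousOn (fun q : E × E => A q.1) (closedBall p R ×ˢ univ) :=
      hcA.comp continuousOn_fst fun q hq => hq.1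
    exact ((h1.clm_apply continuousOn_snd).clm_apply continuousOn_snd).add
      (by fun_prop)
  obtain ⟨β, hβ, hβx⟩ : ∃ β, 0 < β ∧ ∀ x v, dist x p = R / 2 → ‖v‖ = 1 →
      β ≤ A x v v + ⟪x, v⟫ ^ 2 := by
    have hcomp : IsCompact (sphere p (R / 2) ×ˢ sphere (0 : E) 1) :=
      (isCompact_sphere _ _).prod (isCompact_sphere _ _)
    have hne : (sphere p (R / 2) ×ˢ sphere (0 : E) 1).Nonempty := by
      refine ⟨(p + (1 / 2 : ℝ) • (z - p), e), ?_, by simpa using he⟩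
      rw [mem_sphere, dist_eq_norm, add_sub_cancel_left, norm_smul, ← dist_eq_norm, hz]
      norm_num; ring
    have hsub : sphere p (R / 2) ⊆ ball p R := fun x hx => by
      rw [mem_sphere] at hx; rw [mem_ball, hx]; linarith
    obtain ⟨⟨y, w⟩, hy, hmin⟩ := hcomp.exists_isMinOn hne (hBcont.mono fun q hq =>
      ⟨ball_subset_closedBall (hsub hq.1), mem_univ _⟩)
    refine ⟨_, hBpos y (hsub hy.1) w ?_, fun x v hx hv =>
      hmin (a := (x, v)) ⟨hx, by simpa using hv⟩⟩
    rintro rfl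
    simpa using hy.2
  obtain ⟨α, hα1, hα⟩ : ∃ α : ℝ, 1 ≤ α ∧
      2 * M ^ 2 + 24 * M ^ 3 * R + 12 * M ^ 3 / m + 4 * M ^ 2 / m ^ 2 < 4 * c * α := by
    refine ⟨max 1 ((2 * M ^ 2 + 24 * M ^ 3 * R + 12 * M ^ 3 / m + 4 * M ^ 2 / m ^ 2 + 1) / (4 * c)),
      le_max_left _ _, ?_⟩
    have h1 := le_max_right 1
      ((2 * M ^ 2 + 24 * M ^ 3 * R + 12 * M ^ 3 / m + 4 * M ^ 2 / m ^ 2 + 1) / (4 * c))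
    rw [div_le_iff₀ (by positivity)] at h1
    linarith
  obtain ⟨ε, hε, hεβ, hεm⟩ : ∃ ε : ℝ, 0 < ε ∧ ε ≤ β ∧ ε < m ^ 2 :=
    ⟨min β (m ^ 2 / 2), lt_min hβ (by positivity), min_le_left _ _,
      (min_le_right _ _).trans_lt (by nlinarith [pow_pos hm 2])⟩
  have hexp1 : ∀ x : E, ε * rexp (-(α * ⟪x - p, x - p⟫)) ≤ ε := fun x => by
    have h1 : rexp (-(α * ⟪x - p, x - p⟫)) ≤ 1 := exp_le_one_iff.2 (by
      have := real_inner_self_nonneg (x := x - p)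
      nlinarith)
    nlinarith
  have hbarrier : ∀ x ∈ S, ∀ v, ‖v‖ = 1 →
      0 ≤ A x v v + ⟪x, v⟫ ^ 2 - (ε * rexp (-(α * ⟪x - p, x - p⟫)) - ε * rexp (-(α * R ^ 2))) := by
    have hcont : ContinuousOn (fun q : E × E => A q.1 q.2 q.2 + ⟪q.1, q.2⟫ ^ 2 -
        (ε * rexp (-(α * ⟪q.1 - p, q.1 - p⟫)) - ε * rexp (-(α * R ^ 2)))) (S ×ˢ sphere 0 1) :=
      (hBcont.mono fun q hq => ⟨hSK hq.1, mem_univ _⟩).sub (by fun_prop)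
    obtain ⟨⟨y, w⟩, hy, hmin⟩ := (hann.prod (isCompact_sphere (0 : E) 1)).exists_isMinOn
      ⟨(z, e), hzS, by simpa using he⟩ hcont
    have hw : ‖w‖ = 1 := by simpa using hy.2
    replace hmin := fun (x : E) (hx : x ∈ S) (v : E) (hv : ‖v‖ = 1) =>
      hmin (a := (x, v)) ⟨hx, by simpa using hv⟩
    dsimp only [mem_ofPred_eq] at hmin
    intro x hx v hv
    exact (h.barrier_nonneg hk hk' hball hnn hBpos hm hmx hcx hM₁ hM₂ hM₃ hM₄ hpos hα1 hα
      hε hexp1 hεm (fun x v hx hv => hεβ.trans (hβx x v hx hv)) hy.1 hw hmin).trans (hmin x hx v hv)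
  obtain ⟨hd, -⟩ := eventually_hasDerivAt_fderiv_line (hsm z hzK).fderiv_infty.fderiv_infty (p - z)
  have hd0 := hd.self_of_nhds
  have hce := hasDerivAt_const (0 : ℝ) e
  have hder := (((hd0.clm_apply hce).clm_apply hce).add
    (((hasDerivAt_line z (p - z) 0).inner ℝ hce).pow 2)).sub
    (hasDerivAt_gaussian ε α (ε * rexp (-(α * R ^ 2))) (z - p) (p - z) 0)
  have hdn := nonneg_deriv_of_eventually_le hder (by
    have hev : ∀ᶠ t : ℝ in 𝓝[>] 0, t ≤ 1 / 2 :=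
      nhdsWithin_le_nhds (eventually_le_nhds (by norm_num))
    filter_upwards [hev, self_mem_nhdsWithin] with t ht ht0
    have ht0' : 0 < t := ht0
    have hdist : dist (z + t • (p - z)) p = (1 - t) * R := by
      rw [dist_eq_norm, show z + t • (p - z) - p = (1 - t) • (z - p) by module, norm_smul,
        ← dist_eq_norm z p, hz, Real.norm_of_nonneg (by linarith)]
    have h1 := hbarrier (z + t • (p - z)) ⟨by rw [hdist]; nlinarith, by rw [hdist]; nlinarith⟩ e he
    rw [add_sub_right_comm z] at h1
    refine le_trans (le_of_eq ?_) h1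
    simp only [Pi.add_apply, Pi.sub_apply, Pi.pow_apply, zero_smul, add_zero, hze,
      real_inner_self_eq_norm_sq, ← dist_eq_norm, hz]
    rw [← hA, hAe]; ring)
  simp only [zero_smul, add_zero, hze, map_zero, real_inner_self_eq_norm_sq,
    ← dist_eq_norm, hz] at hdn
  have hin : ⟪z - p, p - z⟫ = -R ^ 2 := by
    rw [← neg_sub z p, inner_neg_right, real_inner_self_eq_norm_sq, ← dist_eq_norm, hz]
  rw [hin] at hdn
  have hfin : 0 < ε * rexp (-(α * R ^ 2)) * (α * (2 * R ^ 2)) := by positivity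
  simp at hdn
  simp only [map_sub, sub_apply]
  linarith

end HopfLemma

section Cones

open Filter Topology Metric
open scoped ContDiff

variable {E : Type*} [NormedAddCommGroup E] [InnerProductSpace ℝ E] {N : E} {c : ℝ}
  {F : Type*} [NormedAddCommGroup F] [NormedSpace ℝ F] {x : E}

/-- The open circular cone with axis `N` and aperture cosine `c`. -/
def openCone (N : E) (c : ℝ) : Set E := {x | c * ‖x‖ < ⟪N, x⟫}

/-- The closed circular cone with axis `N` and aperture cosine `c`, without its apex. -/
def closedCone (N : E) (c : ℝ) : Set E := {x | x ≠ 0 ∧ c * ‖x‖ ≤ ⟪N, x⟫}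

lemma isOpen_openCone : IsOpen (openCone N c) :=
  isOpen_lt (by fun_prop) (by fun_prop)

lemma openCone_subset : openCone N c ⊆ closedCone N c := fun x hx =>
  ⟨by rintro rfl; simp [openCone] at hx, le_of_lt hx⟩

lemma smul_mem_closedCone (hx : x ∈ closedCone N c) {l : ℝ} (hl : 0 < l) :
    l • x ∈ closedCone N c := by
  refine ⟨smul_ne_zero hl.ne' hx.1, ?_⟩
  rw [norm_smul, Real.norm_of_nonneg hl.le, inner_smul_right]
  nlinarith [hx.2]

lemma add_smul_mem_openCone (hN : ‖N‖ = 1) (hc0 : 0 ≤ c) (hc : c < 1) (hx : x ∈ closedCone N c)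
    {t : ℝ} (ht : 0 < t) : x + t • N ∈ openCone N c := by
  change c * ‖x + t • N‖ < ⟪N, x + t • N⟫
  have h1 := norm_add_le x (t • N)
  rw [norm_smul, Real.norm_of_nonneg ht.le, hN, mul_one] at h1
  rw [inner_add_right, inner_smul_right, real_inner_self_eq_norm_sq, hN]
  nlinarith [hx.2]

lemma convex_openCone (hc0 : 0 ≤ c) : Convex ℝ (openCone N c) := by
  intro x hx y hy a b' ha hb hab
  have hx' : c * ‖x‖ < ⟪N, x⟫ := hx
  have hy' : c * ‖y‖ < ⟪N, y⟫ := hy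
  change c * ‖a • x + b' • y‖ < ⟪N, a • x + b' • y⟫
  have h1 := norm_add_le (a • x) (b' • y)
  rw [norm_smul, Real.norm_of_nonneg ha, norm_smul, Real.norm_of_nonneg hb] at h1
  rw [inner_add_right, inner_smul_right, inner_smul_right]
  have h2 : a * (c * ‖x‖) + b' * (c * ‖y‖) < a * ⟪N, x⟫ + b' * ⟪N, y⟫ := by
    rcases ha.eq_or_lt with rfl | ha
    · have : b' = 1 := by linarith
      subst this; linarith
    · nlinarith
  nlinarith

lemma tendsto_add_smul (x w : E) : Tendsto (fun t : ℝ => x + t • w) (𝓝[>] 0) (𝓝 x) := by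
  have h : Tendsto (fun t : ℝ => x + t • w) (𝓝 0) (𝓝 (x + (0 : ℝ) • w)) :=
    (by fun_prop : Continuous fun t : ℝ => x + t • w).tendsto 0
  rw [zero_smul, add_zero] at h
  exact h.mono_left nhdsWithin_le_nhds

lemma eventually_add_smul_mem_openCone (hN : ‖N‖ = 1) (hc0 : 0 ≤ c) (hc : c < 1)
    (hx : x ∈ closedCone N c) : ∀ᶠ t : ℝ in 𝓝[>] 0, x + t • N ∈ openCone N c :=
  eventually_nhdsWithin_of_forall fun _ ht => add_smul_mem_openCone hN hc0 hc hx ht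

lemma eq_of_eqOn_openCone {X : Type*} [TopologicalSpace X] [T2Space X] {f g : E → X}
    (hN : ‖N‖ = 1) (hc0 : 0 ≤ c) (hc : c < 1) (h : EqOn f g (openCone N c))
    (hx : x ∈ closedCone N c) (hf : ContinuousAt f x) (hg : ContinuousAt g x) : f x = g x := by
  have h1 := (hf.tendsto.comp (tendsto_add_smul x N))
  have h2 := (hg.tendsto.comp (tendsto_add_smul x N))
  refine tendsto_nhds_unique (h1.congr' ?_) h2
  filter_upwards [eventually_add_smul_mem_openCone hN hc0 hc hx] with t ht using h ht

lemma fderiv_smul_of_homogeneous {f : E → F} {Ω : Set E} (hΩ : IsOpen Ω) {a l : ℝ}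
    (h : ∀ y ∈ Ω, f (l • y) = a • f y) (hx : x ∈ Ω) (hf : DifferentiableAt ℝ f x) :
    l • fderiv ℝ f (l • x) = a • fderiv ℝ f x := by
  rw [← fderiv_comp_smul, ← fderiv_fun_const_smul hf]
  refine Filter.EventuallyEq.fderiv_eq ?_
  filter_upwards [hΩ.mem_nhds hx] with y hy using h y hy

/-- A smooth function on a circular cone which is positively homogeneous of degree one. -/
structure IsConical (N : E) (c : ℝ) (f : E → ℝ) : Prop where
  smooth : ∀ x ∈ closedCone N c, ContDiffAt ℝ ∞ f x
  hom : ∀ x ∈ closedCone N c, ∀ l : ℝ, 0 < l → f (l • x) = l * f x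

variable {f : E → ℝ}

lemma IsConical.fderiv_smul (h : IsConical N c f) (hN : ‖N‖ = 1) (hc0 : 0 ≤ c) (hc : c < 1)
    (hx : x ∈ closedCone N c) {l : ℝ} (hl : 0 < l) : fderiv ℝ f (l • x) = fderiv ℝ f x := by
  refine eq_of_eqOn_openCone (f := fun y => fderiv ℝ f (l • y)) hN hc0 hc (fun y hy => ?_) hx ?_
    (h.smooth x hx).fderiv_infty.continuousAt
  · have := fderiv_smul_of_homogeneous isOpen_openCone
      (fun z hz => h.hom z (openCone_subset hz) l hl) hy
      ((h.smooth y (openCone_subset hy)).differentiableAt (by simp))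
    exact smul_right_injective _ hl.ne' this
  · exact (h.smooth _ (smul_mem_closedCone hx hl)).fderiv_infty.continuousAt.comp
      (f := fun y => l • y) (by fun_prop)

lemma IsConical.hessian_smul (h : IsConical N c f) (hN : ‖N‖ = 1) (hc0 : 0 ≤ c) (hc : c < 1)
    (hx : x ∈ closedCone N c) {l : ℝ} (hl : 0 < l) :
    fderiv ℝ (fderiv ℝ f) (l • x) = l⁻¹ • fderiv ℝ (fderiv ℝ f) x := by
  refine eq_of_eqOn_openCone (f := fun y => fderiv ℝ (fderiv ℝ f) (l • y))
    (g := l⁻¹ • fderiv ℝ (fderiv ℝ f)) hN hc0 hc (fun y hy => ?_) hx ?_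
    ((h.smooth x hx).fderiv_infty.fderiv_infty.continuousAt.const_smul _)
  · have := fderiv_smul_of_homogeneous (a := 1) isOpen_openCone
      (fun z hz => (h.fderiv_smul hN hc0 hc (openCone_subset hz) hl).trans (one_smul ℝ _).symm) hy
      ((h.smooth y (openCone_subset hy)).fderiv_infty.differentiableAt (by simp))
    rw [one_smul] at this
    simp only [Pi.smul_apply, ← this, smul_smul, inv_mul_cancel₀ hl.ne', one_smul]
  · exact (h.smooth _ (smul_mem_closedCone hx hl)).fderiv_infty.fderiv_infty.continuousAt.comp
      (f := fun y => l • y) (by fun_prop)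

lemma IsConical.hessian_self (h : IsConical N c f) (hN : ‖N‖ = 1) (hc0 : 0 ≤ c) (hc : c < 1)
    (hx : x ∈ closedCone N c) (v : E) : fderiv ℝ (fderiv ℝ f) x x v = 0 := by
  have h1 := (eventually_hasDerivAt_fderiv_line (h.smooth x hx).fderiv_infty x).1.self_of_nhds
  rw [zero_smul, add_zero] at h1
  have h2 : HasDerivAt (fun t : ℝ => fderiv ℝ f (x + t • x)) 0 0 := by
    refine (hasDerivAt_const (0 : ℝ) (fderiv ℝ f x)).congr_of_eventuallyEq ?_
    filter_upwards [eventually_gt_nhds (show (-1 : ℝ) < 0 by norm_num)] with t ht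
    rw [← h.fderiv_smul hN hc0 hc hx (show 0 < 1 + t by linarith), add_smul, one_smul]
  rw [h1.unique h2, zero_apply]

lemma IsConical.hessian_symm (h : IsConical N c f) (hx : x ∈ closedCone N c) (v w : E) :
    fderiv ℝ (fderiv ℝ f) x v w = fderiv ℝ (fderiv ℝ f) x w v :=
  (h.smooth x hx).second_fderiv_symm two_le_infty v w

end Cones

section BoundaryPoint

open Filter Topology Metric
open scoped ContDiff

variable {E : Type*} [NormedAddCommGroup E] [InnerProductSpace ℝ E]
  {ι : Type*} [Fintype ι] [DecidableEq ι] {b : OrthonormalBasis ι ℝ E} {k : ℕ}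
  {G Ψ : E → ℝ} {N x z e : E} {c : ℝ}

lemma eq_zero_of_nonneg_form {A : E →L[ℝ] E →L[ℝ] ℝ} (hAs : ∀ v w, A v w = A w v)
    (hA : ∀ v, 0 ≤ A v v) (he : A e e = 0) (v : E) : A e v = 0 := by
  by_contra hm
  have h := hA (v + (-(A v v + 1) / (2 * A e v)) • e)
  simp only [map_add, map_smul, add_apply, smul_apply, smul_eq_mul, he, hAs v e] at h
  have h2 : -(A v v + 1) / (2 * A e v) * A e v = -(A v v + 1) / 2 := by field_simp
  rw [h2] at h
  linarith

/-- A symmetric form which is positive on a unit null direction `u` of `A` and vanishes on the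
orthogonal complement of `u` increases `sig b k` to first order at `A`. -/
lemma fderiv_sig_pos_of_null (hk : 1 ≤ k) (hk' : k ≤ Fintype.card ι) {A T : E →L[ℝ] E →L[ℝ] ℝ}
    (hAs : ∀ v w, A v w = A w v) (hA : ∀ v, 0 ≤ A v v) (hpos : 0 < sig b k A) {u : E}
    (hu : ‖u‖ = 1) (hAu : A u u = 0)
    (hT : ∀ v w, ⟪u, v⟫ = 0 → ⟪u, w⟫ = 0 → T v w = 0) (hTu : 0 < T u u) :
    0 < fderiv ℝ (sig b k) A T := by
  have huu : ⟪u, u⟫ = 1 := by rw [real_inner_self_eq_norm_sq, hu, one_pow]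
  have hAu' : ∀ v, A u v = 0 := eq_zero_of_nonneg_form hAs hA hAu
  set R : E →L[ℝ] E := ContinuousLinearMap.id ℝ E - (2 : ℝ) • (innerSL ℝ u).smulRight u with hR
  have hRv : ∀ v, R v = v - (2 * ⟪u, v⟫) • u := fun v => by simp [hR, smul_smul]
  have hRi : ∀ v w, ⟪R v, R w⟫ = ⟪v, w⟫ := fun v w => by
    simp only [hRv, inner_sub_left, inner_sub_right, inner_smul_left, inner_smul_right, huu,
      real_inner_comm u v, RCLike.conj_to_real]
    ring
  have hRA : A.bilinearComp R R = A := by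
    ext v w
    simp [hRv, hAu', hAs _ u]
  have hsum : T + T.bilinearComp R R = (2 * T u u) • tens u := by
    ext v w
    have h1 := hT (v - ⟪u, v⟫ • u) (w - ⟪u, w⟫ • u)
      (by rw [inner_sub_right, inner_smul_right, huu]; ring)
      (by rw [inner_sub_right, inner_smul_right, huu]; ring)
    simp only [map_sub, map_smul, sub_apply, smul_apply, smul_eq_mul] at h1
    simp only [add_apply, ContinuousLinearMap.bilinearComp_apply, hRv, smul_apply, tens_apply,
      map_sub, map_smul, sub_apply, smul_eq_mul]
    linarith
  have h1 := fderiv_sig_bilinearComp b hk' hRi hRA T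
  have h2 := congrArg (fderiv ℝ (sig b k) A) hsum
  rw [map_add, h1, map_smul, smul_eq_mul] at h2
  have h3 := mul_pos (mul_pos two_pos hTu) (fderiv_sig_tens_pos b hk hk' hAs hA hpos
    (w := u) (by rintro rfl; simp at hu))
  linarith

lemma IsConical.third_self (h : IsConical N c G) (hN : ‖N‖ = 1) (hc0 : 0 ≤ c) (hc : c < 1)
    (hx : x ∈ closedCone N c) (v w : E) :
    fderiv ℝ (fderiv ℝ (fderiv ℝ G)) x x v w = -fderiv ℝ (fderiv ℝ G) x v w := by
  have h1 := (eventually_hasDerivAt_fderiv_line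
    (h.smooth x hx).fderiv_infty.fderiv_infty x).1.self_of_nhds
  rw [zero_smul, add_zero] at h1
  have h2 : HasDerivAt (fun t : ℝ => fderiv ℝ (fderiv ℝ G) (x + t • x))
      (-fderiv ℝ (fderiv ℝ G) x) 0 := by
    have h3 : HasDerivAt (fun t : ℝ => (1 + t)⁻¹ • fderiv ℝ (fderiv ℝ G) x)
        (-fderiv ℝ (fderiv ℝ G) x) 0 := by
      have := (((hasDerivAt_id (0 : ℝ)).const_add 1).inv (by simp)).smul_const
        (fderiv ℝ (fderiv ℝ G) x)
      simpa using this
    refine h3.congr_of_eventuallyEq ?_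
    filter_upwards [eventually_gt_nhds (show (-1 : ℝ) < 0 by norm_num)] with t ht
    rw [← h.hessian_smul hN hc0 hc hx (show 0 < 1 + t by linarith), add_smul, one_smul]
  rw [h1.unique h2]
  rfl

/-- Second-order consequences of a homogeneous Neumann condition along a circle of latitude. -/
lemma IsConical.neumann_tangential (h : IsConical N c G) (hN : ‖N‖ = 1)
    (hneu : ∀ y ∈ closedCone N c, ⟪N, y⟫ = c * ‖y‖ → fderiv ℝ G y N = 0)
    (hz : ‖z‖ = 1) (hNz : ⟪N, z⟫ = c) {τ : E} (hτN : ⟪N, τ⟫ = 0) (hτz : ⟪z, τ⟫ = 0)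
    (hτ : ‖τ‖ ^ 2 = 1 - c ^ 2) :
    fderiv ℝ (fderiv ℝ G) z τ N = 0 ∧
      fderiv ℝ (fderiv ℝ (fderiv ℝ G)) z τ τ N = fderiv ℝ (fderiv ℝ G) z (z - c • N) N := by
  set γ : ℝ → E := fun t => c • N + Real.cos t • (z - c • N) + Real.sin t • τ with hγ
  set γ' : ℝ → E := fun t => -Real.sin t • (z - c • N) + Real.cos t • τ with hγ'
  have hd : ∀ t, HasDerivAt γ (γ' t) t := fun t => by
    exact (((Real.hasDerivAt_cos t).smul_const (z - c • N)).const_add (c • N)).add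
      ((Real.hasDerivAt_sin t).smul_const τ)
  have hd' : HasDerivAt γ' (-(z - c • N)) 0 := by
    have := ((Real.hasDerivAt_sin 0).neg.smul_const (z - c • N)).add
      ((Real.hasDerivAt_cos 0).smul_const τ)
    exact this.congr_deriv (by simp)
  have hNN : ⟪N, N⟫ = 1 := by rw [real_inner_self_eq_norm_sq, hN, one_pow]
  have hzz : ⟪z, z⟫ = 1 := by rw [real_inner_self_eq_norm_sq, hz, one_pow]
  have hγN : ∀ t, ⟪N, γ t⟫ = c := fun t => by
    simp only [hγ, inner_add_right, inner_sub_right, inner_smul_right, hNN, hNz, hτN]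
    ring
  have hγ1 : ∀ t, ‖γ t‖ = 1 := fun t => by
    have h1 : ‖γ t‖ ^ 2 = 1 := by
      rw [← real_inner_self_eq_norm_sq]
      simp only [hγ, inner_add_right, inner_add_left, inner_sub_right, inner_sub_left,
        inner_smul_right, inner_smul_left, hNN, hzz, hNz, hτN, hτz, real_inner_comm N z,
        real_inner_comm N τ, real_inner_comm z τ, real_inner_self_eq_norm_sq τ, hτ,
        RCLike.conj_to_real]
      linear_combination (1 - c ^ 2) * Real.sin_sq_add_cos_sq t
    exact (pow_eq_one_iff_of_nonneg (norm_nonneg _) two_ne_zero).1 h1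
  have hmem : ∀ t, γ t ∈ closedCone N c := fun t =>
    ⟨fun h0 => by simpa [h0] using hγ1 t, by rw [hγN, hγ1, mul_one]⟩
  have hF : (fun t => fderiv ℝ G (γ t) N) = fun _ => 0 := by
    funext t
    exact hneu _ (hmem t) (by rw [hγN, hγ1, mul_one])
  have hF' : ∀ t, fderiv ℝ (fderiv ℝ G) (γ t) (γ' t) N = 0 := fun t => by
    have h1 := (((h.smooth _ (hmem t)).fderiv_infty.differentiableAt
      (by simp)).hasFDerivAt.comp_hasDerivAt t (hd t)).clm_apply (hasDerivAt_const t N)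
    have h2 : HasDerivAt (fun t => fderiv ℝ G (γ t) N) 0 t := by
      rw [hF]; exact hasDerivAt_const _ _
    have h3 := h1.unique h2
    simpa using h3
  have hγ0 : γ 0 = z := by simp [hγ]
  have hγ'0 : γ' 0 = τ := by simp [hγ']
  refine ⟨by simpa [hγ0, hγ'0] using hF' 0, ?_⟩
  have h1 := ((((h.smooth _ (hmem 0)).fderiv_infty.fderiv_infty.differentiableAt
    (by simp)).hasFDerivAt.comp_hasDerivAt 0 (hd 0)).clm_apply hd').clm_apply
      (hasDerivAt_const (0 : ℝ) N)
  have h2 : HasDerivAt (fun t => fderiv ℝ (fderiv ℝ G) (γ t) (γ' t) N) 0 0 := by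
    rw [show (fun t => fderiv ℝ (fderiv ℝ G) (γ t) (γ' t) N) = fun _ => 0 from funext hF']
    exact hasDerivAt_const _ _
  have h3 := h1.unique h2
  simp only [hγ0, hγ'0, add_apply, map_neg, neg_apply, map_zero, add_zero,
    Function.comp_apply] at h3
  linarith

end BoundaryPoint

section ConeDichotomy

open Filter Topology Metric
open scoped ContDiff

variable {E : Type*} [NormedAddCommGroup E] [InnerProductSpace ℝ E]
  {ι : Type*} [Fintype ι] [DecidableEq ι] {b : OrthonormalBasis ι ℝ E} {k : ℕ}
  {G Ψ : E → ℝ} {N x z e : E} {c : ℝ}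

/-- A conical convex solution of the Hessian equation with homogeneous Neumann condition. -/
structure IsConeSolution (b : OrthonormalBasis ι ℝ E) (k : ℕ) (N : E) (c : ℝ) (G Ψ : E → ℝ) :
    Prop where
  norm_axis : ‖N‖ = 1
  nonneg_cos : 0 ≤ c
  cos_lt_one : c < 1
  conical : IsConical N c G
  conical_rhs : IsConical N c Ψ
  nonneg : ∀ x ∈ closedCone N c, ∀ v, 0 ≤ fderiv ℝ (fderiv ℝ G) x v v
  pos : ∀ x ∈ closedCone N c, 0 < Ψ x
  convex_rhs : ∀ x ∈ closedCone N c, ∀ v, 0 ≤ fderiv ℝ (fderiv ℝ Ψ) x v v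
  eqn : ∀ x ∈ closedCone N c, sig b k (fderiv ℝ (fderiv ℝ G) x) * Ψ x ^ k = 1
  neumann : ∀ x ∈ closedCone N c, ⟪N, x⟫ = c * ‖x‖ → fderiv ℝ G x N = 0
  robin : ∀ x ∈ closedCone N c, ⟪N, x⟫ = c * ‖x‖ → 0 ≤ fderiv ℝ Ψ x N

/-- The Hessian of `G` at `x` has full rank on the orthogonal complement of `x`. -/
def HasFullRank (G : E → ℝ) (x : E) : Prop :=
  ∀ v, ‖v‖ = 1 → 0 < fderiv ℝ (fderiv ℝ G) x v v + ⟪x, v⟫ ^ 2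

lemma HasFullRank.pos (h : HasFullRank G x) {v : E} (hv : v ≠ 0) (hxv : ⟪x, v⟫ = 0) :
    0 < fderiv ℝ (fderiv ℝ G) x v v := by
  have hv0 : 0 < ‖v‖ := norm_pos_iff.2 hv
  have h1 := h (‖v‖⁻¹ • v) (by rw [norm_smul, norm_inv, norm_norm, inv_mul_cancel₀ hv0.ne'])
  simp only [map_smul, smul_apply, inner_smul_right, smul_eq_mul, hxv] at h1
  rw [mul_zero, zero_pow two_ne_zero, add_zero, ← mul_assoc] at h1
  exact pos_of_mul_pos_right h1 (by positivity)

lemma exists_null_of_not_hasFullRank (hnn : ∀ v, 0 ≤ fderiv ℝ (fderiv ℝ G) x v v)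
    (h : ¬HasFullRank G x) : ∃ v, ‖v‖ = 1 ∧ ⟪x, v⟫ = 0 ∧ fderiv ℝ (fderiv ℝ G) x v v = 0 := by
  simp only [HasFullRank, not_forall, not_lt] at h
  obtain ⟨v, hv, h⟩ := h
  have h1 := hnn v
  have h2 := sq_nonneg ⟪x, v⟫
  exact ⟨v, hv, pow_eq_zero_iff two_ne_zero |>.1 (by linarith), by linarith⟩

lemma HasFullRank.eventually [FiniteDimensional ℝ E] (hG : ContDiffAt ℝ ∞ G x)
    (h : HasFullRank G x) : ∀ᶠ y in 𝓝 x, HasFullRank G y := by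
  have : ProperSpace E := FiniteDimensional.proper_real E
  have h1 := (isCompact_sphere (0 : E) 1).eventually_forall_of_forall_eventually (x₀ := x)
    (P := fun y v => 0 < fderiv ℝ (fderiv ℝ G) y v v + ⟪y, v⟫ ^ 2) fun v hv => by
      have hc : ContinuousAt (fun q : E × E => fderiv ℝ (fderiv ℝ G) q.1) (x, v) :=
        ContinuousAt.comp (g := fderiv ℝ (fderiv ℝ G)) (f := Prod.fst)
          hG.fderiv_infty.fderiv_infty.continuousAt continuousAt_fst
      have hc' : ContinuousAt (fun q : E × E => fderiv ℝ (fderiv ℝ G) q.1 q.2 q.2 +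
          ⟪q.1, q.2⟫ ^ 2) (x, v) :=
        ((hc.clm_apply continuousAt_snd).clm_apply continuousAt_snd).add (by fun_prop)
      exact hc'.eventually_const_lt (h v (by simpa using hv))
  filter_upwards [h1] with y hy v hv using hy v (by simpa using hv)

lemma mul_norm_le_inner_of_dist_le (hN : ‖N‖ = 1) (h : ‖x - N‖ ^ 2 ≤ 1 - c ^ 2) :
    c * ‖x‖ ≤ ⟪N, x⟫ := by
  rw [norm_sub_sq_real, hN, real_inner_comm] at h
  nlinarith [sq_nonneg (‖x‖ - c)]

lemma mul_norm_lt_inner_of_dist_lt (hN : ‖N‖ = 1) (h : ‖x - N‖ ^ 2 < 1 - c ^ 2) :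
    c * ‖x‖ < ⟪N, x⟫ := by
  rw [norm_sub_sq_real, hN, real_inner_comm] at h
  nlinarith [sq_nonneg (‖x‖ - c)]

namespace IsConeSolution

lemma toConvexSolution (h : IsConeSolution b k N c G Ψ) :
    IsConvexSolution b k G Ψ (openCone N c) where
  isOpen := isOpen_openCone
  smooth x hx := h.conical.smooth x (openCone_subset hx)
  smooth_rhs x hx := h.conical_rhs.smooth x (openCone_subset hx)
  euler _ hx := h.conical.hessian_self h.norm_axis h.nonneg_cos h.cos_lt_one (openCone_subset hx)
  nonneg x hx := h.nonneg x (openCone_subset hx)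
  pos x hx := h.pos x (openCone_subset hx)
  convex_rhs x hx := h.convex_rhs x (openCone_subset hx)
  eqn x hx := h.eqn x (openCone_subset hx)

lemma sig_pos (h : IsConeSolution b k N c G Ψ) (hx : x ∈ closedCone N c) :
    0 < sig b k (fderiv ℝ (fderiv ℝ G) x) := by
  have h1 := pow_pos (h.pos x hx) k
  have h2 := h.eqn x hx
  by_contra! h3
  nlinarith

lemma hasFullRank_of_mem_closure (h : IsConeSolution b k N c G Ψ) (hk : 1 ≤ k)
    (hk' : k ≤ Fintype.card ι)
    (hx : x ∈ closure {y ∈ openCone N c | HasFullRank G y}) (hxc : x ∈ openCone N c) :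
    HasFullRank G x := by
  have : FiniteDimensional ℝ E := b.toBasis.finiteDimensional_of_finite
  have : ProperSpace E := FiniteDimensional.proper_real E
  by_contra hxd
  obtain ⟨r, hr, hball⟩ := Metric.isOpen_iff.1 isOpen_openCone x hxc
  obtain ⟨p, ⟨hp, hpr⟩, hxp⟩ := Metric.mem_closure_iff.1 hx (r / 2) (by positivity)
  have hsub : closedBall p (dist x p) ⊆ openCone N c := fun y hy => hball (by
    rw [mem_ball]
    have := dist_triangle y p x
    rw [mem_closedBall] at hy
    rw [dist_comm p x] at this
    linarith)
  set Z := closedBall p (dist x p) ∩ {y | HasFullRank G y}ᶜ with hZ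
  have hZc : IsCompact Z := by
    refine (isCompact_closedBall p (dist x p)).of_isClosed_subset ?_ inter_subset_left
    rw [← isOpen_compl_iff, isOpen_iff_mem_nhds]
    intro y hy
    by_cases hyb : y ∈ closedBall p (dist x p)
    · have hy' : HasFullRank G y := by
        by_contra hd
        exact hy ⟨hyb, hd⟩
      filter_upwards [hy'.eventually (h.conical.smooth y (openCone_subset (hsub hyb)))]
        with w hw hwZ using hwZ.2 hw
    · filter_upwards [isClosed_closedBall.isOpen_compl.mem_nhds hyb] with w hw hwZ using hw hwZ.1
  obtain ⟨z, hz, hmin⟩ := hZc.exists_isMinOn ⟨x, mem_closedBall.2 le_rfl, hxd⟩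
    (f := fun y => dist y p) (by fun_prop)
  have hzx : dist z p ≤ dist x p := hz.1
  have hR : 0 < dist z p := dist_pos.2 fun hzp => hz.2 (hzp ▸ hpr)
  have hsub' : closedBall p (dist z p) ⊆ openCone N c :=
    (closedBall_subset_closedBall hzx).trans hsub
  have hsubc := hsub'.trans openCone_subset
  have hzc : z ∈ openCone N c := hsub hz.1
  obtain ⟨e, he, hze, hAe⟩ := exists_null_of_not_hasFullRank (h.nonneg z (openCone_subset hzc)) hz.2
  have hhopf := h.toConvexSolution.hopf hk hk' hR (ball_subset_closedBall.trans hsub')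
    (fun y hy => h.conical.smooth y (hsubc hy)) (fun h0 => (hsubc h0).1 rfl)
    (fun y hy => h.nonneg y (hsubc hy)) (fun y hy => h.sig_pos (hsubc hy))
    (fun y hy v hv hyv => by
      refine HasFullRank.pos ?_ hv hyv
      by_contra hd
      have h1 : dist z p ≤ dist y p :=
        hmin (a := y) ⟨mem_closedBall.2 ((mem_ball.1 hy).le.trans hzx), hd⟩
      exact absurd (mem_ball.1 hy) (not_lt.2 h1))
    rfl he hze hAe
  have hd := (eventually_hasDerivAt_fderiv_line
    (h.conical.smooth z (openCone_subset hzc)).fderiv_infty.fderiv_infty (p - z)).1.self_of_nhds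
  have hd' := (hd.clm_apply (hasDerivAt_const 0 e)).clm_apply (hasDerivAt_const 0 e)
  have hloc : IsLocalMin (fun t : ℝ => fderiv ℝ (fderiv ℝ G) (z + t • (p - z)) e e) 0 := by
    have hcont : Continuous fun t : ℝ => z + t • (p - z) := by fun_prop
    have hev := hcont.continuousAt.eventually_mem (isOpen_openCone.mem_nhds
      (show z + (0 : ℝ) • (p - z) ∈ openCone N c by simpa using hzc))
    filter_upwards [hev] with t ht
    rw [zero_smul, add_zero, hAe]
    exact h.nonneg _ (openCone_subset ht) e
  have h0 := hloc.hasDerivAt_eq_zero hd'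
  simp only [zero_smul, add_zero, map_zero] at h0
  exact hhopf.ne' h0

/-- A solution of full rank in the interior of the cone has full rank up to the boundary. -/
lemma hasFullRank_boundary (h : IsConeSolution b k N c G Ψ) (hk : 1 ≤ k)
    (hk' : k ≤ Fintype.card ι) (hfr : ∀ y ∈ openCone N c, HasFullRank G y)
    (hz : ‖z‖ = 1) (hNz : ⟪N, z⟫ = c) : HasFullRank G z := by
  have hN := h.norm_axis
  have hc0 := h.nonneg_cos
  have hc1 := h.cos_lt_one
  have hzc : z ∈ closedCone N c := ⟨fun h0 => by simp [h0] at hz, by rw [hz, hNz, mul_one]⟩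
  by_contra hzd
  set A := fderiv ℝ (fderiv ℝ G) with hA
  set T := fderiv ℝ A z N with hT
  have hs : 0 < 1 - c ^ 2 := by nlinarith
  set s := √(1 - c ^ 2) with hs_def
  have hs0 : 0 < s := Real.sqrt_pos.2 hs
  have hs2 : s ^ 2 = 1 - c ^ 2 := Real.sq_sqrt hs.le
  have hNN : ⟪N, N⟫ = 1 := by rw [real_inner_self_eq_norm_sq, hN, one_pow]
  have hzz : ⟪z, z⟫ = 1 := by rw [real_inner_self_eq_norm_sq, hz, one_pow]
  have hzN : ⟪z, N⟫ = c := by rw [real_inner_comm, hNz]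
  have hAs : ∀ v w, A z v w = A z w v := h.conical.hessian_symm hzc
  have hAz : ∀ v, A z z v = 0 := h.conical.hessian_self hN hc0 hc1 hzc
  have hAz' : ∀ v, A z v z = 0 := fun v => by rw [hAs, hAz]
  have hsm := h.conical.smooth z hzc
  have hTs : ∀ v w, T v w = T w v := third_fderiv_symm hsm N
  have hball : ∀ x, dist x (z + (N - c • z)) ≤ s → x ∈ closedCone N c ∧
      (dist x (z + (N - c • z)) < s → x ∈ openCone N c) := by
    intro x hx
    have hy : x - (z + (N - c • z)) = (x - (1 - c) • z) - N := by module
    have hxy : x = (x - (1 - c) • z) + (1 - c) • z := by module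
    have hn : ‖x‖ ≤ ‖x - (1 - c) • z‖ + (1 - c) := by
      conv_lhs => rw [hxy]
      refine (norm_add_le _ _).trans ?_
      rw [norm_smul, hz, Real.norm_of_nonneg (by linarith), mul_one]
    have hi : ⟪N, x⟫ = ⟪N, x - (1 - c) • z⟫ + (1 - c) * c := by
      rw [inner_sub_right, inner_smul_right, hNz]; ring
    rw [dist_eq_norm, hy] at hx
    rw [dist_eq_norm, hy]
    refine ⟨⟨?_, ?_⟩, fun hx' => ?_⟩
    · rintro rfl
      have h1 : ‖(0 - (1 - c) • z) - N‖ ^ 2 ≤ s ^ 2 := by gcongr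
      rw [hs2, ← real_inner_self_eq_norm_sq] at h1
      simp only [inner_sub_left, inner_sub_right, inner_smul_left, inner_smul_right, hNN, hzz, hNz,
        hzN, inner_zero_left, inner_zero_right, RCLike.conj_to_real] at h1
      nlinarith
    · have := mul_norm_le_inner_of_dist_le (x := x - (1 - c) • z) hN (c := c)
        (by rw [← hs2]; gcongr)
      rw [hi]; nlinarith
    · have := mul_norm_lt_inner_of_dist_lt (x := x - (1 - c) • z) hN (c := c)
        (by rw [← hs2]; gcongr)
      change c * ‖x‖ < ⟪N, x⟫
      rw [hi]; nlinarith
  have hstar : ∀ e, ‖e‖ = 1 → ⟪z, e⟫ = 0 → A z e e = 0 → 0 < T e e := by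
    intro e he hze hAe
    have hdist : dist z (z + (N - c • z)) = s := by
      rw [dist_eq_norm, sub_add_cancel_left, norm_neg, ← sq_eq_sq₀ (norm_nonneg _) hs0.le, hs2,
        ← real_inner_self_eq_norm_sq]
      simp only [inner_sub_left, inner_sub_right, inner_smul_left, inner_smul_right, hNN, hzz, hNz,
        hzN, RCLike.conj_to_real]
      ring
    have hhopf := h.toConvexSolution.hopf hk hk' hs0 (fun y hy => (hball y (mem_ball.1 hy).le).2 hy)
      (fun y hy => h.conical.smooth y (hball y hy).1) (fun h0 => (hball 0 h0).1.1 rfl)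
      (fun y hy => h.nonneg y (hball y hy).1) (fun y hy => h.sig_pos (hball y hy).1)
      (fun y hy v hv hyv =>
        (hfr y ((hball y (mem_ball.1 hy).le).2 hy)).pos hv hyv) hdist he hze hAe
    rw [add_sub_cancel_left, map_sub, map_smul] at hhopf
    have h3 := h.conical.third_self hN hc0 hc1 hzc e e
    simp only [sub_apply, smul_apply, smul_eq_mul] at hhopf
    rw [← hA] at h3 hhopf
    rw [h3, hAe] at hhopf
    simpa using hhopf
  have htan : ∀ τ, ⟪N, τ⟫ = 0 → ⟪z, τ⟫ = 0 → A z τ N = 0 ∧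
      s ^ 2 * T τ τ = ‖τ‖ ^ 2 * -(c * A z N N) := by
    intro τ hτN hτz
    rcases eq_or_ne τ 0 with rfl | hτ
    · simp
    have hτ0 : 0 < ‖τ‖ := norm_pos_iff.2 hτ
    obtain ⟨h1, h2⟩ := h.conical.neumann_tangential hN h.neumann hz hNz (τ := (s / ‖τ‖) • τ)
      (by rw [inner_smul_right, hτN, mul_zero]) (by rw [inner_smul_right, hτz, mul_zero])
      (by rw [norm_smul, Real.norm_of_nonneg (by positivity), div_mul_cancel₀ _ hτ0.ne', hs2])
    rw [third_fderiv_symm hsm, third_fderiv_symm_left hsm, ← hA, ← hT] at h2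
    rw [← hA] at h1
    simp only [map_smul, map_sub, smul_apply, sub_apply, smul_eq_mul, hAz, zero_sub] at h1 h2
    refine ⟨(mul_eq_zero.1 h1).resolve_left (by positivity), ?_⟩
    rw [← h2]
    field_simp
  obtain ⟨e, he, hze, hAe⟩ := exists_null_of_not_hasFullRank (h.nonneg z hzc) hzd
  have haN := h.nonneg z hzc N
  rw [← hA] at haN hAe
  rcases haN.eq_or_lt with ha | ha
  · have hAN : ∀ v, A z N v = 0 := eq_zero_of_nonneg_form hAs (h.nonneg z hzc) ha.symm
    set u := s⁻¹ • (N - c • z) with hu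
    have hNv : ∀ v, ⟪u, v⟫ = 0 → ⟪N, v⟫ = c * ⟪z, v⟫ := fun v hv => by
      rw [hu, inner_smul_left, inner_sub_left, inner_smul_left] at hv
      simp only [RCLike.conj_to_real] at hv
      have := (mul_eq_zero.1 hv).resolve_left (inv_ne_zero hs0.ne')
      linarith
    have hu1 : ‖u‖ = 1 := by
      rw [hu, norm_smul, norm_inv, Real.norm_of_nonneg hs0.le, inv_mul_eq_one₀ hs0.ne',
        ← sq_eq_sq₀ hs0.le (norm_nonneg _), hs2, ← real_inner_self_eq_norm_sq]
      simp only [inner_sub_left, inner_sub_right, inner_smul_left, inner_smul_right, hNN, hzz, hNz,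
        hzN, RCLike.conj_to_real]
      ring
    have hzu : ⟪z, u⟫ = 0 := by
      rw [hu, inner_smul_right, inner_sub_right, inner_smul_right, hzz, hzN]; ring
    have hAu : A z u u = 0 := by
      simp [hu, hAN, hAz]
    have hTz : ∀ v, T z v = 0 := fun v => by
      rw [hT, third_fderiv_symm_left hsm, h.conical.third_self hN hc0 hc1 hzc, ← hA, hAN, neg_zero]
    have hTτ : ∀ v, ⟪N, v⟫ = 0 → ⟪z, v⟫ = 0 → T v v = 0 := fun v hNv hzv => by
      have := (htan v hNv hzv).2
      rw [← ha, mul_zero, neg_zero, mul_zero] at this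
      exact (mul_eq_zero.1 this).resolve_left (by positivity)
    have hTvv : ∀ v, ⟪u, v⟫ = 0 → T v v = 0 := fun v huv => by
      have h1 := hTτ (v - ⟪z, v⟫ • z)
        (by rw [inner_sub_right, inner_smul_right, hNz, hNv v huv]; ring)
        (by rw [inner_sub_right, inner_smul_right, hzz]; ring)
      simpa [hTz, hTs _ z] using h1
    have hTvw : ∀ v w, ⟪u, v⟫ = 0 → ⟪u, w⟫ = 0 → T v w = 0 := fun v w huv huw => by
      have h1 := hTvv (v + w) (by rw [inner_add_right, huv, huw, add_zero])
      simp only [map_add, add_apply, hTvv v huv, hTvv w huw, hTs w v] at h1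
      linarith
    have hpos := fderiv_sig_pos_of_null hk hk' hAs (h.nonneg z hzc) (h.sig_pos hzc) hu1 hAu hTvw
      (hstar u hu1 hzu hAu)
    have hd1 := (eventually_hasDerivAt_fderiv_line hsm.fderiv_infty.fderiv_infty N).1.self_of_nhds
    have hd2 := (eventually_hasDerivAt_fderiv_line (h.conical_rhs.smooth z hzc) N).1.self_of_nhds
    have hd := (((((contDiff_sig b (k := k)).differentiable (by simp)
      (A (z + (0 : ℝ) • N))).hasFDerivAt.comp_hasDerivAt 0 hd1)).mul (hd2.pow k)).neg
    have hle := nonneg_deriv_of_eventually_le hd (by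
      filter_upwards [eventually_add_smul_mem_openCone hN hc0 hc1 hzc] with t ht
      have h1 := h.eqn z hzc
      have h2 := h.eqn _ (openCone_subset ht)
      simp only [Pi.neg_apply, Pi.mul_apply, Function.comp_apply, Pi.pow_apply, zero_smul, add_zero]
      rw [h1, h2])
    simp only [zero_smul, add_zero, Function.comp_apply, Pi.pow_apply] at hle
    have hrob := h.robin z hzc (by rw [hz, hNz, mul_one])
    have hΨ := h.pos z hzc
    have h4 : 0 < fderiv ℝ (sig b k) (A z) T * Ψ z ^ k := mul_pos hpos (pow_pos hΨ k)
    have h5 : 0 ≤ sig b k (A z) * (k * Ψ z ^ (k - 1) * fderiv ℝ Ψ z N) :=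
      mul_nonneg (h.sig_pos hzc).le (by positivity)
    rw [← hA, ← hT] at hle
    linarith
  · set β := ⟪N, e⟫ / s ^ 2 with hβ
    have hτN : ⟪N, e - β • (N - c • z)⟫ = 0 := by
      simp only [inner_sub_right, inner_smul_right, hNN, hNz]
      rw [← pow_two, ← hs2, hβ, div_mul_cancel₀ _ (by positivity), sub_self]
    have hτz : ⟪z, e - β • (N - c • z)⟫ = 0 := by
      simp only [inner_sub_right, inner_smul_right, hzz, hzN, hze]
      ring
    have h1 := (htan _ hτN hτz).1
    have h2 := eq_zero_of_nonneg_form hAs (h.nonneg z hzc) hAe N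
    simp only [map_sub, map_smul, sub_apply, smul_apply, smul_eq_mul, hAz, h2] at h1
    have h3 : β = 0 := (mul_eq_zero.1 (by linarith : β * A z N N = 0)).resolve_right ha.ne'
    rw [h3, zero_smul, sub_zero] at hτN
    have h4 := (htan e hτN hze).2
    have h5 := hstar e he hze hAe
    rw [he] at h4
    nlinarith [mul_pos (pow_pos hs0 2) h5, mul_nonneg hc0 ha.le]

theorem hasFullRank_dichotomy (h : IsConeSolution b k N c G Ψ) (hk : 1 ≤ k)
    (hk' : k ≤ Fintype.card ι) :
    (∀ x ∈ closedCone N c, HasFullRank G x) ∨ ∀ x ∈ closedCone N c, ¬HasFullRank G x := by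
  have : FiniteDimensional ℝ E := b.toBasis.finiteDimensional_of_finite
  have hN := h.norm_axis
  have hc0 := h.nonneg_cos
  have hc1 := h.cos_lt_one
  by_cases hne : ∃ x ∈ openCone N c, HasFullRank G x
  · left
    obtain ⟨x₀, hx₀, hx₀'⟩ := hne
    have hopen : IsOpen {y ∈ openCone N c | HasFullRank G y} := isOpen_iff_mem_nhds.2 fun y hy =>
      (isOpen_openCone.eventually_mem hy.1).and
        (hy.2.eventually (h.conical.smooth y (openCone_subset hy.1)))
    have hfr := (convex_openCone (N := N) hc0).isPreconnected.subset_of_closure_inter_subset hopen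
      ⟨x₀, hx₀, hx₀, hx₀'⟩ fun y hy => ⟨hy.2, h.hasFullRank_of_mem_closure hk hk' hy.1 hy.2⟩
    intro x hx
    rcases hx.2.lt_or_eq with hlt | heq
    · exact (hfr hlt).2
    have hx0 : 0 < ‖x‖ := norm_pos_iff.2 hx.1
    have hz := h.hasFullRank_boundary hk hk' (fun y hy => (hfr hy).2) (z := ‖x‖⁻¹ • x)
      (by rw [norm_smul, norm_inv, norm_norm, inv_mul_cancel₀ hx0.ne'])
      (by rw [inner_smul_right, ← heq]; field_simp)
    intro v hv
    by_cases hxv : ⟪x, v⟫ = 0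
    · have h1 := hz.pos (v := v) (by rintro rfl; simp at hv)
        (by rw [inner_smul_left, hxv, mul_zero])
      rw [h.conical.hessian_smul hN hc0 hc1 hx (by positivity), inv_inv] at h1
      simp only [smul_apply, smul_eq_mul] at h1
      rw [hxv]
      have := pos_of_mul_pos_right h1 hx0.le
      positivity
    · have := h.nonneg x hx v
      positivity
  · right
    push Not at hne
    intro x hx hxr
    have h1 := (tendsto_add_smul x N).eventually (hxr.eventually (h.conical.smooth x hx))
    obtain ⟨t, ht, ht'⟩ := (h1.and (eventually_add_smul_mem_openCone hN hc0 hc1 hx)).exists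
    exact hne _ ht' ht

end IsConeSolution
end ConeDichotomy

section PositiveSolutions

open Filter Topology Metric
open scoped ContDiff

variable {E : Type*} [NormedAddCommGroup E] [InnerProductSpace ℝ E]
  {G : E → ℝ} {N u w : E} {c : ℝ}

lemma second_deriv_nonneg_of_eventually_nonneg {g g' : ℝ → ℝ} {g₂ : ℝ}
    (hg : ∀ᶠ t in 𝓝 0, HasDerivAt g (g' t) t) (hg' : HasDerivAt g' g₂ 0) (h0 : g 0 = 0)
    (h0' : g' 0 = 0) (hnn : ∀ᶠ t in 𝓝[>] 0, 0 ≤ g t) : 0 ≤ g₂ := by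
  by_contra! hneg
  have h1 := (hasDerivAt_iff_tendsto_slope.1 hg').mono_left
    (nhdsWithin_mono (0 : ℝ) (s := Ioi 0) (t := {0}ᶜ) fun x hx => ne_of_gt hx)
  have h2 : ∀ᶠ t in 𝓝[>] (0 : ℝ), g' t < 0 := by
    filter_upwards [h1.eventually_lt_const hneg, self_mem_nhdsWithin] with t ht ht0
    rw [slope_def_field, h0', sub_zero, sub_zero, div_neg_iff] at ht
    have ht0' : 0 < t := ht0
    rcases ht with ht | ht
    · linarith
    · exact ht.1
  obtain ⟨δ₁, hδ₁, h3⟩ := mem_nhdsGT_iff_exists_Ioo_subset.1 (h2.and hnn)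
  obtain ⟨δ₂, hδ₂, h4⟩ := Metric.eventually_nhds_iff.1 hg
  have hδ₁' : 0 < δ₁ := hδ₁
  set t := min δ₁ δ₂ / 2 with ht
  have ht0 : 0 < t := by positivity
  have ht1 : t < δ₁ := by have := min_le_left δ₁ δ₂; linarith
  have ht2 : t < δ₂ := by have := min_le_right δ₁ δ₂; linarith
  have h5 : ∀ y ∈ Icc 0 t, HasDerivAt g (g' y) y := fun y hy => h4 (by
    rw [Real.dist_eq, sub_zero, abs_of_nonneg hy.1]
    linarith [hy.2])
  obtain ⟨ξ, hξ, h6⟩ := exists_hasDerivAt_eq_slope g g' ht0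
    (fun y hy => (h5 y hy).continuousAt.continuousWithinAt)
    fun y hy => h5 y (Ioo_subset_Icc_self hy)
  rw [h0, sub_zero, sub_zero] at h6
  have h7 := (h3 ⟨hξ.1, hξ.2.trans ht1⟩).1
  have h8 := (h3 (a := t) ⟨ht0, ht1⟩).2
  rw [h6] at h7
  exact absurd (div_nonneg h8 ht0.le) (not_le.2 h7)

lemma eventually_add_smul_mem_closedCone (hc0 : 0 ≤ c) (hu : ‖u‖ = 1) (huc : u ∈ closedCone N c)
    (hw : c * ⟪u, w⟫ < ⟪N, w⟫) : ∀ᶠ t : ℝ in 𝓝[>] 0, u + t • w ∈ closedCone N c := by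
  have h1 : ∀ᶠ t : ℝ in 𝓝 0, c * ‖w‖ ^ 2 * t < ⟪N, w⟫ - c * ⟪u, w⟫ :=
    (by fun_prop : Continuous fun t : ℝ => c * ‖w‖ ^ 2 * t).continuousAt.eventually_lt_const
      (by linarith)
  have h2 : ∀ᶠ t : ℝ in 𝓝 0, u + t • w ≠ 0 :=
    (by fun_prop : Continuous fun t : ℝ => u + t • w).continuousAt.eventually_ne
      (by simpa using huc.1)
  filter_upwards [nhdsWithin_le_nhds h1, nhdsWithin_le_nhds h2, self_mem_nhdsWithin]
    with t ht ht' ht0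
  have ht0' : 0 < t := ht0
  refine ⟨ht', ?_⟩
  have h3 : ‖u + t • w‖ ^ 2 = 1 + 2 * (t * ⟪u, w⟫) + t ^ 2 * ‖w‖ ^ 2 := by
    rw [norm_add_sq_real, norm_smul, hu, inner_smul_right, Real.norm_eq_abs, mul_pow, sq_abs]
    ring
  have h4 : ‖u + t • w‖ ≤ 1 + t * ⟪u, w⟫ + t ^ 2 * ‖w‖ ^ 2 / 2 := by
    nlinarith [sq_nonneg (‖u + t • w‖ - 1)]
  have h5 := huc.2
  rw [hu, mul_one] at h5
  rw [inner_add_right, inner_smul_right]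
  nlinarith [mul_le_mul_of_nonneg_left h4 hc0, mul_lt_mul_of_pos_right ht ht0',
    mul_nonneg (mul_nonneg hc0 (sq_nonneg ‖w‖)) (sq_nonneg t)]

lemma hasDerivAt_norm_line (hu : ‖u‖ = 1) :
    (∀ᶠ t : ℝ in 𝓝 0, HasDerivAt (fun t => ‖u + t • w‖)
      ((⟪u, w⟫ + t * ‖w‖ ^ 2) / ‖u + t • w‖) t) ∧
    HasDerivAt (fun t : ℝ => (⟪u, w⟫ + t * ‖w‖ ^ 2) / ‖u + t • w‖)
      (‖w‖ ^ 2 - ⟪u, w⟫ ^ 2) 0 := by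
  have hne : ∀ᶠ t : ℝ in 𝓝 0, u + t • w ≠ 0 :=
    (by fun_prop : Continuous fun t : ℝ => u + t • w).continuousAt.eventually_ne
      (by rw [zero_smul, add_zero]; rintro rfl; simp at hu)
  have hd : ∀ᶠ t : ℝ in 𝓝 0, HasDerivAt (fun t => ‖u + t • w‖)
      ((⟪u, w⟫ + t * ‖w‖ ^ 2) / ‖u + t • w‖) t := by
    filter_upwards [hne] with t ht
    have h1 := ((hasDerivAt_line u w t).norm_sq).sqrt
      (pow_ne_zero 2 (norm_ne_zero_iff.2 ht))
    simp only [Real.sqrt_sq (norm_nonneg _)] at h1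
    convert h1 using 1
    rw [inner_add_left, inner_smul_left, real_inner_self_eq_norm_sq]
    simp only [RCLike.conj_to_real]
    rw [mul_div_mul_left _ _ two_ne_zero]
  refine ⟨hd, ?_⟩
  have h2 := (((hasDerivAt_id (0 : ℝ)).mul_const (‖w‖ ^ 2)).const_add ⟪u, w⟫).div
    hd.self_of_nhds (by simp [hu])
  refine h2.congr_deriv ?_
  simp [hu]
  ring

/-- A positive conical convex function with the homogeneous Neumann condition has a Hessian of
full rank somewhere. -/
lemma IsConical.exists_hasFullRank [FiniteDimensional ℝ E] (h : IsConical N c G) (hN : ‖N‖ = 1)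
    (hc0 : 0 ≤ c) (hc1 : c < 1) (hnn : ∀ x ∈ closedCone N c, ∀ v, 0 ≤ fderiv ℝ (fderiv ℝ G) x v v)
    (hneu : ∀ x ∈ closedCone N c, ⟪N, x⟫ = c * ‖x‖ → fderiv ℝ G x N = 0)
    (hpos : ∀ x ∈ closedCone N c, 0 < G x) : ∃ x ∈ closedCone N c, HasFullRank G x := by
  have : ProperSpace E := FiniteDimensional.proper_real E
  have hNN : ⟪N, N⟫ = 1 := by rw [real_inner_self_eq_norm_sq, hN, one_pow]
  have hL : ∀ x : E, x ≠ 0 → 0 < ‖x‖ - c * ⟪N, x⟫ := fun x hx => by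
    have h1 := real_inner_le_norm N x
    rw [hN, one_mul] at h1
    nlinarith [norm_pos_iff.2 hx]
  set K := sphere (0 : E) 1 ∩ {x | c * ‖x‖ ≤ ⟪N, x⟫} with hK
  have hKmem : ∀ x, x ∈ K ↔ ‖x‖ = 1 ∧ x ∈ closedCone N c := fun x => by
    refine ⟨fun hx => ⟨by simpa using hx.1, fun h0 => ?_, hx.2⟩,
      fun hx => ⟨by simpa using hx.1, hx.2.2⟩⟩
    simpa [h0] using hx.1
  have hKc : IsCompact K :=
    (isCompact_sphere 0 1).inter_right (isClosed_le (by fun_prop) (by fun_prop))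
  obtain ⟨u, huK, hmin⟩ := hKc.exists_isMinOn (f := fun x => G x / (‖x‖ - c * ⟪N, x⟫))
    ⟨N, (hKmem N).2 ⟨hN, fun h0 => by simp [h0] at hN, by rw [hNN, hN, mul_one]; exact hc1.le⟩⟩
    (fun x hx => by
      have hx' := (hKmem x).1 hx
      exact (((h.smooth x hx'.2).continuousAt).div (by fun_prop)
        (hL x hx'.2.1).ne').continuousWithinAt)
  obtain ⟨hu, huc⟩ := (hKmem u).1 huK
  refine ⟨u, huc, ?_⟩
  set m := G u / (‖u‖ - c * ⟪N, u⟫) with hm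
  have hm0 : 0 < m := div_pos (hpos u huc) (hL u huc.1)
  have hGu : G u - m * (‖u‖ - c * ⟪N, u⟫) = 0 := by
    rw [hm, div_mul_cancel₀ _ (hL u huc.1).ne', sub_self]
  have hH : ∀ x ∈ closedCone N c, 0 ≤ G x - m * (‖x‖ - c * ⟪N, x⟫) := fun x hx => by
    have hx0 : 0 < ‖x‖ := norm_pos_iff.2 hx.1
    have hxc : ‖x‖⁻¹ • x ∈ closedCone N c := smul_mem_closedCone hx (by positivity)
    have h1 : m ≤ _ := hmin (a := ‖x‖⁻¹ • x) ((hKmem _).2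
      ⟨by rw [norm_smul, norm_inv, norm_norm, inv_mul_cancel₀ hx0.ne'], hxc⟩)
    beta_reduce at h1
    rw [h.hom x hx _ (by positivity), norm_smul, norm_inv, norm_norm, inner_smul_right,
      show ‖x‖⁻¹ * ‖x‖ - c * (‖x‖⁻¹ * ⟪N, x⟫) = ‖x‖⁻¹ * (‖x‖ - c * ⟪N, x⟫) by ring,
      mul_div_mul_left _ _ (by positivity), le_div_iff₀ (hL x hx.1)] at h1
    linarith
  have hline : ∀ w, (∀ᶠ t : ℝ in 𝓝 0, HasDerivAt
      (fun t => G (u + t • w) - m * (‖u + t • w‖ - c * ⟪N, u + t • w⟫))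
      (fderiv ℝ G (u + t • w) w -
        m * ((⟪u, w⟫ + t * ‖w‖ ^ 2) / ‖u + t • w‖ - c * ⟪N, w⟫)) t) ∧
      HasDerivAt (fun t : ℝ => fderiv ℝ G (u + t • w) w -
        m * ((⟪u, w⟫ + t * ‖w‖ ^ 2) / ‖u + t • w‖ - c * ⟪N, w⟫))
        (fderiv ℝ (fderiv ℝ G) u w w - m * (‖w‖ ^ 2 - ⟪u, w⟫ ^ 2)) 0 := fun w => by
    obtain ⟨h1, h2⟩ := eventually_hasDerivAt_fderiv_line (h.smooth u huc) w
    obtain ⟨h3, h4⟩ := hasDerivAt_norm_line (w := w) hu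
    constructor
    · filter_upwards [h1, h3] with t h1 h3
      have h5 := (hasDerivAt_const t N).inner ℝ (hasDerivAt_line u w t)
      have h6 := h1.sub ((h3.sub (h5.const_mul c)).const_mul m)
      refine h6.congr_deriv ?_
      simp
    · exact h2.sub ((h4.sub_const _).const_mul m)
  have hinward : ∀ w, (∀ᶠ t : ℝ in 𝓝[>] 0, u + t • w ∈ closedCone N c) →
      0 ≤ fderiv ℝ G u w - m * (⟪u, w⟫ - c * ⟪N, w⟫) := fun w hw => by
    have h1 := nonneg_deriv_of_eventually_le (hline w).1.self_of_nhds (by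
      filter_upwards [hw] with t ht
      rw [zero_smul, add_zero, hGu]
      exact hH _ ht)
    simpa [hu] using h1
  have hcuN : c * ⟪u, N⟫ < ⟪N, N⟫ := by
    have := real_inner_le_norm u N
    rw [hu, hN, mul_one] at this
    rw [hNN]
    nlinarith
  have hℓN : fderiv ℝ G u N - m * (⟪u, N⟫ - c * ⟪N, N⟫) = 0 := by
    rcases huc.2.eq_or_lt with heq | hlt
    · rw [hneu u huc heq.symm, real_inner_comm, ← heq, hu, hNN]; ring
    · refine le_antisymm ?_ (hinward N (eventually_add_smul_mem_closedCone hc0 hu huc hcuN))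
      have h1 := hinward (-N) (by
        have hev := (tendsto_add_smul u (-N)).eventually (isOpen_openCone.eventually_mem hlt)
        exact hev.mono fun t ht => openCone_subset ht)
      rw [map_neg, inner_neg_right, inner_neg_right] at h1
      linarith
  have hℓnn : ∀ v, 0 ≤ fderiv ℝ G u v - m * (⟪u, v⟫ - c * ⟪N, v⟫) := fun v => by
    have hδ : 0 < ⟪N, N⟫ - c * ⟪u, N⟫ := sub_pos.2 hcuN
    set β := (|⟪N, v⟫ - c * ⟪u, v⟫| + 1) / (⟪N, N⟫ - c * ⟪u, N⟫) with hβ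
    have hβ' : β * (⟪N, N⟫ - c * ⟪u, N⟫) = |⟪N, v⟫ - c * ⟪u, v⟫| + 1 :=
      div_mul_cancel₀ _ hδ.ne'
    have h1 := hinward (v + β • N) (eventually_add_smul_mem_closedCone hc0 hu huc (by
      simp only [inner_add_right, inner_smul_right]
      have := neg_abs_le (⟪N, v⟫ - c * ⟪u, v⟫)
      linarith))
    simp only [inner_add_right, inner_smul_right, map_add, map_smul, smul_eq_mul] at h1
    linear_combination h1 + β * hℓN
  have hℓ : ∀ v, fderiv ℝ G u v - m * (⟪u, v⟫ - c * ⟪N, v⟫) = 0 := fun v => by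
    refine le_antisymm ?_ (hℓnn v)
    have h1 := hℓnn (-v)
    rw [map_neg, inner_neg_right, inner_neg_right] at h1
    linarith
  by_contra hd
  obtain ⟨e, he, hue, hAe, hNe⟩ : ∃ e, ‖e‖ = 1 ∧ ⟪u, e⟫ = 0 ∧
      fderiv ℝ (fderiv ℝ G) u e e = 0 ∧ 0 ≤ ⟪N, e⟫ := by
    obtain ⟨e, he, hue, hAe⟩ := exists_null_of_not_hasFullRank (hnn u huc) hd
    rcases le_total 0 ⟪N, e⟫ with hle | hle
    · exact ⟨e, he, hue, hAe, hle⟩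
    · exact ⟨-e, by rw [norm_neg, he], by rw [inner_neg_right, hue, neg_zero], by simpa using hAe,
        by rw [inner_neg_right]; linarith⟩
  have hAe' : ∀ v, fderiv ℝ (fderiv ℝ G) u e v = 0 :=
    eq_zero_of_nonneg_form (h.hessian_symm huc) (hnn u huc) hAe
  have hkey : ∀ ε : ℝ, 0 < ε → m ≤ ε ^ 2 * fderiv ℝ (fderiv ℝ G) u N N := fun ε hε => by
    have h1 := second_deriv_nonneg_of_eventually_nonneg (hline (e + ε • N)).1 (hline (e + ε • N)).2
      (by rw [zero_smul, add_zero, hGu])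
      (by simpa [hu] using hℓ (e + ε • N))
      (by
        filter_upwards [eventually_add_smul_mem_closedCone hc0 hu huc (w := e + ε • N) (by
          simp only [inner_add_right, inner_smul_right, hue]
          nlinarith)] with t ht using hH _ ht)
    have h2 : ‖e + ε • N‖ ^ 2 = 1 + 2 * (ε * ⟪N, e⟫) + ε ^ 2 := by
      rw [norm_add_sq_real, norm_smul, he, hN, inner_smul_right, real_inner_comm,
        Real.norm_eq_abs, mul_one, sq_abs]
      ring
    rw [h2] at h1
    simp only [inner_add_right, inner_smul_right, hue, map_add, map_smul, add_apply, smul_apply,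
      smul_eq_mul, hAe', h.hessian_symm huc N e] at h1
    have h3 : ⟪u, N⟫ ^ 2 ≤ 1 := by
      have := abs_real_inner_le_norm u N
      rw [hu, hN, mul_one] at this
      exact (sq_le_one_iff_abs_le_one _).2 this
    have h4 : 0 ≤ m * (2 * (ε * ⟪N, e⟫) + ε ^ 2 * (1 - ⟪u, N⟫ ^ 2)) := by
      have : 0 ≤ 1 - ⟪u, N⟫ ^ 2 := by linarith
      positivity
    linarith
  set a := fderiv ℝ (fderiv ℝ G) u N N with ha
  have ha0 : 0 ≤ a := hnn u huc N
  have h1 := hkey (√(m / (2 * (a + 1)))) (by positivity)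
  rw [Real.sq_sqrt (by positivity)] at h1
  have h2 : m / (2 * (a + 1)) * a < m := by
    rw [div_mul_eq_mul_div, div_lt_iff₀ (by positivity)]
    nlinarith
  linarith

end PositiveSolutions

section CapillaryInstance

open scoped ContDiff

variable {n k : ℕ} {θ : ℝ} {u x : V n} {g G φ Ψ s : V n → ℝ}

lemma inner_Etop (x : V n) : ⟪Etop n, x⟫ = x (Fin.last n) := by
  simp [Etop, EuclideanSpace.inner_single_left]

lemma norm_Etop : ‖Etop n‖ = 1 := by
  simp [Etop]

lemma mem_sphCap_iff : u ∈ sphCap n θ ↔ ‖u‖ = 1 ∧ u ∈ closedCone (Etop n) (Real.cos θ) := by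
  refine ⟨fun h => ⟨h.1, ?_, ?_⟩, fun h => ⟨h.1, ?_⟩⟩
  · exact norm_ne_zero_iff.1 (by rw [h.1]; exact one_ne_zero)
  · rw [h.1, mul_one, inner_Etop]; exact h.2
  · simpa [h.1, inner_Etop] using h.2.2

lemma exists_smul_of_mem_closedCone (hx : x ∈ closedCone (Etop n) (Real.cos θ)) :
    ∃ l : ℝ, 0 < l ∧ ∃ u ∈ sphCap n θ, x = l • u := by
  have hx0 : 0 < ‖x‖ := norm_pos_iff.2 hx.1
  refine ⟨‖x‖, hx0, ‖x‖⁻¹ • x, mem_sphCap_iff.2 ⟨?_, smul_mem_closedCone hx (by positivity)⟩, ?_⟩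
  · rw [norm_smul, norm_inv, norm_norm, inv_mul_cancel₀ hx0.ne']
  · rw [smul_inv_smul₀ hx0.ne']

lemma sub_mem_capCap (hu : u ∈ sphCap n θ) : u - Real.cos θ • Etop n ∈ capCap n θ := by
  refine ⟨?_, by rw [sub_add_cancel]; exact hu.1⟩
  simpa [Etop] using hu.2

lemma IsHomExt.apply (h : IsHomExt n θ ⊤ g G) (hu : u ∈ sphCap n θ) :
    G u = g (u - Real.cos θ • Etop n) := by
  rw [← h.2.2 _ (sub_mem_capCap hu), sub_add_cancel]

lemma IsHomExt.isConical (h : IsHomExt n θ ⊤ g G) : IsConical (Etop n) (Real.cos θ) G where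
  smooth x hx := by
    obtain ⟨U, hU, hsub, hG⟩ := h.1
    exact hG.contDiffAt (hU.mem_nhds (hsub (exists_smul_of_mem_closedCone hx)))
  hom x hx l hl := by
    obtain ⟨r, hr, u, hu, rfl⟩ := exists_smul_of_mem_closedCone hx
    rw [smul_smul, h.2.1 _ (mul_pos hl hr) u hu, h.2.1 r hr u hu, mul_assoc]

lemma IsConical.hessian_nonneg (h : IsConical (Etop n) (Real.cos θ) G) (hc0 : 0 ≤ Real.cos θ)
    (hc1 : Real.cos θ < 1) (hG : TauNonneg n θ G) :
    ∀ x ∈ closedCone (Etop n) (Real.cos θ), ∀ v, 0 ≤ fderiv ℝ (fderiv ℝ G) x v v := by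
  intro x hx v
  obtain ⟨r, hr, u, hu, rfl⟩ := exists_smul_of_mem_closedCone hx
  rw [h.hessian_smul norm_Etop hc0 hc1 (mem_sphCap_iff.1 hu).2 hr]
  exact mul_nonneg (inv_nonneg.2 hr.le) (hG u hu v)

lemma exists_smul_of_mem_boundary (hx : x ∈ closedCone (Etop n) (Real.cos θ))
    (hxb : ⟪Etop n, x⟫ = Real.cos θ * ‖x‖) :
    ∃ l : ℝ, 0 < l ∧ ∃ u ∈ sphCapBdry n θ, x = l • u := by
  obtain ⟨r, hr, u, hu, rfl⟩ := exists_smul_of_mem_closedCone hx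
  refine ⟨r, hr, u, ⟨hu.1, ?_⟩, rfl⟩
  rw [inner_smul_right, norm_smul, hu.1, Real.norm_of_nonneg hr.le, inner_Etop] at hxb
  exact mul_left_cancel₀ hr.ne' (by linarith)

lemma sphCapBdry_subset : sphCapBdry n θ ⊆ sphCap n θ := fun _ hu => ⟨hu.1, hu.2.ge⟩

lemma sigmaElem_eq_sig (hk : k ≤ n + 1) (G : V n → ℝ) (u : V n) :
    sigmaElem n k G u =
      sig (EuclideanSpace.basisFun (Fin (n + 1)) ℝ) k (fderiv ℝ (fderiv ℝ G) u) := by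
  have h1 : matOf (EuclideanSpace.basisFun (Fin (n + 1)) ℝ) (fderiv ℝ (fderiv ℝ G) u) =
      hessM n G u := by
    ext i j
    simp [matOf, hessM]
  rw [sig, minorSum_eq_charpoly_coeff (by simpa using hk), h1, sigmaElem, Fintype.card_fin]

lemma isConeSolution (hk : 1 ≤ k) (hkn : k < n) (hc0 : 0 ≤ Real.cos θ) (hc1 : Real.cos θ < 1)
    (hφpos : ∀ ζ ∈ capCap n θ, 0 < φ ζ)
    (hΨ : IsHomExt n θ ⊤ (fun ζ => φ ζ ^ (-(1 : ℝ) / k)) Ψ) (hτΨ : TauNonneg n θ Ψ)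
    (hRobin : ∀ u ∈ sphCapBdry n θ, 0 ≤ fderiv ℝ Ψ u (Etop n))
    (hs : IsHomExt n θ ⊤ s G) (hcap : IsCapillaryF n θ G) (hτ : TauNonneg n θ G)
    (heq : ∀ ζ ∈ capCap n θ, sigmaElem n k G (ζ + Real.cos θ • Etop n) = φ ζ) :
    IsConeSolution (EuclideanSpace.basisFun (Fin (n + 1)) ℝ) k (Etop n) (Real.cos θ) G Ψ where
  norm_axis := norm_Etop
  nonneg_cos := hc0
  cos_lt_one := hc1
  conical := hs.isConical
  conical_rhs := hΨ.isConical
  nonneg := hs.isConical.hessian_nonneg hc0 hc1 hτ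
  pos x hx := by
    obtain ⟨r, hr, u, hu, rfl⟩ := exists_smul_of_mem_closedCone hx
    rw [hΨ.2.1 r hr u hu, hΨ.apply hu]
    exact mul_pos hr (Real.rpow_pos_of_pos (hφpos _ (sub_mem_capCap hu)) _)
  convex_rhs := hΨ.isConical.hessian_nonneg hc0 hc1 hτΨ
  eqn x hx := by
    obtain ⟨r, hr, u, hu, rfl⟩ := exists_smul_of_mem_closedCone hx
    have hφ := hφpos _ (sub_mem_capCap hu)
    have h1 := heq _ (sub_mem_capCap hu)
    rw [sub_add_cancel, sigmaElem_eq_sig (by omega)] at h1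
    rw [hs.isConical.hessian_smul norm_Etop hc0 hc1 (mem_sphCap_iff.1 hu).2 hr, sig_smul, h1,
      hΨ.2.1 r hr u hu, hΨ.apply hu, mul_pow, ← Real.rpow_mul_natCast hφ.le,
      div_mul_cancel₀ _ (by positivity), Real.rpow_neg_one, inv_pow]
    field_simp
  neumann x hx hxb := by
    obtain ⟨r, hr, u, hu, rfl⟩ := exists_smul_of_mem_boundary hx hxb
    rw [hs.isConical.fderiv_smul norm_Etop hc0 hc1 (mem_sphCap_iff.1 (sphCapBdry_subset hu)).2 hr]
    exact hcap u hu
  robin x hx hxb := by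
    obtain ⟨r, hr, u, hu, rfl⟩ := exists_smul_of_mem_boundary hx hxb
    rw [hΨ.isConical.fderiv_smul norm_Etop hc0 hc1 (mem_sphCap_iff.1 (sphCapBdry_subset hu)).2 hr]
    exact hRobin u hu

lemma exists_unit_orthogonal (hn : 1 ≤ n) (u : V n) : ∃ v : V n, ⟪v, u⟫ = 0 ∧ ‖v‖ = 1 := by
  have h1 : Module.finrank ℝ (ℝ ∙ u) + Module.finrank ℝ (ℝ ∙ u)ᗮ = n + 1 := by
    rw [Submodule.finrank_add_finrank_orthogonal, finrank_euclideanSpace_fin]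
  have h2 := finrank_span_le_card (R := ℝ) ({u} : Set (V n))
  simp only [Set.toFinset_singleton, Finset.card_singleton] at h2
  have : Nontrivial (ℝ ∙ u)ᗮ := Module.nontrivial_of_finrank_pos (R := ℝ) (by omega)
  obtain ⟨w, hw⟩ := exists_ne (0 : (ℝ ∙ u)ᗮ)
  have hw0 : ‖(w : V n)‖ ≠ 0 := by simpa using hw
  refine ⟨‖(w : V n)‖⁻¹ • (w : V n), ?_,
    by rw [norm_smul, norm_inv, norm_norm, inv_mul_cancel₀ hw0]⟩
  rw [inner_smul_left, Submodule.mem_orthogonal_singleton_iff_inner_left.1 w.2, mul_zero]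

lemma sInf_hessQ_pos (hn : 1 ≤ n) (h : HasFullRank G u) :
    0 < sInf {r : ℝ | ∃ v : V n, ⟪v, u⟫ = 0 ∧ ‖v‖ = 1 ∧ hessQ n G u v v = r} := by
  have hset : {r : ℝ | ∃ v : V n, ⟪v, u⟫ = 0 ∧ ‖v‖ = 1 ∧ hessQ n G u v v = r} =
      (fun v => hessQ n G u v v) '' (Metric.sphere 0 1 ∩ {v | ⟪v, u⟫ = 0}) := by
    ext r
    simp only [mem_ofPred_eq, mem_image, mem_inter_iff, mem_sphere_zero_iff_norm]
    exact ⟨fun ⟨v, h1, h2, h3⟩ => ⟨v, ⟨h2, h1⟩, h3⟩, fun ⟨v, ⟨h2, h1⟩, h3⟩ => ⟨v, h1, h2, h3⟩⟩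
  have hcont : Continuous fun v => hessQ n G u v v :=
    (fderiv ℝ (fderiv ℝ G) u).continuous.clm_apply continuous_id
  have hcpt : IsCompact (Metric.sphere (0 : V n) 1 ∩ {v | ⟪v, u⟫ = 0}) :=
    (isCompact_sphere 0 1).inter_right (isClosed_eq (by fun_prop) continuous_const)
  obtain ⟨v, hv, hv1⟩ := exists_unit_orthogonal hn u
  have hmem := (hcpt.image hcont).sInf_mem (Set.Nonempty.image _ ⟨v, by simpa using hv1, hv⟩)
  rw [← hset] at hmem
  obtain ⟨w, hw, hw1, hr⟩ := hmem
  rw [← hr]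
  exact h.pos (norm_ne_zero_iff.1 (by rw [hw1]; exact one_ne_zero)) (by rw [real_inner_comm, hw])

lemma sInf_hessQ_eq_zero (hnn : ∀ v, 0 ≤ hessQ n G u v v) (h : ¬HasFullRank G u) :
    sInf {r : ℝ | ∃ v : V n, ⟪v, u⟫ = 0 ∧ ‖v‖ = 1 ∧ hessQ n G u v v = r} = 0 := by
  obtain ⟨v, hv1, hv, hv0⟩ := exists_null_of_not_hasFullRank hnn h
  refine IsLeast.csInf_eq ⟨⟨v, by rw [real_inner_comm, hv], hv1, hv0⟩, ?_⟩
  rintro r ⟨w, -, -, rfl⟩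
  exact hnn w

lemma capillary_dichotomy_and_positivity (hk : 1 ≤ k) (hkn : k < n) (hθ : θ ∈ Ioc 0 (π / 2))
    (hφpos : ∀ ζ ∈ capCap n θ, 0 < φ ζ)
    (hΨ : IsHomExt n θ ⊤ (fun ζ => φ ζ ^ (-(1 : ℝ) / k)) Ψ) (hτΨ : TauNonneg n θ Ψ)
    (hRobin : ∀ u ∈ sphCapBdry n θ, 0 ≤ fderiv ℝ Ψ u (Etop n))
    (hs : IsHomExt n θ ⊤ s G) (hcap : IsCapillaryF n θ G) (hτ : TauNonneg n θ G)
    (heq : ∀ ζ ∈ capCap n θ, sigmaElem n k G (ζ + Real.cos θ • Etop n) = φ ζ) :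
    ((∀ u ∈ sphCap n θ,
        0 < sInf {r : ℝ | ∃ v : V n, ⟪v, u⟫ = 0 ∧ ‖v‖ = 1 ∧ hessQ n G u v v = r}) ∨
     (∀ u ∈ sphCap n θ,
        sInf {r : ℝ | ∃ v : V n, ⟪v, u⟫ = 0 ∧ ‖v‖ = 1 ∧ hessQ n G u v v = r} = 0)) ∧
    ((∀ ζ ∈ capCap n θ, 0 < s ζ) → TauPos n θ G) := by
  have hc0 : 0 ≤ Real.cos θ :=
    Real.cos_nonneg_of_mem_Icc ⟨by linarith [hθ.1, Real.pi_pos], hθ.2⟩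
  have hc1 : Real.cos θ < 1 := by
    have := Real.cos_lt_cos_of_nonneg_of_le_pi_div_two le_rfl hθ.2 hθ.1
    rwa [Real.cos_zero] at this
  have hsol := isConeSolution hk hkn hc0 hc1 hφpos hΨ hτΨ hRobin hs hcap hτ heq
  have hdich := hsol.hasFullRank_dichotomy hk (by rw [Fintype.card_fin]; omega)
  refine ⟨hdich.imp (fun h u hu => sInf_hessQ_pos (by omega) (h u (mem_sphCap_iff.1 hu).2))
    fun h u hu => sInf_hessQ_eq_zero (hτ u hu) (h u (mem_sphCap_iff.1 hu).2), fun hspos => ?_⟩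
  obtain ⟨x, hx, hfull⟩ := hs.isConical.exists_hasFullRank norm_Etop hc0 hc1 hsol.nonneg
    hsol.neumann fun x hx => by
      obtain ⟨r, hr, u, hu, rfl⟩ := exists_smul_of_mem_closedCone hx
      rw [hs.2.1 r hr u hu, hs.apply hu]
      exact mul_pos hr (hspos _ (sub_mem_capCap hu))
  have hall := hdich.resolve_right fun h => h x hx hfull
  exact ⟨hτ, fun u hu v hv hvu =>
    (hall u (mem_sphCap_iff.1 hu).2).pos hv (by rw [real_inner_comm, hvu])⟩

end CapillaryInstance

end FullRank

/-- the full rank theorem. -/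
theorem capillary_full_rank (n k : ℕ) (hn : 2 ≤ n) (θ : ℝ) (hθ : θ ∈ Ioc 0 (π / 2))
    (hk : 1 ≤ k) (hkn : k < n)
    (φ Φ Ψ s G : V n → ℝ)
    (hφpos : ∀ ζ ∈ capCap n θ, 0 < φ ζ)
    (hΦ : IsHomExt n θ ⊤ φ Φ)
    (hΨ : IsHomExt n θ ⊤ (fun ζ => φ ζ ^ (-(1 : ℝ) / k)) Ψ)
    (hτΨ : TauNonneg n θ Ψ)
    (hRobin : ∀ u ∈ sphCapBdry n θ, 0 ≤ fderiv ℝ Ψ u (Etop n))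
    (hs : IsHomExt n θ ⊤ s G) (hcap : IsCapillaryF n θ G) (hτ : TauNonneg n θ G)
    (heq : ∀ ζ ∈ capCap n θ, sigmaElem n k G (ζ + Real.cos θ • Etop n) = φ ζ) :
    ((∀ u ∈ sphCap n θ,
        0 < sInf {r : ℝ | ∃ v : V n, ⟪v, u⟫ = 0 ∧ ‖v‖ = 1 ∧ hessQ n G u v v = r}) ∨
     (∀ u ∈ sphCap n θ,
        sInf {r : ℝ | ∃ v : V n, ⟪v, u⟫ = 0 ∧ ‖v‖ = 1 ∧ hessQ n G u v v = r} = 0)) ∧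
    ((∀ ζ ∈ capCap n θ, 0 < s ζ) → TauPos n θ G) := by
  exact capillary_dichotomy_and_positivity hk hkn hθ hφpos hΨ hτΨ hRobin hs hcap hτ heq
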